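/- Zariski-locality of hfp: let (A, I) be a Henselian pair and let B be an A-algebra such that (B, I·B) is a Henselian pair. Let f₁, …, fₙ ∈ B be finitely many elements whose images in B/IB generate the unit ideal. For each i, let B_i be a B-algebra equipped with a homomorphism from the localization B_{f_i} exhibiting B_i as a Henselization of the pair (B_{f_i}, I·B_{f_i}). If each B_i, viewed as an A-algebra, is hfp over A with respect to I, then B is hfp over A with respect to I. -/

import Mathlib

universe u

/-- A ring homomorphism `ρ : R →+* H` exhibits `H` as a Henselization of the pair `(R, K)`:
`(H, K·H)` is a Henselian pair, and every map from `(R, K)` to a Henselian pair factors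
uniquely through `ρ`. -/
def IsHenselization {R H : Type u} [CommRing R] [CommRing H]
    (K : Ideal R) (ρ : R →+* H) : Prop :=
  HenselianRing H (K.map ρ) ∧
    ∀ (C : Type u) [CommRing C] (J : Ideal C), HenselianRing C J →
      ∀ f : R →+* C, K.map f ≤ J → ∃! g : H →+* C, g.comp ρ = f

/-- `φ : A →+* B` is Henselian finitely presented (hfp) with respect to `I`:
`B` is a Henselization of `(R, I·R)` for some finitely presented `A`-algebra `R`. -/
def IsHfp {A B : Type u} [CommRing A] [CommRing B] (φ : A →+* B) (I : Ideal A) : Prop :=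
  ∃ (R : Type u) (_ : CommRing R) (ψ : A →+* R) (ρ : R →+* B),
    ψ.FinitePresentation ∧ ρ.comp ψ = φ ∧ IsHenselization (I.map ψ) ρ

/-- `φ : A →+* B` is h-formally étale with respect to `I`. -/
def IsHFormallyEtale {A B : Type u} [CommRing A] [CommRing B] (φ : A →+* B) (I : Ideal A) :
    Prop :=
  ∀ (E C : Type u) [CommRing E] [CommRing C] (e : A →+* E) (c : A →+* C)
    (p : E →+* C) (u : B →+* C),
    p.comp e = c → u.comp φ = c →
    (∃ N : ℕ, 1 ≤ N ∧ Ideal.map e (I ^ N) = ⊥ ∧ Ideal.map c (I ^ N) = ⊥) →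
    Function.Surjective p →
    (∃ M : ℕ, 1 ≤ M ∧ RingHom.ker p ^ M = ⊥) →
    ∃! v : B →+* E, v.comp φ = e ∧ p.comp v = u

/-- `φ : A →+* B` is h-formally smooth with respect to `I`. -/
def IsHFormallySmooth {A B : Type u} [CommRing A] [CommRing B] (φ : A →+* B) (I : Ideal A) :
    Prop :=
  ∀ (E C : Type u) [CommRing E] [CommRing C] (e : A →+* E) (c : A →+* C)
    (p : E →+* C) (u : B →+* C),
    p.comp e = c → u.comp φ = c →
    (∃ N : ℕ, 1 ≤ N ∧ Ideal.map e (I ^ N) = ⊥ ∧ Ideal.map c (I ^ N) = ⊥) →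
    Function.Surjective p →
    (∃ M : ℕ, 1 ≤ M ∧ RingHom.ker p ^ M = ⊥) →
    ∃ v : B →+* E, v.comp φ = e ∧ p.comp v = u

/-- `φ : A →+* B` is h-étale with respect to `I`: `B` is a Henselization of `(R, I·R)`
for some étale `A`-algebra `R`. -/
def IsHEtale {A B : Type u} [CommRing A] [CommRing B] (φ : A →+* B) (I : Ideal A) : Prop :=
  ∃ (R : Type u) (_ : CommRing R) (_ : Algebra A R) (ρ : R →+* B),
    Algebra.Etale A R ∧ ρ.comp (algebraMap A R) = φ ∧
      IsHenselization (I.map (algebraMap A R)) ρ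

/-- `φ : A →+* B` is h-smooth with respect to `I`: `B` is a Henselization of `(R, I·R)`
for some smooth `A`-algebra `R`. -/
def IsHSmooth {A B : Type u} [CommRing A] [CommRing B] (φ : A →+* B) (I : Ideal A) : Prop :=
  ∃ (R : Type u) (_ : CommRing R) (_ : Algebra A R) (ρ : R →+* B),
    Algebra.Smooth A R ∧ ρ.comp (algebraMap A R) = φ ∧
      IsHenselization (I.map (algebraMap A R)) ρ

/-- A ring homomorphism is flat if it makes the target into a flat module over the source. -/
def RingHomFlat {A C : Type u} [CommRing A] [CommRing C] (f : A →+* C) : Prop :=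
  letI := f.toAlgebra
  Module.Flat A C

/-- A ring homomorphism is smooth if it makes the target into a smooth algebra over the
source (smooth = formally smooth + finitely presented). -/
def RingHomSmooth {A C : Type u} [CommRing A] [CommRing C] (f : A →+* C) : Prop :=
  letI := f.toAlgebra
  Algebra.Smooth A C

/-- A ring homomorphism is étale if it makes the target into an étale algebra over the
source (étale = formally étale + finitely presented). -/
def RingHomEtale {A C : Type u} [CommRing A] [CommRing C] (f : A →+* C) : Prop :=
  letI := f.toAlgebra
  Algebra.Etale A C

section
open Polynomial

namespace HF

theorem hensel_aux {S : Type u} [CommRing S] (I : Ideal S) [hS : HenselianRing S I] (m : ℕ)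
    (c0 : S) (h0 : c0 ∈ I) (c : ℕ → S) :
    ∃ y ∈ I, c0 + y + ∑ k ∈ Finset.range (m+1), c k * y ^ (k+2) = 0 := by
  let r : S[X] := ∑ k ∈ Finset.range (m+1), C ((-1)^k * c0^(k+1) * c k) * X^(m-k)
  let q : S[X] := X^(m+2) + (- X^(m+1) + r)
  have hrd : r.degree < (m+2 : ℕ) := by
    refine lt_of_le_of_lt (degree_sum_le _ _) ?_
    rw [Finset.sup_lt_iff (WithBot.bot_lt_coe _)]
    intro k hk
    refine lt_of_le_of_lt (degree_C_mul_X_pow_le _ _) ?_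
    exact_mod_cast (by omega : m - k < m + 2)
  have hq : q.Monic := by
    apply monic_X_pow_add
    refine lt_of_le_of_lt (degree_add_le _ _) (max_lt ?_ hrd)
    rw [degree_neg]
    refine lt_of_le_of_lt (degree_X_pow_le _) ?_
    exact_mod_cast (by omega : m + 1 < m + 2)
  have hr1 : r.eval 1 ∈ I := by
    simp only [r, eval_finsetSum, eval_mul, eval_C, eval_pow, eval_X, one_pow, mul_one]
    refine Ideal.sum_mem _ fun k _ => ?_
    rw [pow_succ]
    exact Ideal.mul_mem_right _ _ (Ideal.mul_mem_left _ _ (Ideal.mul_mem_left _ _ h0))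
  have hr2 : r.derivative.eval 1 ∈ I := by
    simp only [r, derivative_sum, derivative_C_mul, eval_finsetSum, eval_mul, eval_C]
    refine Ideal.sum_mem _ fun k _ => ?_
    rw [pow_succ]
    exact Ideal.mul_mem_right _ _ (Ideal.mul_mem_right _ _ (Ideal.mul_mem_left _ _ (Ideal.mul_mem_left _ _ h0)))
  have h1 : q.eval 1 ∈ I := by
    simpa [q] using hr1
  have h2 : q.derivative.eval 1 - 1 ∈ I := by
    have : q.derivative.eval 1 - 1 = r.derivative.eval 1 := by
      simp [q]
      ring
    rwa [this]
  have h3 : Ideal.Quotient.mk I (q.derivative.eval 1) = 1 := by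
    rw [← map_one (Ideal.Quotient.mk I)]; exact Ideal.Quotient.eq.2 h2
  obtain ⟨w, hw, hwI⟩ := hS.is_henselian q hq 1 h1 (by rw [h3]; exact isUnit_one)
  have hwu : IsUnit w := by
    have := hS.jac hwI
    rw [Ideal.mem_jacobson_bot] at this
    have := this 1
    simpa using this
  obtain ⟨v, rfl⟩ := hwu
  refine ⟨-(c0 * ↑v⁻¹), I.neg_mem (Ideal.mul_mem_right _ _ h0), ?_⟩
  have hw' : (v:S)^(m+2) + (-(v:S)^(m+1) + ∑ k ∈ Finset.range (m+1), ((-1)^k * c0^(k+1) * c k) * (v:S)^(m-k)) = 0 := by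
    simpa [q, r, eval_finsetSum] using hw
  have key : c0 * ((v⁻¹ : Sˣ) : S)^(m+2) * ((v:S)^(m+2) + (-(v:S)^(m+1) + ∑ k ∈ Finset.range (m+1), ((-1)^k * c0^(k+1) * c k) * (v:S)^(m-k))) = 0 := by
    rw [hw', mul_zero]
  rw [mul_add, mul_add, Finset.mul_sum] at key
  have e0 : ((v⁻¹ : Sˣ) : S) * v = 1 := by simp
  generalize ((v⁻¹ : Sˣ) : S) = t at *
  generalize (v : S) = w at *
  have e1 : ∀ j, t ^ j * w ^ j = 1 := fun j => by rw [← mul_pow, e0, one_pow]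
  have k1 : c0 * t^(m+2) * w^(m+2) = c0 := by rw [mul_assoc, e1, mul_one]
  have k2 : c0 * t^(m+2) * -w^(m+1) = -(c0 * t) := by
    have := e1 (m+1)
    rw [pow_succ]
    linear_combination (-c0 * t) * this
  rw [k1, k2] at key
  rw [← key, add_assoc]
  congr 2
  refine Finset.sum_congr rfl fun k hk => ?_
  have hk' : k ≤ m := by simpa [Nat.lt_succ_iff] using hk
  obtain ⟨j, rfl⟩ := Nat.exists_eq_add_of_le hk'
  have := e1 j
  rw [Nat.add_sub_cancel_left, neg_pow, mul_pow]
  have e3 : (-1 : S)^(k+2) = (-1)^k := by rw [pow_add]; simp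
  rw [e3, show t ^ (k+j+2) = t^(k+2) * t^j by ring]
  linear_combination (-(c0 * t^(k+2) * (-1)^k * c0^(k+1) * c k)) * this

theorem isUnit_of_sub_mem {S : Type u} [CommRing S] (I : Ideal S) [hS : HenselianRing S I]
    {w : S} (h : IsUnit (Ideal.Quotient.mk I w)) : IsUnit w := by
  obtain ⟨v, hv⟩ := h.exists_right_inv
  obtain ⟨v, rfl⟩ := Ideal.Quotient.mk_surjective v
  rw [← map_mul, ← map_one (Ideal.Quotient.mk I)] at hv
  have := hS.jac (Ideal.Quotient.eq.1 hv)
  rw [Ideal.mem_jacobson_bot] at this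
  have := this 1
  simp at this
  exact this.1

/-- non monic Hensel at zero with normalised linear coefficient -/
theorem hensel_zero {S : Type u} [CommRing S] (I : Ideal S) [hS : HenselianRing S I]
    (p : S[X]) (h0 : p.coeff 0 ∈ I) (h1 : p.coeff 1 - 1 ∈ I) : ∃ y ∈ I, p.eval y = 0 := by
  have hu : IsUnit (p.coeff 1) := by
    apply isUnit_of_sub_mem I
    have : Ideal.Quotient.mk I (p.coeff 1) = 1 := by
      rw [← map_one (Ideal.Quotient.mk I)]; exact Ideal.Quotient.eq.2 h1
    rw [this]; exact isUnit_one
  obtain ⟨u, hu⟩ := hu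
  obtain ⟨y, hy, h⟩ := hensel_aux I p.natDegree (↑u⁻¹ * p.coeff 0) (I.mul_mem_left _ h0)
    (fun k => ↑u⁻¹ * p.coeff (k+2))
  refine ⟨y, hy, ?_⟩
  rw [eval_eq_sum_range' (n := p.natDegree+1+2) (by omega), Finset.sum_range_succ',
    Finset.sum_range_succ', ← hu]
  have e0 : (u : S) * ((u⁻¹ : Sˣ) : S) = 1 := by simp
  have h' : (u : S) * (↑u⁻¹ * p.coeff 0 + y + ∑ k ∈ Finset.range (p.natDegree+1), ↑u⁻¹ * p.coeff (k+2) * y ^ (k+2)) = 0 := by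
    rw [h, mul_zero]
  rw [mul_add, mul_add, Finset.mul_sum] at h'
  simp only [← mul_assoc, e0, one_mul] at h'
  rw [← h']
  simp
  ring

theorem henselian_quotient {S : Type u} [CommRing S] (I : Ideal S) [hS : HenselianRing S I]
    (𝔞 : Ideal S) : HenselianRing (S ⧸ 𝔞) (I.map (Ideal.Quotient.mk 𝔞)) := by
  constructor
  · intro x hx
    obtain ⟨i, hi, rfl⟩ := (Ideal.mem_map_iff_of_surjective _ Ideal.Quotient.mk_surjective).1 hx
    rw [Ideal.mem_jacobson_bot]
    intro y
    obtain ⟨y, rfl⟩ := Ideal.Quotient.mk_surjective y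
    have := hS.jac hi
    rw [Ideal.mem_jacobson_bot] at this
    have := (this y).map (Ideal.Quotient.mk 𝔞)
    simpa using this
  · intro f _ a₀ h0 h1
    obtain ⟨F, rfl⟩ := Polynomial.map_surjective _ (Ideal.Quotient.mk_surjective (I := 𝔞)) f
    obtain ⟨a, rfl⟩ := Ideal.Quotient.mk_surjective a₀
    rw [eval_map_apply] at h0
    rw [derivative_map, eval_map_apply] at h1
    obtain ⟨i, hi, hi'⟩ := (Ideal.mem_map_iff_of_surjective _ Ideal.Quotient.mk_surjective).1 h0
    obtain ⟨u, hu⟩ := h1.exists_right_inv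
    obtain ⟨u, rfl⟩ := Ideal.Quotient.mk_surjective u
    obtain ⟨u, rfl⟩ := Ideal.Quotient.mk_surjective u
    rw [← map_mul, ← map_mul, ← map_one (Ideal.Quotient.mk _), Ideal.Quotient.eq,
      ← map_one (Ideal.Quotient.mk 𝔞), ← map_sub] at hu
    obtain ⟨i', hii', hi2⟩ := (Ideal.mem_map_iff_of_surjective _ Ideal.Quotient.mk_surjective).1 hu
    rw [Ideal.Quotient.eq] at hi' hi2
    let G : S[X] := F.comp (C a + C u * X) - C (F.eval a - i) - C (eval a (derivative F) * u - 1 - i') * X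
    obtain ⟨y, hy, hy2⟩ := hensel_zero I G (by
        simp [G, coeff_zero_eq_eval_zero, hi]) (by
        have : ∀ p : S[X], p.coeff 1 = (derivative p).eval 0 := fun p => by
          rw [← coeff_zero_eq_eval_zero, coeff_derivative]; simp
        rw [this]
        simp [G, derivative_comp]
        ring_nf
        exact hii')
    refine ⟨Ideal.Quotient.mk 𝔞 (a + u * y), ?_, ?_⟩
    · rw [IsRoot.def, eval_map_apply]
      simp only [G, eval_sub, eval_comp, eval_add, eval_mul, eval_C, eval_X] at hy2
      rw [Ideal.Quotient.eq_zero_iff_mem]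
      have : eval (a + u * y) F = -(i - F.eval a) - (i' - (eval a (derivative F) * u - 1)) * y := by
        linear_combination hy2
      rw [this]
      exact 𝔞.sub_mem (𝔞.neg_mem hi') (𝔞.mul_mem_right _ hi2)
    · rw [← map_sub]
      apply Ideal.mem_map_of_mem
      simpa using I.mul_mem_left u hy

theorem henselian_bot {S : Type u} [CommRing S] : HenselianRing S (⊥ : Ideal S) where
  jac := bot_le
  is_henselian f _ a₀ h _ := ⟨a₀, by simpa using h, by simp⟩

end HF
end

section
set_option linter.style.haveILetI false
open Polynomial TensorProduct

namespace HF

section basics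
variable {R H Q : Type u} [CommRing R] [CommRing H] [CommRing Q]

/-- local (henselian) epimorphism with `g` inverted -/
def LE (K : Ideal R) (g : R) (ρ : R →+* H) : Prop :=
  IsUnit (ρ g) ∧ ∀ (C : Type u) [CommRing C] (J : Ideal C), HenselianRing C J →
    ∀ f : R →+* C, K.map f ≤ J → IsUnit (f g) → ∃! h : H →+* C, h.comp ρ = f

theorem LE.comp {K : Ideal R} {g : R} {q : R →+* Q} {ρ : Q →+* H} (h : LE K g q)
    (h' : LE (K.map q) 1 ρ) : LE K g (ρ.comp q) := by
  refine ⟨h.1.map ρ, fun C _ J hJ f hf hg => ?_⟩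
  obtain ⟨a, ha, ha'⟩ := h.2 C J hJ f hf hg
  obtain ⟨b, hb, hb'⟩ := h'.2 C J hJ a (by rw [Ideal.map_map, ha]; exact hf) (by simp)
  refine ⟨b, by dsimp only; rw [← RingHom.comp_assoc, hb, ha], fun y hy => hb' _ (ha' _ ?_)⟩
  dsimp only
  rw [RingHom.comp_assoc]; exact hy

theorem LE.of_comp {K : Ideal R} {g : R} {q : R →+* Q} {ρ : Q →+* H} (h : LE K g q)
    (h' : LE K g (ρ.comp q)) : LE (K.map q) 1 ρ := by
  refine ⟨by simp, fun C _ J hJ f hf _ => ?_⟩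
  rw [Ideal.map_map] at hf
  have hg : IsUnit ((f.comp q) g) := h.1.map f
  obtain ⟨b, hb, hb'⟩ := h'.2 C J hJ (f.comp q) hf hg
  refine ⟨b, (h.2 C J hJ (f.comp q) hf hg).unique ?_ rfl, fun y hy => hb' _ ?_⟩
  · rw [RingHom.comp_assoc]; exact hb
  · simp only at hy
    rw [← hy, RingHom.comp_assoc]

theorem LE.of_unit {K : Ideal R} {g g' : R} {q : R →+* Q} (h : LE K g q) (hu : IsUnit (q g'))
    (hg : ∀ (C : Type u) [CommRing C] (J : Ideal C), HenselianRing C J →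
    ∀ f : R →+* C, K.map f ≤ J → IsUnit (f g') → IsUnit (f g)) : LE K g' q :=
  ⟨hu, fun C _ J hJ f hf hg' => h.2 C J hJ f hf (hg C J hJ f hf hg')⟩

theorem LE.hom_ext {K : Ideal R} {g : R} {q : R →+* Q} (h : LE K g q) {C : Type u} [CommRing C]
    {J : Ideal C} (hJ : HenselianRing C J) {a b : Q →+* C} (hab : a.comp q = b.comp q)
    (hK : K.map (a.comp q) ≤ J) : a = b :=
  (h.2 C J hJ (a.comp q) hK (h.1.map a)).unique rfl hab.symm

theorem LE.away (K : Ideal R) (g : R) : LE K g (algebraMap R (Localization.Away g)) := by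
  refine ⟨IsLocalization.Away.algebraMap_isUnit g, fun C _ J hJ f hf hg => ?_⟩
  refine ⟨IsLocalization.Away.lift g hg, IsLocalization.Away.lift_comp g hg, fun y hy => ?_⟩
  apply IsLocalization.ringHom_ext (Submonoid.powers g)
  rw [hy, IsLocalization.Away.lift_comp g hg]

theorem isUnit_test {K : Ideal R} {τ : R} (hτ : τ - 1 ∈ K) {C : Type u} [CommRing C] {J : Ideal C}
    (hJ : HenselianRing C J) (f : R →+* C) (hf : K.map f ≤ J) : IsUnit (f τ) := by
  apply isUnit_of_sub_mem J
  have : Ideal.Quotient.mk J (f τ) = 1 := by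
    rw [← map_one (Ideal.Quotient.mk J), Ideal.Quotient.eq, ← map_one f, ← map_sub]
    exact hf (Ideal.mem_map_of_mem _ hτ)
  rw [this]; exact isUnit_one

/-- etale neighbourhoods -/
structure Nb (K : Ideal R) (g : R) (q : R →+* Q) : Prop where
  et : q.Etale
  le : LE K g q

theorem Nb.comp {K : Ideal R} {g : R} {q : R →+* Q} {ρ : Q →+* H} (h : Nb K g q)
    (h' : Nb (K.map q) 1 ρ) : Nb K g (ρ.comp q) :=
  ⟨RingHom.Etale.stableUnderComposition _ _ h.et h'.et, h.le.comp h'.le⟩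

theorem Nb.away (K : Ideal R) (g : R) : Nb K g (algebraMap R (Localization.Away g)) :=
  ⟨RingHom.etale_algebraMap.2 (Algebra.Etale.of_isLocalizationAway g), LE.away K g⟩

/-- Localising at an element which is a unit in all tests. -/
theorem Nb.away_unit (K : Ideal R) (τ : R) (h : ∀ (C : Type u) [CommRing C] (J : Ideal C),
    HenselianRing C J → ∀ f : R →+* C, K.map f ≤ J → IsUnit (f τ)) :
    Nb K 1 (algebraMap R (Localization.Away τ)) :=
  ⟨(Nb.away K τ).et, (LE.away K τ).of_unit (by simp) fun C _ J hJ f hf _ => h C J hJ f hf⟩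

theorem Nb.tensor {K : Ideal R} {g : R} {Q' : Type u} [CommRing Q'] {q : R →+* Q} {q' : R →+* Q'}
    (h : Nb K g q) (h' : Nb K g q') : ∃ (T : Type u) (_ : CommRing T) (a : Q →+* T) (b : Q' →+* T),
    a.comp q = b.comp q' ∧ Nb K g (a.comp q) := by
  letI := q.toAlgebra
  letI := q'.toAlgebra
  have e1 : Algebra.Etale R Q := h.et
  have e2 : Algebra.Etale R Q' := h'.et
  have hc : (algebraMap Q (Q ⊗[R] Q')).comp q
      = (Algebra.TensorProduct.includeRight (R := R) (A := Q) (B := Q')).toRingHom.comp q' := by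
    ext r
    have := (Algebra.TensorProduct.includeRight (R := R) (A := Q) (B := Q')).commutes r
    exact this.symm
  refine ⟨Q ⊗[R] Q', inferInstance, algebraMap Q _,
    (Algebra.TensorProduct.includeRight (R := R) (A := Q) (B := Q')).toRingHom, hc,
    RingHom.Etale.stableUnderComposition _ _ h.et (RingHom.etale_algebraMap.2 inferInstance),
    h.le.1.map (algebraMap Q (Q ⊗[R] Q')), fun C _ J hJ f hf hg => ?_⟩
  obtain ⟨a, ha, -⟩ := h.le.2 C J hJ f hf hg
  obtain ⟨b, hb, -⟩ := h'.le.2 C J hJ f hf hg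
  letI := f.toAlgebra
  let a' : Q →ₐ[R] C := { a with commutes' := fun r => congr($ha r) }
  let b' : Q' →ₐ[R] C := { b with commutes' := fun r => congr($hb r) }
  let l := Algebra.TensorProduct.lift a' b' (fun _ _ => Commute.all _ _)
  refine ⟨l.toRingHom, ?_, fun y hy => ?_⟩
  · ext r
    change l (q r ⊗ₜ 1) = f r
    simp only [l, Algebra.TensorProduct.lift_tmul, map_one, mul_one]
    exact congr($ha r)
  · simp only at hy
    have hy' : y.comp ((Algebra.TensorProduct.includeRight (R := R) (A := Q) (B := Q')).toRingHom.comp q') = f := by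
      rw [← hc]; exact hy
    have y1 : y.comp (algebraMap Q (Q ⊗[R] Q')) = a := by
      apply h.le.hom_ext hJ
      · rw [RingHom.comp_assoc, hy, ha]
      · rw [RingHom.comp_assoc, hy]; exact hf
    have y2 : y.comp (Algebra.TensorProduct.includeRight (R := R) (A := Q) (B := Q')).toRingHom = b := by
      apply h'.le.hom_ext hJ
      · rw [RingHom.comp_assoc, hy', hb]
      · rw [RingHom.comp_assoc, hy']; exact hf
    apply RingHom.ext
    intro t
    induction t using TensorProduct.induction_on with
    | zero => simp
    | add x y hx hy => simp only [map_add, hx, hy]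
    | tmul x x' =>
      have e : x ⊗ₜ[R] x' = (algebraMap Q (Q ⊗[R] Q') x) *
        (Algebra.TensorProduct.includeRight (R := R) (A := Q) (B := Q')).toRingHom x' := by
        simp [Algebra.TensorProduct.algebraMap_apply]
      have z1 := congr($y1 x)
      have z2 := congr($y2 x')
      simp only [RingHom.comp_apply] at z1 z2
      conv_lhs => rw [e, map_mul, z1, z2]
      change _ = l _
      simp only [l, Algebra.TensorProduct.lift_tmul]
      rfl

/-- uniqueness obstruction -/
theorem exists_tau {q : R →+* Q} (h : q.Etale) {L : Type u} [CommRing L] (a b : Q →+* L)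
    (hab : a.comp q = b.comp q) : ∃ τ : L, (∀ s, (a s - b s) * τ = 0) ∧
    ∀ (T : Type u) [CommRing T] (t : L →+* T), t.comp a = t.comp b → t τ = 1 := by
  letI := q.toAlgebra
  have e1 : Algebra.Etale R Q := h
  obtain ⟨t, ht, ht'⟩ := (Algebra.FormallyUnramified.iff_exists_tensorProduct (R := R) (S := Q)).1
    inferInstance
  letI := (a.comp q).toAlgebra
  let a' : Q →ₐ[R] L := { a with commutes' := fun r => rfl }
  let b' : Q →ₐ[R] L := { b with commutes' := fun r => congr($hab.symm r) }
  let l := Algebra.TensorProduct.lift b' a' (fun _ _ => Commute.all _ _)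
  refine ⟨l t, fun s => ?_, fun T _ v hv => ?_⟩
  · have := congr(l $(ht s))
    rw [map_mul, map_sub, map_zero] at this
    simp only [l, Algebra.TensorProduct.lift_tmul, map_one, mul_one, one_mul] at this
    exact this
  · have key : ∀ w, v (l w) = (v.comp a) (Algebra.TensorProduct.lmul' R w) := by
      intro w
      induction w using TensorProduct.induction_on with
      | zero => simp
      | add x y hx hy => simp only [map_add, hx, hy]
      | tmul x x' =>
        simp only [l, Algebra.TensorProduct.lift_tmul, map_mul, Algebra.TensorProduct.lmul'_apply_tmul]
        change (v.comp b) x * _ = _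
        rw [← hv]; rfl
    rw [key, ht', map_one]

theorem Nb.coeq {K : Ideal R} {g : R} {Q' : Type u} [CommRing Q'] {q : R →+* Q} {q' : R →+* Q'}
    (h : Nb K g q) (h' : Nb K g q') (a b : Q →+* Q') (ha : a.comp q = q') (hb : b.comp q = q') :
    ∃ (T : Type u) (_ : CommRing T) (c : Q' →+* T), c.comp a = c.comp b ∧ Nb K g (c.comp q') := by
  obtain ⟨τ, h1, h2⟩ := exists_tau h.et a b (by rw [ha, hb])
  refine ⟨Localization.Away τ, inferInstance, algebraMap _ _, ?_, h'.comp (Nb.away_unit _ _ ?_)⟩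
  · ext s
    have := congr(algebraMap Q' (Localization.Away τ) $(h1 s))
    rw [map_mul, map_zero] at this
    have := (IsLocalization.Away.algebraMap_isUnit (S := Localization.Away τ) τ).mul_left_eq_zero.1 this
    rw [map_sub, sub_eq_zero] at this
    exact this
  · intro C _ J hJ f hf
    rw [h2]
    · exact isUnit_one
    · apply h.le.hom_ext hJ
      · rw [RingHom.comp_assoc, RingHom.comp_assoc, ha, hb]
      · rw [RingHom.comp_assoc, ha, ← Ideal.map_map]; exact hf

theorem Nb.root (K : Ideal R) (f : R[X]) (hm : f.Monic) (a₀ : R) (h0 : f.eval a₀ ∈ K)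
    (h1 : IsUnit (Ideal.Quotient.mk K (f.derivative.eval a₀))) :
    ∃ (Q : Type u) (_ : CommRing Q) (q : R →+* Q), Nb K 1 q ∧ ∃ x : Q, (f.map q).IsRoot x ∧
      x - q a₀ ∈ K.map q := by
  obtain ⟨p, hp⟩ := Polynomial.X_sub_C_dvd_sub_C_eval (a := a₀) (p := f)
  let P : StandardEtalePair R := ⟨f, hm, derivative f * p, p, 0, 1, by simp⟩
  have hev : ∀ {T : Type u} [CommRing T] [Algebra R T] (x : T), aeval x f = 
      algebraMap R T (f.eval a₀) + (x - algebraMap R T a₀) * aeval x p := by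
    intro T _ _ x
    have := congr(aeval x $hp)
    simp only [map_sub, map_mul, aeval_X, aeval_C] at this
    rw [← this]; ring
  have hd : derivative f = p + (X - C a₀) * derivative p := by
    have := congr(derivative $hp)
    simpa [derivative_mul] using this
  refine ⟨P.Ring, inferInstance, algebraMap R P.Ring, ⟨RingHom.etale_algebraMap.2 inferInstance,
    by simp, fun C _ J hJ φ hφ _ => ?_⟩, P.X, ?_, ?_⟩
  · letI := φ.toAlgebra
    have hJ0 : φ (f.eval a₀) ∈ J := hφ (Ideal.mem_map_of_mem _ h0)
    have hJ1 : IsUnit (Ideal.Quotient.mk J (φ (f.derivative.eval a₀))) := by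
      have := h1.map (Ideal.quotientMap J φ (Ideal.map_le_iff_le_comap.1 hφ))
      simpa using this
    obtain ⟨x, hx, hx2⟩ := hJ.is_henselian (f.map φ) (hm.map φ) (φ a₀)
      (by rwa [eval_map_apply]) (by rwa [derivative_map, eval_map_apply])
    have hred : ∀ (y : C), y - φ a₀ ∈ J → ∀ r : R[X], Ideal.Quotient.mk J (aeval y r) = Ideal.Quotient.mk J (φ (r.eval a₀)) := by
      intro y hy r
      rw [Ideal.Quotient.eq]
      have : aeval y r - φ (r.eval a₀) = eval y (r.map φ) - eval (φ a₀) (r.map φ) := by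
        rw [eval_map_apply, aeval_def, eval_map]; rfl
      rw [this]
      exact Ideal.mem_of_dvd _ (sub_dvd_eval_sub _ _ _) hy
    have hx' : aeval x f = 0 := by
      rw [IsRoot.def, eval_map] at hx; exact hx
    have hun : ∀ y : C, y - φ a₀ ∈ J → IsUnit (aeval y (derivative f)) := fun y hy => 
      isUnit_of_sub_mem J (by rw [hred y hy]; exact hJ1)
    have hpa : p.eval a₀ = (derivative f).eval a₀ := by rw [hd]; simp
    have hmap : P.HasMap x := by
      refine ⟨hx', ?_⟩
      change IsUnit (aeval x (derivative f * p))
      rw [map_mul]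
      refine (hun x hx2).mul (isUnit_of_sub_mem J ?_)
      rw [hred x hx2, hpa]; exact hJ1
    refine ⟨(P.lift x hmap).toRingHom, (P.lift x hmap).comp_algebraMap, fun y hy => ?_⟩
    let y' : P.Ring →ₐ[R] C := { y with commutes' := fun r => congr($hy r) }
    suffices y' = P.lift x hmap by
      ext w; exact congr($this w)
    apply P.hom_ext
    rw [P.lift_X]
    have hy1 := P.hasMap_X.map y'
    generalize y' P.X = z at hy1
    have hz0 : aeval z f = 0 := hy1.1
    have hz1 : IsUnit (aeval z p) := by
      have : IsUnit (aeval z (derivative f * p)) := hy1.2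
      rw [map_mul] at this
      exact (IsUnit.mul_iff.1 this).2
    have hzJ : z - φ a₀ ∈ J := by
      have := hev z
      rw [hz0] at this
      have h3 : (z - φ a₀) * aeval z p ∈ J := by
        have : (z - φ a₀) * aeval z p = - φ (f.eval a₀) := by
          change 0 = φ (f.eval a₀) + (z - φ a₀) * aeval z p at this
          linear_combination -this
        rw [this]; exact J.neg_mem hJ0
      exact (Ideal.mul_unit_mem_iff_mem _ hz1).1 h3
    obtain ⟨c, hc⟩ := Polynomial.binomExpansion (f.map φ) z (x - z)
    have hzf : eval z (f.map φ) = 0 := by rw [eval_map]; exact hz0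
    rw [add_sub_cancel, hx.eq_zero, hzf] at hc
    have hder : eval z (derivative (f.map φ)) = aeval z (derivative f) := by
      rw [derivative_map, eval_map]; rfl
    rw [hder] at hc
    have hu : IsUnit (aeval z (derivative f) + c * (x - z)) := by
      apply isUnit_of_sub_mem J
      have : Ideal.Quotient.mk J (x - z) = 0 := by
        rw [Ideal.Quotient.eq_zero_iff_mem]
        have := J.sub_mem hx2 hzJ
        simpa using this
      rw [map_add, map_mul, this, mul_zero, add_zero, hred z hzJ]; exact hJ1
    have : (x - z) * (aeval z (derivative f) + c * (x - z)) = 0 := by linear_combination -hc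
    have := hu.mul_left_eq_zero.1 this
    rw [sub_eq_zero] at this; exact this.symm
  · rw [IsRoot.def, eval_map]; exact P.hasMap_X.1
  · have h3 := hev P.X
    have h4 : aeval P.X f = 0 := P.hasMap_X.1
    rw [h4] at h3
    have h5 : IsUnit (aeval P.X p) := by
      have : IsUnit (aeval P.X (derivative f * p)) := P.hasMap_X.2
      rw [map_mul] at this
      exact (IsUnit.mul_iff.1 this).2
    rw [← Ideal.mul_unit_mem_iff_mem _ h5]
    have : (P.X - algebraMap R P.Ring a₀) * aeval P.X p = -algebraMap R P.Ring (f.eval a₀) := by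
      linear_combination -h3
    rw [this]
    exact neg_mem (Ideal.mem_map_of_mem _ h0)

end basics
end HF
end

section
set_option linter.style.haveILetI false
open Polynomial TensorProduct

namespace HF

section colim
variable {R : Type u} [CommRing R]

/-- small models of neighbourhoods -/
structure Obj (K : Ideal R) (g : R) : Type u where
  n : ℕ
  J : Ideal (MvPolynomial (Fin n) R)
  nb : Nb K g (algebraMap R (MvPolynomial (Fin n) R ⧸ J))

variable {K : Ideal R} {g : R}

/-- the ring of the object -/
abbrev Obj.Q (X : Obj K g) : Type u := MvPolynomial (Fin X.n) R ⧸ X.J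

theorem LE.equiv {Q Q' : Type u} [CommRing Q] [CommRing Q'] {q : R →+* Q} (h : LE K g q)
    (e : Q ≃+* Q') : LE K g (e.toRingHom.comp q) := by
  refine ⟨h.1.map e.toRingHom, fun C _ J hJ f hf hg => ?_⟩
  obtain ⟨a, ha, ha'⟩ := h.2 C J hJ f hf hg
  refine ⟨a.comp e.symm.toRingHom, ?_, fun y hy => ?_⟩
  · rw [← ha]; ext; simp
  · rw [← ha' (y.comp e.toRingHom) hy]; ext; simp

theorem Nb.equiv {Q Q' : Type u} [CommRing Q] [CommRing Q'] {q : R →+* Q} (h : Nb K g q)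
    (e : Q ≃+* Q') : Nb K g (e.toRingHom.comp q) :=
  ⟨RingHom.Etale.stableUnderComposition _ _ h.et (.of_bijective e.bijective), h.le.equiv e⟩

theorem Nb.exists_obj {Q : Type u} [CommRing Q] {q : R →+* Q} (h : Nb K g q) :
    ∃ (X : Obj K g) (e : Q ≃+* X.Q), e.toRingHom.comp q = algebraMap R X.Q := by
  letI := q.toAlgebra
  have e1 : Algebra.Etale R Q := h.et
  obtain ⟨n, J, e, hJ⟩ := (Algebra.FinitePresentation.iff (R := R) (A := Q)).1 inferInstance
  have := h.equiv e.symm.toRingEquiv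
  have hc : e.symm.toRingEquiv.toRingHom.comp q = algebraMap R _ := by
    ext r; exact e.symm.commutes r
  rw [hc] at this
  exact ⟨⟨n, J, this⟩, e.symm.toRingEquiv, hc⟩

open CategoryTheory Limits

noncomputable instance : SmallCategory (Obj K g) where
  Hom X Y := X.Q →ₐ[R] Y.Q
  id X := AlgHom.id R _
  comp a b := AlgHom.comp b a

instance : IsFiltered (Obj K g) where
  cocone_objs X Y := by
    obtain ⟨T, _, a, b, hab, hT⟩ := X.nb.tensor Y.nb
    obtain ⟨Z, e, he⟩ := hT.exists_obj
    refine ⟨Z, { e.toRingHom.comp a with commutes' := fun r => ?_ },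
      { e.toRingHom.comp b with commutes' := fun r => ?_ }, trivial⟩
    · exact congr($he r)
    · rw [hab] at he; exact congr($he r)
  cocone_maps X Y f g := by
    let f' : X.Q →ₐ[R] Y.Q := f
    let g' : X.Q →ₐ[R] Y.Q := g
    obtain ⟨T, _, c, hc, hT⟩ := X.nb.coeq Y.nb f'.toRingHom g'.toRingHom f'.comp_algebraMap g'.comp_algebraMap
    obtain ⟨Z, e, he⟩ := hT.exists_obj
    refine ⟨Z, { e.toRingHom.comp c with commutes' := fun r => congr($he r) }, ?_⟩
    apply AlgHom.ext
    intro x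
    exact congr(e ($hc x))
  nonempty := ⟨((Nb.away K g).exists_obj).choose⟩

variable (K g) in
/-- the diagram -/
noncomputable def diag : Obj K g ⥤ CommRingCat.{u} where
  obj X := CommRingCat.of X.Q
  map {X Y} f := CommRingCat.ofHom (f : X.Q →ₐ[R] Y.Q).toRingHom

theorem exists_colim (K : Ideal R) (g : R) : ∃ (H : Type u) (_ : CommRing H)
    (ι : ∀ X : Obj K g, X.Q →+* H),
    (∀ X Y (φ : X.Q →ₐ[R] Y.Q) x, ι Y (φ x) = ι X x) ∧
    (∀ h, ∃ X x, ι X x = h) ∧ 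
    (∀ X Y x y, ι X x = ι Y y → ∃ (Z : Obj K g) (φ : X.Q →ₐ[R] Z.Q) (ψ : Y.Q →ₐ[R] Z.Q), φ x = ψ y) ∧
    (∀ (C : Type u) [CommRing C] (j : ∀ X : Obj K g, X.Q →+* C), 
      (∀ X Y (φ : X.Q →ₐ[R] Y.Q) x, j Y (φ x) = j X x) → ∃ h : H →+* C, ∀ X x, h (ι X x) = j X x) := by
  refine ⟨(colimit (diag K g) : CommRingCat.{u}), inferInstance, fun X => (colimit.ι (diag K g) X).hom,
    fun X Y φ x => ?_, fun h => ?_, fun X Y x y h => ?_, fun C _ j hj => ?_⟩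
  · exact congr(($(colimit.w (diag K g) (j := Y) (j' := X) φ)).hom x)
  · exact Concrete.colimit_exists_rep (diag K g) h
  · exact Concrete.colimit_exists_of_rep_eq (diag K g) _ _ h
  · let D : Cocone (diag K g) := { pt := CommRingCat.of C, ι := { app := fun X => CommRingCat.ofHom (j X), naturality := fun X Y φ => CommRingCat.hom_ext (RingHom.ext fun x => hj X Y φ x) } }
    refine ⟨(colimit.desc (diag K g) D).hom, fun X x => ?_⟩
    exact congr(($(colimit.ι_desc D X)).hom x)


/-- henselization away from an element -/
def HensAway {H : Type u} [CommRing H] (K : Ideal R) (g : R) (ρ : R →+* H) : Prop :=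
  HenselianRing H (K.map ρ) ∧ LE K g ρ

theorem exists_push (X : Obj K g) {Q : Type u} [CommRing Q] {q : X.Q →+* Q}
    (h : Nb (K.map (algebraMap R X.Q)) 1 q) : ∃ (Y : Obj K g) (φ : X.Q →ₐ[R] Y.Q) (e : Q →+* Y.Q),
    e.comp q = φ.toRingHom := by
  obtain ⟨Y, e, he⟩ := (X.nb.comp h).exists_obj
  exact ⟨Y, { e.toRingHom.comp q with commutes' := fun r => congr($he r) }, e.toRingHom, rfl⟩

theorem exists_hens (K : Ideal R) (g : R) : ∃ (H : Type u) (_ : CommRing H) (ρ : R →+* H),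
    HensAway K g ρ ∧ (∀ h : H, ∃ (Q : Type u) (_ : CommRing Q) (q : R →+* Q) (φ : Q →+* H),
      Nb K g q ∧ φ.comp q = ρ ∧ ∃ x, φ x = h) ∧
    (∀ (Q : Type u) [CommRing Q] (q : R →+* Q) (φ : Q →+* H), Nb K g q → φ.comp q = ρ →
      ∀ x, φ x = 0 → ∃ (Q' : Type u) (_ : CommRing Q') (c : Q →+* Q'),
      Nb K g (c.comp q) ∧ c x = 0) := by
  obtain ⟨H, _, ι, hcomp, hex, heq, hlift⟩ := exists_colim K g
  have hdir : ∀ X Y : Obj K g, ∃ (Z : Obj K g) (_ : X.Q →ₐ[R] Z.Q) (_ : Y.Q →ₐ[R] Z.Q), True :=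
    fun X Y => IsFilteredOrEmpty.cocone_objs X Y
  obtain ⟨X0⟩ : Nonempty (Obj K g) := IsFiltered.nonempty
  let ρ : R →+* H := (ι X0).comp (algebraMap R X0.Q)
  have hρ : ∀ X, (ι X).comp (algebraMap R X.Q) = ρ := by
    intro X
    obtain ⟨Z, a, b, -⟩ := hdir X X0
    ext r
    change ι X (algebraMap R X.Q r) = ι X0 (algebraMap R X0.Q r)
    rw [← hcomp X Z a, ← hcomp X0 Z b, a.commutes, b.commutes]
  have hLE : LE K g ρ := by
    refine ⟨X0.nb.le.1.map (ι X0), fun C _ J hJ f hf hg => ?_⟩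
    have hu : ∀ X : Obj K g, ∃! j : X.Q →+* C, j.comp (algebraMap R X.Q) = f :=
      fun X => X.nb.le.2 C J hJ f hf hg
    choose j hj hj' using hu
    obtain ⟨h, hh⟩ := hlift C j (fun X Y φ x => by
      have := hj' X ((j Y).comp φ.toRingHom) (by
        dsimp only
        rw [RingHom.comp_assoc, φ.toRingHom_eq_coe, φ.comp_algebraMap]; exact hj Y)
      exact congr($this x))
    refine ⟨h, ?_, fun y hy => ?_⟩
    · ext r
      change h (ι X0 _) = _
      rw [hh]; exact congr($(hj X0) r)
    · ext w
      obtain ⟨X, x, rfl⟩ := hex w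
      rw [hh, ← hj' X (y.comp (ι X)) (by dsimp only; rw [RingHom.comp_assoc, hρ]; exact hy)]; rfl
  have hmem : ∀ k ∈ K.map ρ, ∃ X, ∃ x ∈ K.map (algebraMap R X.Q), ι X x = k := by
    intro k hk
    induction hk using Submodule.span_induction with
    | mem x h =>
      obtain ⟨r, hr, rfl⟩ := h
      exact ⟨X0, algebraMap R _ r, Ideal.mem_map_of_mem _ hr, rfl⟩
    | zero => exact ⟨X0, 0, by simp, by simp⟩
    | add x y _ _ hx hy =>
      obtain ⟨X, x, hx, rfl⟩ := hx
      obtain ⟨Y, y, hy, rfl⟩ := hy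
      obtain ⟨Z, a, b, -⟩ := hdir X Y
      refine ⟨Z, a x + b y, add_mem ?_ ?_, by rw [map_add, hcomp, hcomp]⟩
      · have := Ideal.mem_map_of_mem a.toRingHom hx
        rwa [Ideal.map_map, a.toRingHom_eq_coe, a.comp_algebraMap] at this
      · have := Ideal.mem_map_of_mem b.toRingHom hy
        rwa [Ideal.map_map, b.toRingHom_eq_coe, b.comp_algebraMap] at this
    | smul w x _ hx =>
      obtain ⟨X, x, hx, rfl⟩ := hx
      obtain ⟨Y, y, rfl⟩ := hex w
      obtain ⟨Z, a, b, -⟩ := hdir X Y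
      refine ⟨Z, b y * a x, Ideal.mul_mem_left _ _ ?_, by rw [map_mul, hcomp, hcomp]; rfl⟩
      have := Ideal.mem_map_of_mem a.toRingHom hx
      rwa [Ideal.map_map, a.toRingHom_eq_coe, a.comp_algebraMap] at this
  have hmem2 : ∀ X x, ι X x ∈ K.map ρ → ∃ (Y : Obj K g) (φ : X.Q →ₐ[R] Y.Q), φ x ∈ K.map (algebraMap R Y.Q) := by
    intro X x hx
    obtain ⟨Y, y, hy, hxy⟩ := hmem _ hx
    obtain ⟨Z, φ, ψ, h⟩ := heq X Y x y hxy.symm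
    refine ⟨Z, φ, ?_⟩
    rw [h]
    have := Ideal.mem_map_of_mem ψ.toRingHom hy
    rwa [Ideal.map_map, ψ.toRingHom_eq_coe, ψ.comp_algebraMap] at this
  have hpol : ∀ f : H[X], ∃ (X : Obj K g), f ∈ Polynomial.lifts (ι X) := by
    intro f
    induction f using Polynomial.induction_on' with
    | add p q hp hq =>
      obtain ⟨X, hp⟩ := hp
      obtain ⟨Y, hq⟩ := hq
      obtain ⟨Z, a, b, -⟩ := hdir X Y
      refine ⟨Z, add_mem ?_ ?_⟩
      · rw [Polynomial.lifts_iff_coeff_lifts] at hp ⊢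
        intro n
        obtain ⟨x, hx⟩ := hp n
        exact ⟨a x, by rw [hcomp]; exact hx⟩
      · rw [Polynomial.lifts_iff_coeff_lifts] at hq ⊢
        intro n
        obtain ⟨x, hx⟩ := hq n
        exact ⟨b x, by rw [hcomp]; exact hx⟩
    | monomial n a =>
      obtain ⟨X, x, rfl⟩ := hex a
      exact ⟨X, monomial n x, by simp⟩
  have hH : HenselianRing H (K.map ρ) := by
    constructor
    · intro x hx
      rw [Ideal.mem_jacobson_bot]
      intro y
      obtain ⟨X, z, hz, e⟩ := hmem _ (Ideal.mul_mem_right y _ hx)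
      rw [← e, ← map_one (ι X), ← map_add]
      obtain ⟨Y, φ, c, hc⟩ := exists_push X (Nb.away_unit _ (z+1) fun C _ J hJ f hf => 
        isUnit_test (by simpa using hz) hJ f hf)
      rw [← hcomp X Y φ]
      have : φ (z + 1) = c (algebraMap _ (Localization.Away (z+1)) (z+1)) := congr($hc.symm (z+1))
      rw [this]
      exact ((IsLocalization.Away.algebraMap_isUnit (z+1)).map c).map _
    · intro f hf a₀ h0 h1
      obtain ⟨X, hfX⟩ := hpol f
      obtain ⟨Y, a, rfl⟩ := hex a₀
      obtain ⟨v, hv⟩ := h1.exists_right_inv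
      obtain ⟨v, rfl⟩ := Ideal.Quotient.mk_surjective v
      obtain ⟨Y', v, rfl⟩ := hex v
      rw [← map_mul, ← map_one (Ideal.Quotient.mk _), Ideal.Quotient.eq] at hv
      obtain ⟨F, rfl, -, hF⟩ := lifts_and_natDegree_eq_and_monic hfX hf
      obtain ⟨Z, α, β, -⟩ := hdir X Y
      obtain ⟨Z', γ, δ, -⟩ := hdir Z Y'
      have hcr : ∀ X Y (φ : X.Q →ₐ[R] Y.Q), (ι Y).comp φ.toRingHom = ι X := fun X Y φ =>
        RingHom.ext fun x => hcomp X Y φ x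
      have eF : F.map (ι X) = (F.map (γ.comp α).toRingHom).map (ι Z') := by
        rw [Polynomial.map_map, hcr]
      have ea : ι Y a = ι Z' ((γ.comp β) a) := (hcomp _ _ _ _).symm
      have ev : ι Y' v = ι Z' (δ v) := (hcomp _ _ _ _).symm
      have hF' := hF.map (γ.comp α).toRingHom
      rw [eF, ea, eval_map_apply] at h0
      rw [eF, ea, ev, derivative_map, eval_map_apply, ← map_mul, ← map_one (ι Z'), ← map_sub] at hv
      rw [eF, ea]
      generalize F.map (γ.comp α).toRingHom = F at *
      generalize (γ.comp β) a = a at *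
      generalize δ v = v at *
      obtain ⟨W, φ, hφ⟩ := hmem2 _ _ h0
      have hv' := hv
      rw [← hcomp _ W φ] at hv'
      obtain ⟨W', ψ, hψ⟩ := hmem2 _ _ hv'
      let χ := ψ.comp φ
      have hχ : χ (eval a F) ∈ K.map (algebraMap R W'.Q) := by
        have := Ideal.mem_map_of_mem ψ.toRingHom hφ
        rwa [Ideal.map_map, ψ.toRingHom_eq_coe, ψ.comp_algebraMap] at this
      have hχ' : χ (eval a (derivative F) * v - 1) ∈ K.map (algebraMap R W'.Q) := hψ
      obtain ⟨Q, _, q, hq, x, hx, hxa⟩ := Nb.root (K.map (algebraMap R W'.Q)) (F.map χ.toRingHom)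
        (hF'.map _) (χ a) (by
          have : eval (χ a) (F.map χ.toRingHom) = χ (eval a F) := eval_map_apply χ.toRingHom a
          rwa [this]) (by
          have : eval (χ a) (derivative (F.map χ.toRingHom)) = χ (eval a (derivative F)) := by
            rw [derivative_map]; exact eval_map_apply χ.toRingHom a
          rw [this]
          rw [map_sub, map_mul, map_one, ← Ideal.Quotient.eq, map_mul, map_one] at hχ'
          exact IsUnit.of_mul_eq_one _ hχ')
      obtain ⟨V, ω, c, hc⟩ := exists_push W' hq
      have hcq : ∀ s, c (q s) = ω s := fun s => congr($hc s)
      refine ⟨ι V (c x), ?_, ?_⟩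
      · have : F.map (ι Z') = (((F.map χ.toRingHom).map q).map c).map (ι V) := by
          rw [Polynomial.map_map, Polynomial.map_map, Polynomial.map_map]
          congr 1
          refine RingHom.ext fun s => ?_
          simp only [RingHom.comp_apply, hcq, hcomp]
          exact (hcomp _ _ _ _).symm
        rw [this]
        exact hx.map.map
      · have : ι Z' a = ι V (c (q (χ a))) := by rw [hcq, hcomp, hcomp]
        rw [this, ← map_sub, ← map_sub, ← hρ V]
        have := Ideal.mem_map_of_mem ((ι V).comp c) hxa
        rw [Ideal.map_map, Ideal.map_map] at this
        have e : (((ι V).comp c).comp q).comp (algebraMap R W'.Q) = (ι V).comp (algebraMap R V.Q) := by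
          ext r
          simp only [RingHom.comp_apply, hcq, ω.commutes]
        rwa [e] at this
  refine ⟨H, inferInstance, ρ, ⟨hH, hLE⟩, fun h => ?_, fun Q _ q φ hq hφ x hx => ?_⟩
  · obtain ⟨X, x, hx⟩ := hex h
    exact ⟨X.Q, inferInstance, _, ι X, X.nb, hρ X, x, hx⟩
  · obtain ⟨X, e, he⟩ := hq.exists_obj
    have hφ' : φ = (ι X).comp e.toRingHom := by
      apply hq.le.hom_ext hH
      · rw [hφ, RingHom.comp_assoc, he, hρ]
      · rw [hφ]
    have hx' : ι X (e x) = ι X 0 := by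
      rw [map_zero, ← hx, hφ']; rfl
    obtain ⟨Z, a, b, hab⟩ := heq _ _ _ _ hx'
    rw [map_zero] at hab
    refine ⟨Z.Q, inferInstance, a.toRingHom.comp e.toRingHom, ?_, hab⟩
    rw [RingHom.comp_assoc, he, a.toRingHom_eq_coe, a.comp_algebraMap]
    exact Z.nb

end colim
end HF
end

section
set_option linter.style.haveILetI false
open Polynomial TensorProduct

namespace HF

section hens
variable {R H : Type u} [CommRing R] [CommRing H] {K : Ideal R} {g : R} {ρ : R →+* H}

theorem isHenselization_iff : IsHenselization K ρ ↔ HensAway K 1 ρ := by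
  constructor
  · rintro ⟨h1, h2⟩
    exact ⟨h1, by simp, fun C _ J hJ f hf _ => h2 C J hJ f hf⟩
  · rintro ⟨h1, h2⟩
    exact ⟨h1, fun C _ J hJ f hf => h2.2 C J hJ f hf (by simp)⟩

theorem HensAway.hom_self (h : HensAway K g ρ) {f : H →+* H} (hf : f.comp ρ = ρ) :
    f = RingHom.id H :=
  h.2.hom_ext h.1 (by rw [hf]; rfl) (by rw [hf])

theorem HensAway.exists_equiv {H' : Type u} [CommRing H'] {ρ' : R →+* H'} (h : HensAway K g ρ)
    (h' : HensAway K g ρ') : ∃ e : H ≃+* H', e.toRingHom.comp ρ = ρ' := by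
  obtain ⟨a, ha, -⟩ := h.2.2 H' _ h'.1 ρ' le_rfl h'.2.1
  obtain ⟨b, hb, -⟩ := h'.2.2 H _ h.1 ρ le_rfl h.2.1
  refine ⟨RingEquiv.ofRingHom a b ?_ ?_, ?_⟩
  · apply h'.hom_self; rw [RingHom.comp_assoc, hb, ha]
  · apply h.hom_self; rw [RingHom.comp_assoc, ha, hb]
  · ext r; exact congr($ha r)

theorem HensAway.lift (h : HensAway K g ρ) {Q : Type u} [CommRing Q] {q : R →+* Q} (hq : LE K g q) :
    ∃ φ : Q →+* H, φ.comp q = ρ := by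
  obtain ⟨φ, hφ, -⟩ := hq.2 H _ h.1 ρ le_rfl h.2.1
  exact ⟨φ, hφ⟩

theorem HensAway.ext (h : HensAway K g ρ) {Q : Type u} [CommRing Q] {q : R →+* Q} (hq : LE K g q)
    {a b : Q →+* H} (ha : a.comp q = ρ) (hb : b.comp q = ρ) : a = b :=
  hq.hom_ext h.1 (by rw [ha, hb]) (by rw [ha])

theorem HensAway.rep (h : HensAway K g ρ) (x : H) :
    ∃ (Q : Type u) (_ : CommRing Q) (q : R →+* Q) (φ : Q →+* H),
      Nb K g q ∧ φ.comp q = ρ ∧ ∃ y, φ y = x := by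
  obtain ⟨H', _, ρ', h', h1, -⟩ := exists_hens K g
  obtain ⟨e, he⟩ := h'.exists_equiv h
  obtain ⟨Q, _, q, φ, hq, hφ, y, hy⟩ := h1 (e.symm x)
  refine ⟨Q, _, q, e.toRingHom.comp φ, hq, by rw [RingHom.comp_assoc, hφ, he], y, ?_⟩
  simp [hy]

theorem HensAway.zero (h : HensAway K g ρ) {Q : Type u} [CommRing Q] {q : R →+* Q}
    (φ : Q →+* H) (hq : Nb K g q) (hφ : φ.comp q = ρ) (x : Q) (hx : φ x = 0) :
    ∃ (Q' : Type u) (_ : CommRing Q') (c : Q →+* Q'), Nb K g (c.comp q) ∧ c x = 0 := by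
  obtain ⟨H', _, ρ', h', -, h2⟩ := exists_hens K g
  obtain ⟨e, he⟩ := h.exists_equiv h'
  exact h2 Q q (e.toRingHom.comp φ) hq (by rw [RingHom.comp_assoc, hφ, he]) x (by simp [hx])

/-- finitely many elements come from one neighbourhood -/
theorem HensAway.rep_fin (h : HensAway K g ρ) {ι : Type*} [Finite ι] (x : ι → H) :
    ∃ (Q : Type u) (_ : CommRing Q) (q : R →+* Q) (φ : Q →+* H),
      Nb K g q ∧ φ.comp q = ρ ∧ ∃ y : ι → Q, ∀ i, φ (y i) = x i := by
  classical
  cases nonempty_fintype ι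
  suffices ∀ s : Finset ι, ∃ (Q : Type u) (_ : CommRing Q) (q : R →+* Q) (φ : Q →+* H),
      Nb K g q ∧ φ.comp q = ρ ∧ ∃ y : ι → Q, ∀ i ∈ s, φ (y i) = x i by
    obtain ⟨Q, _, q, φ, hq, hφ, y, hy⟩ := this Finset.univ
    exact ⟨Q, _, q, φ, hq, hφ, y, fun i => hy i (Finset.mem_univ i)⟩
  intro s
  induction s using Finset.induction_on with
  | empty =>
    obtain ⟨φ, hφ⟩ := h.lift (LE.away K g)
    exact ⟨_, _, _, φ, Nb.away K g, hφ, fun _ => 0, by simp⟩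
  | insert i s his ih =>
    obtain ⟨Q, _, q, φ, hq, hφ, y, hy⟩ := ih
    obtain ⟨Q', _, q', φ', hq', hφ', y', hy'⟩ := h.rep (x i)
    obtain ⟨T, _, a, b, hab, hT⟩ := hq.tensor hq'
    obtain ⟨χ, hχ⟩ := h.lift hT.le
    have e1 : χ.comp a = φ := h.ext hq.le (by rw [RingHom.comp_assoc, hχ]) hφ
    have e2 : χ.comp b = φ' := h.ext hq'.le (by rw [RingHom.comp_assoc, ← hab, hχ]) hφ'
    refine ⟨T, _, _, χ, hT, hχ, fun j => if j = i then b y' else a (y j), fun j hj => ?_⟩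
    by_cases hji : j = i
    · subst hji
      simp only [if_true]
      rw [← hy', ← e2]; rfl
    · simp only [hji, if_false]
      rw [← hy j (Finset.mem_of_mem_insert_of_ne hj hji), ← e1]; rfl

theorem LE.exists_field {Q : Type u} [CommRing Q] {q : R →+* Q} (h : LE K g q) (m : Ideal R)
    [m.IsPrime] (hK : K ≤ m) (hg : g ∉ m) : ∃ (F : Type u) (_ : Field F) (φ : Q →+* F),
    RingHom.ker (φ.comp q) = m := by
  obtain ⟨φ, hφ, -⟩ := h.2 m.ResidueField ⊥ henselian_bot (algebraMap R m.ResidueField) (by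
    rw [Ideal.map_le_iff_le_comap]
    intro x hx
    simpa using hK hx) (by
    rw [isUnit_iff_ne_zero]
    simpa using hg)
  refine ⟨m.ResidueField, inferInstance, φ, ?_⟩
  rw [hφ]
  ext x; simp

theorem Nb.ann {Q : Type u} [CommRing Q] {q : R →+* Q} (h : Nb K g q) (m : Ideal R)
    [m.IsPrime] (hK : K ≤ m) (hg : g ∉ m) (z : R) (hz : q z = 0) : ∃ s ∉ m, s * z = 0 := by
  letI := q.toAlgebra
  have e1 : Algebra.Etale R Q := h.et
  obtain ⟨F, _, φ, hF⟩ := h.le.exists_field m hK hg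
  obtain ⟨κ, a, y, h1, h2⟩ := Module.Flat.isTrivialRelation_of_sum_smul_eq_zero (R := R) (M := Q)
    (f := fun _ : Unit => z) (x := fun _ => (1 : Q)) (by
      simp only [Finset.univ_unique, Finset.sum_const, Finset.card_singleton, one_smul]
      rw [Algebra.smul_def, mul_one]; exact hz)
  by_contra! hc
  have h3 : ∀ j, φ (q (a () j)) = 0 := by
    intro j
    have : a () j ∈ m := by
      by_contra hj
      apply hc _ hj
      have := h2 j
      simpa [mul_comm] using this
    rw [← hF] at this
    exact this
  have := congr(φ $(h1 ()))
  rw [map_one, map_sum] at this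
  have h4 : ∀ j, φ (a () j • y j) = 0 := by
    intro j
    rw [Algebra.smul_def, map_mul]
    have : φ (algebraMap R Q (a () j)) = 0 := h3 j
    rw [this, zero_mul]
  simp [h4] at this

theorem HensAway.ann (h : HensAway K g ρ) (m : Ideal R) [m.IsPrime] (hK : K ≤ m) (hg : g ∉ m)
    (z : R) (hz : ρ z = 0) : ∃ s ∉ m, s * z = 0 := by
  obtain ⟨φ, hφ⟩ := h.lift (LE.away K g)
  obtain ⟨Q', _, c, hc, hx⟩ := h.zero φ (Nb.away K g) hφ (algebraMap R _ z) (by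
    rw [← hz, ← hφ]; rfl)
  exact hc.ann m hK hg z hx

/-- separatedness -/
theorem eq_zero_of_cover {C : Type u} [CommRing C] {I : Ideal C} [hC : HenselianRing C I]
    {n : ℕ} {g : Fin n → C} (hg : Ideal.span (Set.range g) = ⊤) {H : Fin n → Type u}
    [∀ i, CommRing (H i)] {ρ : ∀ i, C →+* H i} (hρ : ∀ i, HensAway I (g i) (ρ i)) {c : C}
    (hc : ∀ i, ρ i c = 0) : c = 0 := by
  have : (Submodule.span C {c}).annihilator = ⊤ := by
    by_contra hne
    obtain ⟨m, hm, hle⟩ := Ideal.exists_le_maximal _ hne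
    have hI : I ≤ m := hC.jac.trans (sInf_le ⟨bot_le, hm⟩)
    have : ∃ i, g i ∉ m := by
      by_contra! hall
      apply hm.ne_top
      rw [eq_top_iff, ← hg, Ideal.span_le]
      rintro _ ⟨i, rfl⟩; exact hall i
    obtain ⟨i, hi⟩ := this
    obtain ⟨s, hs, hsc⟩ := (hρ i).ann m hI hi c (hc i)
    apply hs (hle _)
    rw [Submodule.mem_annihilator_span_singleton]
    exact hsc
  have h1 : (1 : C) ∈ (Submodule.span C {c}).annihilator := by rw [this]; trivial
  rw [Submodule.mem_annihilator_span_singleton] at h1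
  simpa using h1

theorem HensAway.quotient (h : HensAway K g ρ) (𝔞 : Ideal R) :
    HensAway (K.map (Ideal.Quotient.mk 𝔞)) (Ideal.Quotient.mk 𝔞 g)
      (Ideal.quotientMap (𝔞.map ρ) ρ Ideal.le_comap_map) := by
  have hcomp : (Ideal.quotientMap (𝔞.map ρ) ρ Ideal.le_comap_map).comp (Ideal.Quotient.mk 𝔞)
    = (Ideal.Quotient.mk (𝔞.map ρ)).comp ρ := Ideal.quotientMap_comp_mk _
  refine ⟨?_, ?_, fun C _ J hJ f hf hg => ?_⟩
  · rw [Ideal.map_map, hcomp, ← Ideal.map_map]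
    have := h.1
    exact henselian_quotient _ _
  · rw [Ideal.quotientMap_mk]; exact h.2.1.map _
  · rw [Ideal.map_map] at hf
    obtain ⟨a, ha, ha'⟩ := h.2.2 C J hJ (f.comp (Ideal.Quotient.mk 𝔞)) hf hg
    have hz : 𝔞.map ρ ≤ RingHom.ker a := by
      rw [Ideal.map_le_iff_le_comap]
      intro x hx
      have : a (ρ x) = f (Ideal.Quotient.mk 𝔞 x) := congr($ha x)
      rw [Ideal.Quotient.eq_zero_iff_mem.2 hx, map_zero] at this
      exact this
    refine ⟨Ideal.Quotient.lift _ a hz, ?_, fun y hy => ?_⟩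
    · apply Ideal.Quotient.ringHom_ext
      rw [RingHom.comp_assoc, hcomp, ← RingHom.comp_assoc]
      exact ha
    · apply Ideal.Quotient.ringHom_ext
      have := ha' (y.comp (Ideal.Quotient.mk _)) (by
        dsimp only
        rw [RingHom.comp_assoc, ← hcomp, ← RingHom.comp_assoc]
        exact congr(($hy).comp (Ideal.Quotient.mk 𝔞)))
      rw [this]
      rfl

/-- A henselian subring containing the base is everything. -/
theorem HensAway.subring_eq_top (h : HensAway K g ρ) (U : Subring H) (hU : ∀ r, ρ r ∈ U)
    (J : Ideal U) (hJ : HenselianRing U J) (hKJ : ∀ k ∈ K, (⟨ρ k, hU k⟩ : U) ∈ J) 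
    (hg : ∃ v ∈ U, ρ g * v = 1) (x : H) : x ∈ U := by
  let ρ' : R →+* U := ρ.codRestrict U hU
  obtain ⟨v, hv, hgv⟩ := hg
  obtain ⟨a, ha, -⟩ := h.2.2 U J hJ ρ' (by
    rw [Ideal.map_le_iff_le_comap]; exact hKJ) (IsUnit.of_mul_eq_one ⟨v, hv⟩ (Subtype.ext hgv))
  have : U.subtype.comp a = RingHom.id H := h.hom_self (by
    rw [RingHom.comp_assoc, ha]; rfl)
  have := congr($this x)
  change ((a x : U) : H) = x at this
  rw [← this]
  exact (a x).2

end hens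
end HF
end

section
set_option linter.style.haveILetI false
open Polynomial TensorProduct

namespace HF

theorem adjoinRoot_injective {R : Type u} [CommRing R] {f : R[X]} (hf : f.Monic) (hd : f.natDegree ≠ 0) :
    Function.Injective (AdjoinRoot.of f) := by
  rw [injective_iff_map_eq_zero]
  intro a ha
  have h1 : f ∣ C a := by rwa [← AdjoinRoot.mk_eq_zero, AdjoinRoot.mk_C]
  by_contra hne
  refine hf.not_dvd_of_natDegree_lt (C_ne_zero.2 hne) ?_ h1
  rw [natDegree_C]; omega

theorem finset_roots {R : Type u} [CommRing R] (T : Finset {f : R[X] // f.Monic ∧ f.natDegree ≠ 0}) :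
    ∃ (S : Type u) (_ : CommRing S) (j : R →+* S), Function.Injective j ∧
      ∀ f ∈ T, ∃ x, eval₂ j x f.1 = 0 := by
  classical
  induction T using Finset.induction_on with
  | empty => exact ⟨R, _, RingHom.id R, Function.injective_id, by simp⟩
  | insert f T hf ih =>
    obtain ⟨S, _, j, hj, h⟩ := ih
    have : Nontrivial R := by
      by_contra hR
      rw [not_nontrivial_iff_subsingleton] at hR
      exact f.2.2 (natDegree_of_subsingleton)
    have : Nontrivial S := hj.nontrivial
    refine ⟨AdjoinRoot (f.1.map j), inferInstance, (AdjoinRoot.of _).comp j,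
      (adjoinRoot_injective (f.2.1.map j) ?_).comp hj, fun p hp => ?_⟩
    · rw [f.2.1.natDegree_map]; exact f.2.2
    · rcases Finset.mem_insert.1 hp with rfl | hp
      · exact ⟨AdjoinRoot.root _, by rw [← eval₂_map]; exact AdjoinRoot.eval₂_root _⟩
      · obtain ⟨x, hx⟩ := h p hp
        refine ⟨AdjoinRoot.of _ x, ?_⟩
        rw [← hom_eval₂, hx, map_zero]

theorem exists_step (R : Type u) [CommRing R] : ∃ (S : Type u) (_ : CommRing S) (j : R →+* S),
    Function.Injective j ∧ j.IsIntegral ∧ ∀ f : R[X], f.Monic → f.natDegree ≠ 0 → ∃ x, eval₂ j x f = 0 := by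
  classical
  let σ := {f : R[X] // f.Monic ∧ f.natDegree ≠ 0}
  let 𝔞 : Ideal (MvPolynomial σ R) := Ideal.span (Set.range fun f : σ => aeval (MvPolynomial.X f) f.1)
  have hroot : ∀ f : σ, aeval (Ideal.Quotient.mkₐ R 𝔞 (MvPolynomial.X f)) f.1 = 0 := by
    intro f
    rw [aeval_algHom_apply]
    exact Ideal.Quotient.eq_zero_iff_mem.2 (Ideal.subset_span ⟨f, rfl⟩)
  refine ⟨MvPolynomial σ R ⧸ 𝔞, inferInstance, algebraMap R _, ?_, ?_, fun f h1 h2 => ⟨_, hroot ⟨f, h1, h2⟩⟩⟩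
  · rw [injective_iff_map_eq_zero]
    intro r hr
    have hr : MvPolynomial.C r ∈ 𝔞 := Ideal.Quotient.eq_zero_iff_mem.1 hr
    obtain ⟨T, hT, hrT⟩ := Submodule.mem_span_finite_of_mem_span hr
    choose F hF using fun t : T => hT t.2
    obtain ⟨S, _, j, hj, h⟩ := finset_roots (Finset.univ.image F)
    letI := j.toAlgebra
    have h' : ∀ f : σ, ∃ x : S, f ∈ Finset.univ.image F → eval₂ j x f.1 = 0 := by
      intro f
      by_cases hf : f ∈ Finset.univ.image F
      · obtain ⟨x, hx⟩ := h f hf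
        exact ⟨x, fun _ => hx⟩
      · exact ⟨0, fun h => absurd h hf⟩
    choose x hx using h'
    let φ : MvPolynomial σ R →ₐ[R] S := MvPolynomial.aeval x
    have hk : Ideal.span (T : Set (MvPolynomial σ R)) ≤ RingHom.ker φ := by
      rw [Ideal.span_le]
      intro t ht
      have h1 := hF ⟨t, ht⟩
      have h2 := hx (F ⟨t, ht⟩) (Finset.mem_image_of_mem _ (Finset.mem_univ _))
      change φ t = 0
      dsimp only at h1
      rw [← h1, ← aeval_algHom_apply, MvPolynomial.aeval_X]
      exact h2
    have := hk hrT
    rw [RingHom.mem_ker] at this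
    apply hj
    rw [map_zero, ← this]
    exact (MvPolynomial.aeval_C x r).symm
  · have h1 : Algebra.IsIntegral R (MvPolynomial σ R ⧸ 𝔞) := by
      rw [← integralClosure_eq_top_iff, eq_top_iff]
      have : Algebra.adjoin R (Set.range fun f : σ => Ideal.Quotient.mkₐ R 𝔞 (MvPolynomial.X f)) = ⊤ := by
        have := congr(Subalgebra.map (Ideal.Quotient.mkₐ R 𝔞) $(MvPolynomial.adjoin_range_X (σ := σ) (R := R)))
        rw [AlgHom.map_adjoin, ← Set.range_comp, Algebra.map_top] at this
        rw [(AlgHom.range_eq_top _).2 (Ideal.Quotient.mkₐ_surjective R 𝔞)] at this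
        exact this
      rw [← this]
      apply Algebra.adjoin_le
      rintro _ ⟨f, rfl⟩
      exact ⟨f.1, f.2.1, hroot f⟩
    exact algebraMap_isIntegral_iff.2 h1


open CategoryTheory Limits

theorem exists_seq_colim (X : ℕ → CommRingCat.{u}) (f : ∀ n, X n →+* X (n+1))
    (hf : ∀ n, Function.Injective (f n)) : ∃ (E : Type u) (_ : CommRing E) (ι : ∀ n, X n →+* E),
    (∀ n, (ι (n+1)).comp (f n) = ι n) ∧ (∀ e, ∃ n x, ι n x = e) ∧ (∀ n, Function.Injective (ι n)) := by
  let F0 : ℕ ⥤ CommRingCat.{u} := Functor.ofSequence (fun n => CommRingCat.ofHom (f n))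
  let D : ULift.{u} ℕ ⥤ ℕ := Monotone.functor (f := ULift.down) (fun _ _ h => h)
  let F : ULift.{u} ℕ ⥤ CommRingCat.{u} := D ⋙ F0
  have : IsFiltered (ULift.{u} ℕ) := inferInstance
  have hinj' : ∀ a b (h : a ≤ b), Function.Injective (F0.map (homOfLE h)).hom := by
    intro a b hle
    induction b, hle using Nat.le_induction with
    | base =>
      have : F0.map (homOfLE (le_refl a)) = 𝟙 _ := F0.map_id a
      rw [this]; exact Function.injective_id
    | succ b hb ih =>
      have : homOfLE (Nat.le_succ_of_le hb) = homOfLE hb ≫ homOfLE (Nat.le_succ b) := rfl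
      rw [this, F0.map_comp]
      have h2 : F0.map (homOfLE (Nat.le_succ b)) = CommRingCat.ofHom (f b) := Functor.ofSequence_map_homOfLE_succ _ _
      rw [h2]
      exact (hf b).comp ih
  have hinj : ∀ a b (h : a ⟶ b), Function.Injective (F0.map h).hom := by
    intro a b h
    have : h = homOfLE h.le := Subsingleton.elim _ _
    rw [this]; exact hinj' a b h.le
  refine ⟨(colimit F : CommRingCat.{u}), inferInstance, fun n => (colimit.ι F ⟨n⟩).hom,
    fun n => ?_, fun e => ?_, fun n x y hxy => ?_⟩
  · have h2 : F0.map (homOfLE (Nat.le_succ n)) = CommRingCat.ofHom (f n) := Functor.ofSequence_map_homOfLE_succ _ _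
    have h3 : F.map (homOfLE (Nat.le_succ n) : (⟨n⟩ : ULift.{u} ℕ) ⟶ ⟨n+1⟩) = CommRingCat.ofHom (f n) := h2
    have := colimit.w F (j := ⟨n+1⟩) (j' := ⟨n⟩) (homOfLE (Nat.le_succ n))
    rw [h3] at this
    exact RingHom.ext fun x => congr(($this).hom x)
  · obtain ⟨⟨n⟩, x, hx⟩ := Concrete.colimit_exists_rep F e
    exact ⟨n, x, hx⟩
  · obtain ⟨k, a, b, h⟩ := Concrete.colimit_exists_of_rep_eq F (i := ⟨n⟩) (j := ⟨n⟩) x y hxy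
    obtain rfl : a = b := Subsingleton.elim _ _
    exact hinj _ _ (D.map a) h

theorem exists_hat (C : Type u) [CommRing C] : ∃ (E : Type u) (_ : CommRing E) (j : C →+* E),
    Function.Injective j ∧ j.IsIntegral ∧ ∀ f : E[X], f.Monic → f.natDegree ≠ 0 → ∃ x, f.IsRoot x := by
  have hs : ∀ R : CommRingCat.{u}, ∃ (S : CommRingCat.{u}) (j : R →+* S),
    Function.Injective j ∧ j.IsIntegral ∧ ∀ f : R[X], f.Monic → f.natDegree ≠ 0 → ∃ x, eval₂ j x f = 0 := by
    intro R
    obtain ⟨S, _, j, h⟩ := exists_step R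
    exact ⟨CommRingCat.of S, j, h⟩
  choose S j hj1 hj2 hj3 using hs
  let X : ℕ → CommRingCat.{u} := fun n => S^[n] (CommRingCat.of C)
  have hX : ∀ n, X (n+1) = S (X n) := fun n => Function.iterate_succ_apply' S n _
  have hf' : ∀ n, ∃ φ : X n →+* X (n+1), Function.Injective φ ∧ φ.IsIntegral ∧
      ∀ p : (X n)[X], p.Monic → p.natDegree ≠ 0 → ∃ x, eval₂ φ x p = 0 := by
    intro n
    rw [hX]
    exact ⟨j _, hj1 _, hj2 _, hj3 _⟩
  choose f h1 h2 h3 using hf'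
  obtain ⟨E, _, ι, hι, hex, hinj⟩ := exists_seq_colim X f h1
  have hint : ∀ n, ∃ c : C →+* X n, c.IsIntegral ∧ (ι n).comp c = ι 0 := by
    intro n
    induction n with
    | zero => exact ⟨RingHom.id _, RingHom.isIntegral_of_surjective _ Function.surjective_id, rfl⟩
    | succ n ih =>
      obtain ⟨c, hc, hc'⟩ := ih
      exact ⟨(f n).comp c, hc.trans _ _ (h2 n), by rw [← RingHom.comp_assoc, hι, hc']⟩
  have hdir : ∀ n m, n ≤ m → ∃ c : X n →+* X m, (ι m).comp c = ι n := by
    intro n m h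
    induction m, h using Nat.le_induction with
    | base => exact ⟨RingHom.id _, rfl⟩
    | succ m h ih =>
      obtain ⟨c, hc⟩ := ih
      exact ⟨(f m).comp c, by rw [← RingHom.comp_assoc, hι, hc]⟩
  have hpol : ∀ p : E[X], ∃ n, p ∈ Polynomial.lifts (ι n) := by
    intro p
    induction p using Polynomial.induction_on' with
    | add p q hp hq =>
      obtain ⟨n, hp⟩ := hp
      obtain ⟨m, hq⟩ := hq
      obtain ⟨a, ha⟩ := hdir n (max n m) (le_max_left _ _)
      obtain ⟨b, hb⟩ := hdir m (max n m) (le_max_right _ _)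
      refine ⟨max n m, add_mem ?_ ?_⟩
      · rw [Polynomial.lifts_iff_coeff_lifts] at hp ⊢
        intro n
        obtain ⟨x, hx⟩ := hp n
        exact ⟨a x, by rw [← hx, ← ha]; rfl⟩
      · rw [Polynomial.lifts_iff_coeff_lifts] at hq ⊢
        intro n
        obtain ⟨x, hx⟩ := hq n
        exact ⟨b x, by rw [← hx, ← hb]; rfl⟩
    | monomial n a =>
      obtain ⟨X, x, rfl⟩ := hex a
      exact ⟨X, monomial n x, by simp⟩
  refine ⟨E, inferInstance, ι 0, hinj 0, fun e => ?_, fun p hp hd => ?_⟩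
  · obtain ⟨n, x, rfl⟩ := hex e
    obtain ⟨c, hc, hc'⟩ := hint n
    obtain ⟨p, hp, hpx⟩ := hc x
    refine ⟨p, hp, ?_⟩
    rw [← hc', ← hom_eval₂, hpx, map_zero]
  · obtain ⟨n, hn⟩ := hpol p
    obtain ⟨P, rfl, hPd, hP⟩ := lifts_and_natDegree_eq_and_monic hn hp
    obtain ⟨x, hx⟩ := h3 n P hP (by rw [hPd]; exact hd)
    refine ⟨ι (n+1) x, ?_⟩
    rw [IsRoot.def, Polynomial.eval_map, ← hι, ← hom_eval₂, hx, map_zero]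

end HF
end

section
set_option linter.style.haveILetI false
open Polynomial TensorProduct
namespace HF

def MonicRoots (E : Type*) [CommRing E] : Prop :=
  ∀ f : E[X], f.Monic → f.natDegree ≠ 0 → ∃ x, f.IsRoot x

theorem MonicRoots.quotient {E : Type*} [CommRing E] (h : MonicRoots E) {F : Type*} [CommRing F]
    (φ : E →+* F) (hφ : Function.Surjective φ) : MonicRoots F := by
  intro f hf hd
  have : f ∈ lifts φ := by
    rw [lifts_iff_coeff_lifts]
    intro n; exact hφ _
  obtain ⟨P, rfl, hPd, hP⟩ := lifts_and_natDegree_eq_and_monic this hf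
  obtain ⟨x, hx⟩ := h P hP (by rwa [hPd])
  exact ⟨φ x, hx.map⟩

theorem MonicRoots.localization {E : Type*} [CommRing E] (h : MonicRoots E) (M : Submonoid E)
    (F : Type*) [CommRing F] [Algebra E F] [IsLocalization M F] : MonicRoots F := by
  intro f hf hd
  have h1 := IsLocalization.scaleRoots_commonDenom_mem_lifts M f (by rw [hf]; exact one_mem _)
  set b := IsLocalization.commonDenom M f.support f.coeff
  obtain ⟨P, hPf, hPd, hP⟩ := lifts_and_natDegree_eq_and_monic h1 (by
    rwa [monic_scaleRoots_iff])
  rw [natDegree_scaleRoots] at hPd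
  obtain ⟨x, hx⟩ := h P hP (by rwa [hPd])
  have hx' := hx.map (f := algebraMap E F)
  rw [hPf] at hx'
  refine ⟨IsLocalization.mk' F x b, ?_⟩
  have h2 := scaleRoots_eval_mul f (IsLocalization.mk' F x b) (algebraMap E F b)
  rw [mul_comm, IsLocalization.mk'_spec, hx'.eq_zero] at h2
  have hu : IsUnit (algebraMap E F b ^ f.natDegree) := (IsLocalization.map_units F b).pow _
  exact hu.mul_right_eq_zero.1 h2.symm

theorem MonicRoots.henselian {L : Type*} [CommRing L] [IsLocalRing L] (h : MonicRoots L) :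
    HenselianRing L (IsLocalRing.maximalIdeal L) where
  jac := by
    rw [Ideal.jacobson, le_sInf_iff]
    rintro I ⟨-, hI⟩
    exact (IsLocalRing.eq_maximalIdeal hI).ge
  is_henselian := by
    intro f hf a₀ h₁ h₂
    clear h₂
    induction hn : f.natDegree generalizing f with
    | zero =>
      have := hf.natDegree_eq_zero.1 hn
      rw [this, eval_one] at h₁
      exact absurd h₁ ((Ideal.ne_top_iff_one _).1 (IsLocalRing.maximalIdeal.isMaximal L).ne_top)
    | succ n ih =>
      obtain ⟨r, hr⟩ := h f hf (by omega)
      obtain ⟨p, hp⟩ := dvd_iff_isRoot.2 hr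
      by_cases hra : r - a₀ ∈ IsLocalRing.maximalIdeal L
      · exact ⟨r, hr, hra⟩
      · have hpm : p.Monic := (monic_X_sub_C r).of_mul_monic_left (hp ▸ hf)
        have hd : p.natDegree = n := by
          have := (monic_X_sub_C r).natDegree_mul hpm
          rw [← hp, hn, natDegree_X_sub_C] at this
          omega
        have h3 : p.eval a₀ ∈ IsLocalRing.maximalIdeal L := by
          rw [hp, eval_mul] at h₁
          refine (Ideal.IsPrime.mem_or_mem inferInstance h₁).resolve_left fun h4 => hra ?_
          rw [eval_sub, eval_X, eval_C] at h4
          rw [← neg_sub]; exact neg_mem h4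
        obtain ⟨a, ha, ha'⟩ := ih p hpm h3 hd
        refine ⟨a, ?_, ha'⟩
        rw [hp]; exact root_mul_left_of_isRoot _ ha

theorem MonicRoots.atPrime {E : Type*} [CommRing E] (h : MonicRoots E) (z : Ideal E) [z.IsPrime] :
    HenselianRing (Localization.AtPrime z) (IsLocalRing.maximalIdeal (Localization.AtPrime z)) :=
  (h.localization z.primeCompl (Localization.AtPrime z)).henselian

theorem MonicRoots.split {E : Type*} [CommRing E] (h : MonicRoots E) (f : E[X]) (hf : f.Monic) (n : ℕ)
    (hn : f.natDegree = n) : ∃ r : Fin n → E, f = ∏ k, (X - C (r k)) := by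
  induction n generalizing f with
  | zero =>
    exact ⟨fun _ => 0, by simpa using hf.natDegree_eq_zero.1 hn⟩
  | succ n ih =>
    obtain ⟨r, hr⟩ := h f hf (by omega)
    obtain ⟨p, hp⟩ := dvd_iff_isRoot.2 hr
    have hpm : p.Monic := (monic_X_sub_C r).of_mul_monic_left (hp ▸ hf)
    have hd : p.natDegree = n := by
      have : Nontrivial E := by
        by_contra hE
        rw [not_nontrivial_iff_subsingleton] at hE
        rw [Subsingleton.elim f 0] at hn
        simp at hn
      have := (monic_X_sub_C r).natDegree_mul hpm
      rw [← hp, hn, natDegree_X_sub_C] at this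
      omega
    obtain ⟨r', hr'⟩ := ih p hpm hd
    refine ⟨Fin.cons r r', ?_⟩
    rw [Fin.prod_univ_succ]
    simp only [Fin.cons_zero, Fin.cons_succ]
    rw [← hr']; exact hp

theorem sym_repr {N : ℕ} (p : MvPolynomial (Fin N) ℤ) (hp : p.IsSymmetric) :
    ∃ Ψ : MvPolynomial (Fin N) ℤ, ∀ (R : Type u) [CommRing R] (r : Fin N → R),
      MvPolynomial.aeval r p =
        MvPolynomial.aeval (fun i : Fin N => (∏ k, (X + C (r k))).coeff (N - (i + 1))) Ψ := by
  obtain ⟨Ψ, hΨ⟩ := MvPolynomial.esymmAlgHom_surjective (σ := Fin N) (n := N) ℤ (by simp) ⟨p, hp⟩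
  refine ⟨Ψ, fun R _ r => ?_⟩
  have h1 : ((MvPolynomial.aeval r).comp
      ((MvPolynomial.symmetricSubalgebra (Fin N) ℤ).val.comp (MvPolynomial.esymmAlgHom (Fin N) ℤ N)))
      = MvPolynomial.aeval (fun i : Fin N => (∏ k, (X + C (r k))).coeff (N - (i + 1))) := by
    ext i
    rw [MvPolynomial.aeval_X, Finset.prod_X_add_C_coeff _ _ (by simp)]
    simp only [AlgHom.comp_apply, MvPolynomial.esymmAlgHom, MvPolynomial.aeval_X, Subalgebra.coe_val]
    rw [MvPolynomial.aeval_esymm_eq_multiset_esymm, Finset.esymm_map_val]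
    have : (Finset.univ : Finset (Fin N)).card - (N - (i + 1)) = i + 1 := by
      simp; omega
    rw [this]
  rw [← h1]
  simp [AlgHom.comp_apply, hΨ]

theorem exists_sym (N d : ℕ) : ∃ G : ∀ (R : Type u) [CommRing R], R[X] → R[X],
    (∀ (R : Type u) [CommRing R] (F : R[X]), (G R F).Monic) ∧
    (∀ (R S : Type u) [CommRing R] [CommRing S] (φ : R →+* S) (F : R[X]), (G R F).map φ = G S (F.map φ)) ∧
    ∀ (R : Type u) [CommRing R] (r : Fin N → R), G R (∏ k, (X - C (r k))) =
      ∏ T ∈ Finset.powersetCard d Finset.univ, (X - C (∏ k ∈ T, r k)) := by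
  classical
  let Ghat : (MvPolynomial (Fin N) ℤ)[X] :=
    ∏ T ∈ Finset.powersetCard d Finset.univ, (X - C (∏ k ∈ T, (- MvPolynomial.X k)))
  have hGm : Ghat.Monic := monic_prod_of_monic _ _ fun T _ => monic_X_sub_C _
  have hmap : ∀ (R : Type u) [CommRing R] (r : Fin N → R),
     Ghat.map (MvPolynomial.aeval (R := ℤ) r).toRingHom =
       ∏ T ∈ Finset.powersetCard d Finset.univ, (X - C (∏ k ∈ T, - r k)) := by
    intro R _ r
    simp [Ghat, Polynomial.map_prod]
  have hsym : ∀ j, (Ghat.coeff j).IsSymmetric := by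
    intro j σ
    have : Ghat.map (MvPolynomial.rename σ : MvPolynomial (Fin N) ℤ →ₐ[ℤ] _).toRingHom = Ghat := by
      simp only [Ghat, Polynomial.map_prod, Polynomial.map_sub, map_X, map_C]
      refine Finset.prod_bij (fun T _ => T.map σ.toEmbedding) ?_ ?_ ?_ ?_
      · intro T hT
        simpa using hT
      · intro T _ T' _ h
        exact Finset.map_injective _ h
      · intro T hT
        refine ⟨T.map σ.symm.toEmbedding, by simpa using hT, ?_⟩
        rw [Finset.map_map]; ext; simp
      · intro T hT
        simp
    have := congr(coeff $this j)
    rw [coeff_map] at this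
    exact this
  choose Ψ hΨ using fun j => sym_repr.{u} (Ghat.coeff j) (hsym j)
  set M := Ghat.natDegree
  refine ⟨fun R _ F => X ^ M + ∑ j ∈ Finset.range M,
    C (MvPolynomial.aeval (fun i : Fin N => F.coeff (N - (i + 1))) (Ψ j)) * X ^ j, ?_, ?_, ?_⟩
  · intro R _ F
    apply monic_X_pow_add
    refine (degree_sum_le _ _).trans_lt ?_
    rw [Finset.sup_lt_iff (by exact_mod_cast WithBot.bot_lt_coe M)]
    intro j hj
    exact (degree_C_mul_X_pow_le _ _).trans_lt (by exact_mod_cast Finset.mem_range.1 hj)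
  · intro R S _ _ φ F
    simp only [Polynomial.map_add, Polynomial.map_pow, map_X, Polynomial.map_sum, Polynomial.map_mul,
      map_C, coeff_map]
    congr 1
    refine Finset.sum_congr rfl fun j _ => ?_
    congr 2
    exact MvPolynomial.map_aeval _ φ _ |>.trans (by rw [MvPolynomial.aeval_def, RingHom.ext_int (φ.comp (algebraMap ℤ R)) (algebraMap ℤ S)]; rfl)
  · intro R _ r
    have h1 := hmap R (fun k => - r k)
    simp only [neg_neg] at h1
    rw [← h1]
    have h2 : ∏ k, (X - C (r k)) = ∏ k, (X + C (- r k)) :=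
      Finset.prod_congr rfl fun k _ => by rw [C_neg, sub_eq_add_neg]
    rw [h2]
    simp_rw [← hΨ _ R (fun k => - r k)]
    conv_rhs => rw [hGm.as_sum]
    simp only [Polynomial.map_add, Polynomial.map_pow, map_X, Polynomial.map_sum, Polynomial.map_mul,
      map_C]
    rfl

end HF
end

section
set_option linter.style.haveILetI false
open Polynomial TensorProduct
namespace HF

theorem conn_domain {D E : Type u} [CommRing D] [CommRing E] [IsDomain E] [Algebra D E]
    [Algebra.IsIntegral D E] (I : Ideal D) [HenselianRing D I] (hE : MonicRoots E) (e : E)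
    (he : e ^ 2 - e ∈ I.map (algebraMap D E)) :
    (∀ z : Ideal E, z.IsPrime → I.map (algebraMap D E) ≤ z → e ∈ z) ∨
    (∀ z : Ideal E, z.IsPrime → I.map (algebraMap D E) ≤ z → e - 1 ∈ z) := by
  classical
  rcases subsingleton_or_nontrivial D with hD | hD
  · left
    intro z hz
    have := (algebraMap D E).codomain_trivial
    exact absurd (Subsingleton.elim _ _) hz.ne_top
  obtain ⟨χ, hχm, hχ0, hχI⟩ := exists_monic_aeval_eq_zero_forall_mem_of_mem_map he
  set d := χ.natDegree with hd
  let F : D[X] := χ.comp (X ^ 2 - X)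
  have h2 : (X ^ 2 - X : D[X]).natDegree = 2 := by
    compute_degree!
  have h2m : (X ^ 2 - X : D[X]).Monic := by
    rw [Monic, leadingCoeff, h2]; simp [coeff_X]
  have hFm : F.Monic := hχm.comp h2m (by rw [h2]; norm_num)
  have hFd : F.natDegree = d + d := by
    have := natDegree_comp_eq_of_mul_ne_zero (p := χ) (q := X ^ 2 - X) (by
      rw [hχm.leadingCoeff, h2m.leadingCoeff]; simp)
    simp only [F]
    rw [this, h2]; ring
  have hFe : (F.map (algebraMap D E)).IsRoot e := by
    rw [IsRoot.def, eval_map, ← aeval_def, aeval_comp]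
    simpa using hχ0
  obtain ⟨r, hr⟩ := hE.split (F.map (algebraMap D E)) (hFm.map _) (d + d) (by
    rw [hFm.natDegree_map, hFd])
  obtain ⟨k₀, hk₀⟩ : ∃ k, e = r k := by
    rw [hr, IsRoot.def, eval_prod, Finset.prod_eq_zero_iff] at hFe
    obtain ⟨k, -, hk⟩ := hFe
    exact ⟨k, by simpa [sub_eq_zero] using hk⟩
  -- reduction
  have hred : ∀ (S : Type u) [CommRing S] (φ : D →+* S), (∀ i ∈ I, φ i = 0) →
      F.map φ = (X ^ 2 - X) ^ d := by
    intro S _ φ hφ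
    have : χ.map φ = X ^ d := by
      ext n
      rw [coeff_map, coeff_X_pow]
      split_ifs with h
      · rw [h, hd, hχm.coeff_natDegree, map_one]
      · exact hφ _ (hχI n h)
    simp [F, Polynomial.map_comp, this]
  obtain ⟨G, hGm, hGmap, hGprod⟩ := exists_sym.{u} (d + d) d
  let ε : Fin (d + d) → D ⧸ I := fun k => if (k : ℕ) < d then 1 else 0
  have hε : ∏ k, (X - C (ε k)) = (X ^ 2 - X) ^ d := by
    rw [Fin.prod_univ_add]
    have : (X ^ 2 - X : (D ⧸ I)[X]) = (X - 1) * X := by ring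
    simp [ε, this, mul_pow]
  let T₀ : Finset (Fin (d + d)) := Finset.univ.filter fun k => (k : ℕ) < d
  have hT₀ : T₀ ∈ Finset.powersetCard d (Finset.univ : Finset (Fin (d + d))) := by
    rw [Finset.mem_powersetCard_univ]
    simp only [T₀]
    rw [Fin.card_filter_val_lt]; omega
  have hGred : (G D F).map (Ideal.Quotient.mk I) =
      (X - 1) * ∏ T ∈ (Finset.powersetCard d (Finset.univ : Finset (Fin (d + d)))).erase T₀, X := by
    rw [hGmap, hred _ _ (fun i hi => Ideal.Quotient.eq_zero_iff_mem.2 hi), ← hε, hGprod,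
      ← Finset.mul_prod_erase _ _ hT₀]
    congr 1
    · congr 1
      rw [Finset.prod_eq_one, C_1]
      intro k hk
      simp only [T₀, Finset.mem_filter] at hk
      simp [ε, hk.2]
    · refine Finset.prod_congr rfl fun T hT => ?_
      obtain ⟨k, hk, hk'⟩ : ∃ k ∈ T, k ∉ T₀ := by
        by_contra! hcon
        rw [Finset.mem_erase] at hT
        refine hT.1 (Finset.eq_of_subset_of_card_le hcon ?_)
        rw [Finset.mem_powersetCard_univ.1 hT.2, Finset.mem_powersetCard_univ.1 hT₀]
      rw [Finset.prod_eq_zero hk, C_0, sub_zero]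
      simp only [T₀, Finset.mem_filter, Finset.mem_univ, true_and] at hk'
      simp [ε, hk']
  obtain ⟨l, hl, hl1⟩ := HenselianRing.is_henselian (I := I) (G D F) (hGm D F) 1 (by
    rw [← Ideal.Quotient.eq_zero_iff_mem, ← eval_map_apply, map_one, hGred]
    simp) (by
    rw [← eval_map_apply, map_one, ← derivative_map, hGred, derivative_mul]
    simp)
  have hl' := hl.map (f := algebraMap D E)
  rw [hGmap, hr, hGprod, IsRoot.def, eval_prod, Finset.prod_eq_zero_iff] at hl'
  obtain ⟨T, hT, hTl⟩ := hl'
  have hTl : algebraMap D E l = ∏ k ∈ T, r k := by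
    rwa [eval_sub, eval_X, eval_C, sub_eq_zero] at hTl
  have hTc := Finset.mem_powersetCard_univ.1 hT
  have key : ∀ z : Ideal E, z.IsPrime → I.map (algebraMap D E) ≤ z →
      ∀ k, if k ∈ T then r k - 1 ∈ z else r k ∈ z := by
    intro z hz hIz
    let φ : D →+* E ⧸ z := (Ideal.Quotient.mk z).comp (algebraMap D E)
    have hφ : ∀ i ∈ I, φ i = 0 := fun i hi =>
      Ideal.Quotient.eq_zero_iff_mem.2 (hIz (Ideal.mem_map_of_mem _ hi))
    have h1 := hred _ φ hφ
    have h3 : F.map φ = ∏ k, (X - C (Ideal.Quotient.mk z (r k))) := by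
      rw [← Polynomial.map_map, hr]; simp [Polynomial.map_prod]
    have h4 : ∀ k, Ideal.Quotient.mk z (r k) = 0 ∨ Ideal.Quotient.mk z (r k) = 1 := by
      intro k
      have h5 : (F.map φ).IsRoot (Ideal.Quotient.mk z (r k)) := by
        rw [h3, IsRoot.def, eval_prod]
        exact Finset.prod_eq_zero (Finset.mem_univ k) (by simp)
      rw [h1, IsRoot.def, eval_pow] at h5
      have h6 := eq_zero_of_pow_eq_zero h5
      rw [eval_sub, eval_pow, eval_X] at h6
      have : Ideal.Quotient.mk z (r k) * (Ideal.Quotient.mk z (r k) - 1) = 0 := by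
        rw [← h6]; ring
      rcases mul_eq_zero.1 this with h | h
      · exact Or.inl h
      · exact Or.inr (sub_eq_zero.1 h)
    have h5 : ∀ k ∈ T, Ideal.Quotient.mk z (r k) = 1 := by
      intro k hk
      refine (h4 k).resolve_left fun h0 => ?_
      have h6 : φ l = 0 := by
        change Ideal.Quotient.mk z (algebraMap D E l) = 0
        rw [hTl, map_prod]
        exact Finset.prod_eq_zero hk h0
      have h7 : φ l = 1 := by
        have := hφ _ hl1
        rwa [map_sub, map_one, sub_eq_zero] at this
      rw [h6] at h7
      exact zero_ne_one h7
    have hcount : (Finset.univ.filter fun k => Ideal.Quotient.mk z (r k) = 1).card = d := by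
      have h8 := congr(($(h3.symm.trans h1)).roots.count 1)
      rw [roots_prod _ _ (Finset.prod_ne_zero_iff.2 fun k _ => X_sub_C_ne_zero _)] at h8
      have : (X ^ 2 - X : (E ⧸ z)[X]) = (X - C 1) * (X - C 0) := by simp; ring
      rw [this, roots_pow, roots_mul (mul_ne_zero (X_sub_C_ne_zero _) (X_sub_C_ne_zero _))] at h8
      simp only [roots_X_sub_C, Multiset.bind_singleton, Multiset.count_map, Multiset.count_nsmul] at h8
      have h9 : Multiset.count (1 : E ⧸ z) ({1} + {0}) = 1 := by simp
      rw [h9, mul_one] at h8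
      rw [Finset.card_def, Finset.filter_val]
      refine Eq.trans ?_ h8
      congr 1
      refine Multiset.filter_congr fun k _ => ?_
      exact eq_comm
    have hTeq : T = Finset.univ.filter fun k => Ideal.Quotient.mk z (r k) = 1 :=
      Finset.eq_of_subset_of_card_le (fun k hk => by simpa using h5 k hk) (by rw [hcount, hTc])
    intro k
    split_ifs with hk
    · rw [← Ideal.Quotient.eq_zero_iff_mem, map_sub, map_one, h5 k hk, sub_self]
    · rw [← Ideal.Quotient.eq_zero_iff_mem]
      refine (h4 k).resolve_right fun h => hk ?_
      rw [hTeq]; simpa using h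
  by_cases hk : k₀ ∈ T
  · right
    intro z hz hIz
    have := key z hz hIz k₀
    rw [if_pos hk] at this
    rwa [hk₀]
  · left
    intro z hz hIz
    have := key z hz hIz k₀
    rw [if_neg hk] at this
    rwa [hk₀]

/-- The connectivity property of a pair. -/
def Conn {E : Type*} [CommRing E] (I : Ideal E) : Prop :=
  ∀ y : Ideal E, y.IsPrime → ∀ e, e ^ 2 - e ∈ I ⊔ y →
    (∀ z : Ideal E, z.IsPrime → I ≤ z → y ≤ z → e ∈ z) ∨
    (∀ z : Ideal E, z.IsPrime → I ≤ z → y ≤ z → e - 1 ∈ z)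

theorem conn_of_integral {C E : Type u} [CommRing C] [CommRing E] (j : C →+* E) (hj : j.IsIntegral)
    (I : Ideal C) [HenselianRing C I] (hE : MonicRoots E) : Conn (I.map j) := by
  intro y hy e he
  let η := y.comap j
  have := henselian_quotient I η
  let j' : C ⧸ η →+* E ⧸ y := Ideal.quotientMap y j le_rfl
  letI := j'.toAlgebra
  have : Algebra.IsIntegral (C ⧸ η) (E ⧸ y) := ⟨hj.quotient⟩
  have hE' : MonicRoots (E ⧸ y) := hE.quotient (Ideal.Quotient.mk y) Ideal.Quotient.mk_surjective
  have hmap : (I.map (Ideal.Quotient.mk η)).map (algebraMap (C ⧸ η) (E ⧸ y))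
      = (I.map j).map (Ideal.Quotient.mk y) := by
    rw [Ideal.map_map, Ideal.map_map]
    congr 1
  have h1 := conn_domain (D := C ⧸ η) (E := E ⧸ y) (I.map (Ideal.Quotient.mk η)) hE'
    (Ideal.Quotient.mk y e) (by
      rw [hmap, ← map_pow, ← map_sub, ← Ideal.mem_comap, Ideal.comap_map_of_surjective _ Ideal.Quotient.mk_surjective]
      rw [← RingHom.ker_eq_comap_bot, Ideal.mk_ker]
      exact he)
  rw [hmap] at h1
  have key : ∀ (z : Ideal E), z.IsPrime → I.map j ≤ z → y ≤ z →
      (z.map (Ideal.Quotient.mk y)).IsPrime ∧ (I.map j).map (Ideal.Quotient.mk y) ≤ z.map (Ideal.Quotient.mk y)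
      ∧ ∀ a, Ideal.Quotient.mk y a ∈ z.map (Ideal.Quotient.mk y) → a ∈ z := by
    intro z hz h1 h2
    refine ⟨Ideal.map_isPrime_of_surjective Ideal.Quotient.mk_surjective (by rwa [Ideal.mk_ker]), Ideal.map_mono h1, fun a ha => ?_⟩
    rw [← Ideal.mem_comap, Ideal.comap_map_of_surjective _ Ideal.Quotient.mk_surjective,
      ← RingHom.ker_eq_comap_bot, Ideal.mk_ker, sup_of_le_left h2] at ha
    exact ha
  refine h1.imp ?_ ?_
  · intro h z hz hI hyz
    obtain ⟨h3, h4, h5⟩ := key z hz hI hyz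
    exact h5 _ (h _ h3 h4)
  · intro h z hz hI hyz
    obtain ⟨h3, h4, h5⟩ := key z hz hI hyz
    exact h5 _ (by rw [map_sub, map_one]; exact h _ h3 h4)

end HF
end

section
set_option linter.style.haveILetI false
open Polynomial TensorProduct
namespace HF

theorem eqAt_iff {E : Type*} [CommRing E] (y : Ideal E) [y.IsPrime] (a b : E) :
    algebraMap E (Localization.AtPrime y) a = algebraMap E (Localization.AtPrime y) b ↔
      ∃ t ∉ y, t * (a - b) = 0 := by
  rw [IsLocalization.eq_iff_exists y.primeCompl]
  constructor
  · rintro ⟨⟨t, ht⟩, h⟩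
    exact ⟨t, ht, by rw [mul_sub, sub_eq_zero]; exact h⟩
  · rintro ⟨t, ht, h⟩
    exact ⟨⟨t, ht⟩, by rw [mul_sub, sub_eq_zero] at h; exact h⟩

theorem isUnit_at {E : Type*} [CommRing E] (y : Ideal E) [y.IsPrime] {a : E} (h : a ∉ y) :
    IsUnit (algebraMap E (Localization.AtPrime y) a) :=
  IsLocalization.map_units (Localization.AtPrime y) (⟨a, h⟩ : y.primeCompl)

theorem glue_basic {E : Type*} [CommRing E] {ι : Type*} [Finite ι] (h a : ι → E)
    (hs : Ideal.span (Set.range h) = ⊤)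
    (hc : ∀ k m (y : Ideal E) [y.IsPrime], h k ∉ y → h m ∉ y → 
      algebraMap E (Localization.AtPrime y) (a k * h m) = algebraMap E (Localization.AtPrime y) (a m * h k)) :
    ∃ c, ∀ k (y : Ideal E) [y.IsPrime], h k ∉ y →
      algebraMap E (Localization.AtPrime y) (c * h k) = algebraMap E (Localization.AtPrime y) (a k) := by
  classical
  cases nonempty_fintype ι
  have h1 : ∀ k m, ∃ n, (h k * h m) ^ n * (a k * h m - a m * h k) = 0 := by
    intro k m
    have : h k * h m ∈ (Ideal.span {a k * h m - a m * h k}).annihilator.radical := by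
      rw [Ideal.radical_eq_sInf, Ideal.mem_sInf]
      rintro y ⟨hy, hyp⟩
      by_contra hcon
      have hk : h k ∉ y := fun h' => hcon (y.mul_mem_right _ h')
      have hm : h m ∉ y := fun h' => hcon (y.mul_mem_left _ h')
      obtain ⟨t, ht, ht'⟩ := (eqAt_iff y _ _).1 (hc k m y hk hm)
      exact ht (hy (Submodule.mem_annihilator_span_singleton _ _ |>.2 ht'))
    obtain ⟨n, hn⟩ := this
    exact ⟨n, Submodule.mem_annihilator_span_singleton _ _ |>.1 hn⟩
  choose n hn using h1
  obtain ⟨N, hN⟩ : ∃ N, ∀ k m, (h k * h m) ^ N * (a k * h m - a m * h k) = 0 := by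
    refine ⟨∑ k, ∑ m, n k m, fun k m => ?_⟩
    have : n k m ≤ ∑ k, ∑ m, n k m :=
      (Finset.single_le_sum (f := fun m => n k m) (fun _ _ => Nat.zero_le _) (Finset.mem_univ m)).trans
        (Finset.single_le_sum (f := fun k => ∑ m, n k m) (fun _ _ => Nat.zero_le _) (Finset.mem_univ k))
    obtain ⟨q, hq⟩ := Nat.exists_eq_add_of_le this
    rw [hq, pow_add, mul_assoc, mul_left_comm, hn, mul_zero]
  have hs' : Ideal.span (Set.range fun k => h k ^ (N + 1)) = ⊤ := by
    have := Ideal.span_pow_eq_top _ hs (N + 1)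
    rwa [← Set.range_comp] at this
  have h1 := (Ideal.eq_top_iff_one _).1 hs'
  rw [Ideal.mem_span_range_iff_exists_fun] at h1
  obtain ⟨b, hb⟩ := h1
  refine ⟨∑ k, b k * (a k * h k ^ N), fun m y _ hm => ?_⟩
  have key : (∑ k, b k * (a k * h k ^ N)) * h m ^ (N + 1) = a m * h m ^ N := by
    rw [Finset.sum_mul]
    have : ∀ k, b k * (a k * h k ^ N) * h m ^ (N + 1) = (b k * h k ^ (N + 1)) * (a m * h m ^ N) := by
      intro k
      have := hN k m
      rw [mul_pow] at this
      linear_combination b k * this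
    rw [Finset.sum_congr rfl fun k _ => this k, ← Finset.sum_mul, hb, one_mul]
  rw [pow_succ, ← mul_assoc, mul_right_comm] at key
  have := congr(algebraMap E (Localization.AtPrime y) $key)
  rw [map_mul, map_mul _ (a m)] at this
  exact (isUnit_at y (fun h' => hm (Ideal.IsPrime.mem_of_pow_mem inferInstance _ h'))).mul_right_cancel this

theorem conn_glue {E : Type*} [CommRing E] (I : Ideal E) (hI : I ≤ Ideal.jacobson ⊥) (hconn : Conn I)
    {ι : Type*} [Finite ι] (h a : ι → E) (hs : Ideal.span (Set.range h) = ⊤)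
    (hc : ∀ k m (z : Ideal E) [z.IsPrime], I ≤ z → h k ∉ z → h m ∉ z → 
      algebraMap E (Localization.AtPrime z) (a k * h m) = algebraMap E (Localization.AtPrime z) (a m * h k)) :
    ∃ c, ∀ k (z : Ideal E) [z.IsPrime], I ≤ z → h k ∉ z →
      algebraMap E (Localization.AtPrime z) (c * h k) = algebraMap E (Localization.AtPrime z) (a k) := by
  classical
  cases nonempty_fintype ι
  have hex : ∀ z : Ideal E, z.IsPrime → ∃ k, h k ∉ z := by
    intro z hz
    by_contra! hcon
    refine hz.ne_top (top_le_iff.1 ?_)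
    rw [← hs, Ideal.span_le]
    rintro _ ⟨k, rfl⟩; exact hcon k
  -- transfer to smaller primes
  have htr : ∀ (y z : Ideal E) [y.IsPrime] [z.IsPrime], y ≤ z → ∀ u v : E,
      algebraMap E (Localization.AtPrime z) u = algebraMap E (Localization.AtPrime z) v →
      algebraMap E (Localization.AtPrime y) u = algebraMap E (Localization.AtPrime y) v := by
    intro y z _ _ hyz u v huv
    obtain ⟨t, ht, ht'⟩ := (eqAt_iff _ _ _).1 huv
    exact (eqAt_iff _ _ _).2 ⟨t, fun h' => ht (hyz h'), ht'⟩
  have hcancel : ∀ (y : Ideal E) [y.IsPrime] (k m l : ι), h m ∉ y →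
      algebraMap E (Localization.AtPrime y) (a k * h m) = algebraMap E (Localization.AtPrime y) (a m * h k) →
      algebraMap E (Localization.AtPrime y) (a m * h l) = algebraMap E (Localization.AtPrime y) (a l * h m) →
      algebraMap E (Localization.AtPrime y) (a k * h l) = algebraMap E (Localization.AtPrime y) (a l * h k) := by
    intro y _ k m l hm h1 h2
    apply (isUnit_at y hm).mul_left_cancel
    simp only [map_mul] at h1 h2 ⊢
    linear_combination algebraMap E (Localization.AtPrime y) (h l) * h1 + algebraMap E (Localization.AtPrime y) (h k) * h2
  -- connectivity
  have hcon : ∀ (y z z' : Ideal E) [y.IsPrime] [z.IsPrime] [z'.IsPrime], y ≤ z → y ≤ z' → I ≤ z → I ≤ z' →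
      ∀ k m, h k ∉ z → h m ∉ z' → algebraMap E (Localization.AtPrime y) (a k * h m) =
        algebraMap E (Localization.AtPrime y) (a m * h k) := by
    intro y z z' _ _ _ hyz hyz' hIz hIz' k m hk hm
    let S : Set ι := {l | algebraMap E (Localization.AtPrime y) (a k * h l) =
        algebraMap E (Localization.AtPrime y) (a l * h k)}
    by_contra hmS
    change m ∉ S at hmS
    have hkS : k ∈ S := rfl
    have hsep : ∀ (w : Ideal E) [w.IsPrime], y ≤ w → I ≤ w → ∀ l l', l ∈ S → l' ∉ S → h l ∈ w ∨ h l' ∈ w := by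
      intro w _ hyw hIw l l' hl hl'
      by_contra! hcon
      refine hl' (hcancel y k l l' (fun h' => hcon.1 (hyw h')) hl ?_)
      exact htr y w hyw _ _ (hc l l' w hIw hcon.1 hcon.2)
    obtain ⟨u, hu, v, hv, huv⟩ : ∃ u ∈ Ideal.span (h '' S), ∃ v ∈ Ideal.span (h '' Sᶜ), u + v = 1 := by
      rw [← Submodule.mem_sup, ← Ideal.span_union, ← Set.image_union, Set.union_compl_self,
        Set.image_univ, hs]; trivial
    have hmem : ∀ (w : Ideal E) [w.IsPrime], y ≤ w → I ≤ w → ∀ l ∈ S, h l ∉ w → v ∈ w := by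
      intro w _ hyw hIw l hl hlw
      refine (Ideal.span_le.2 ?_ : Ideal.span (h '' Sᶜ) ≤ w) hv
      rintro _ ⟨l', hl', rfl⟩
      exact (hsep w hyw hIw l l' hl hl').resolve_left hlw
    have hmem' : ∀ (w : Ideal E) [w.IsPrime], y ≤ w → I ≤ w → ∀ l ∉ S, h l ∉ w → u ∈ w := by
      intro w _ hyw hIw l hl hlw
      refine (Ideal.span_le.2 ?_ : Ideal.span (h '' S) ≤ w) hu
      rintro _ ⟨l', hl', rfl⟩
      exact (hsep w hyw hIw l' l hl' hl).resolve_right hlw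
    have huvI : u * v ∈ (I ⊔ y).radical := by
      rw [Ideal.radical_eq_sInf, Ideal.mem_sInf]
      rintro w ⟨hw, hwp⟩
      obtain ⟨l, hl⟩ := hex w hwp
      by_cases hlS : l ∈ S
      · exact w.mul_mem_left _ (hmem w (le_sup_right.trans hw) (le_sup_left.trans hw) l hlS hl)
      · exact w.mul_mem_right _ (hmem' w (le_sup_right.trans hw) (le_sup_left.trans hw) l hlS hl)
    obtain ⟨n, hn⟩ := huvI
    have hco : IsCoprime u v := ⟨1, 1, by rw [one_mul, one_mul, huv]⟩
    obtain ⟨α, β, hαβ⟩ := hco.pow (m := n + 1) (n := n + 1)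
    have he : (α * u ^ (n + 1)) ^ 2 - α * u ^ (n + 1) ∈ I ⊔ y := by
      have : (α * u ^ (n + 1)) ^ 2 - α * u ^ (n + 1) = (- (α * β * u * v)) * (u * v) ^ n := by
        rw [mul_pow u v]
        linear_combination (α * u ^ (n + 1)) * hαβ
      rw [this]
      exact Ideal.mul_mem_left _ _ hn
    rcases hconn y inferInstance _ he with h1 | h1
    · have h2 := h1 z inferInstance hIz hyz
      have h3 := hmem z hyz hIz k hkS hk
      have : (1 : E) ∈ z := by
        rw [← hαβ]
        exact add_mem h2 (z.mul_mem_left _ (z.pow_mem_of_mem h3 _ (Nat.succ_pos _)))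
      exact (Ideal.ne_top_iff_one z).1 (Ideal.IsPrime.ne_top inferInstance) this
    · have h2 := h1 z' inferInstance hIz' hyz'
      have h3 := hmem' z' hyz' hIz' m hmS hm
      have : (1 : E) ∈ z' := by
        have := sub_mem (z'.mul_mem_left α (z'.pow_mem_of_mem h3 _ (Nat.succ_pos n))) h2
        rwa [sub_sub_cancel] at this
      exact (Ideal.ne_top_iff_one z').1 (Ideal.IsPrime.ne_top inferInstance) this
  -- claim
  have claim : ∀ l m (z : Ideal E) [z.IsPrime], I ≤ z → h l ∉ z → ∃ t ∉ z, ∃ s n, s - h m ^ n ∈ I ∧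
      t * s * (a l * h m - a m * h l) = 0 := by
    intro l m z _ hIz hl
    by_contra! hno
    let N : Submonoid E := (Submonoid.powers (Ideal.Quotient.mk I (h m))).comap (Ideal.Quotient.mk I)
    have hdis : Disjoint ((Ideal.span {a l * h m - a m * h l}).annihilator : Set E)
        ((z.primeCompl ⊔ N : Submonoid E) : Set E) := by
      rw [Set.disjoint_left]
      intro x hx hx'
      obtain ⟨t, ht, s, ⟨n, hn⟩, rfl⟩ := Submonoid.mem_sup.1 hx'
      refine hno t ht s n ?_ (Submodule.mem_annihilator_span_singleton _ _ |>.1 hx)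
      rw [← Ideal.Quotient.eq, map_pow]; exact hn.symm
    obtain ⟨y, hy, hyA, hyd⟩ := Ideal.exists_le_prime_disjoint _ _ hdis
    rw [Set.disjoint_left] at hyd
    have hyz : y ≤ z := by
      intro x hx
      by_contra hxz
      exact hyd hx ((le_sup_left : z.primeCompl ≤ z.primeCompl ⊔ N) hxz)
    have hdis' : Disjoint ((y ⊔ I : Ideal E) : Set E) (Submonoid.powers (h m) : Set E) := by
      rw [Set.disjoint_left]
      rintro _ hx ⟨n, rfl⟩
      obtain ⟨p, hp, i, hi, hpi⟩ := Submodule.mem_sup.1 hx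
      refine hyd hp ((le_sup_right : N ≤ z.primeCompl ⊔ N) ⟨n, ?_⟩)
      simp only
      rw [← map_pow, Ideal.Quotient.eq]
      change (fun x => h m ^ x) n - p ∈ I
      rw [← hpi, add_sub_cancel_left]; exact hi
    obtain ⟨z', hz', hle, hz'd⟩ := Ideal.exists_le_prime_disjoint _ _ hdis'
    rw [Set.disjoint_left] at hz'd
    obtain ⟨t, ht, ht'⟩ := (eqAt_iff _ _ _).1 (hcon y z z' hyz (le_sup_left.trans hle) hIz
      (le_sup_right.trans hle) l m hl (fun h' => hz'd h' (Submonoid.mem_powers _)))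
    exact ht (hyA (Submodule.mem_annihilator_span_singleton _ _ |>.2 ht'))
  have hImax : ∀ z : Ideal E, z.IsMaximal → I ≤ z := fun z hz => hI.trans (sInf_le ⟨bot_le, hz⟩)
  -- good pairs
  have good : ∀ z : MaximalSpectrum E, ∃ l, ∃ t, h l * t ∉ z.asIdeal ∧ ∀ (y z' : Ideal E) [y.IsPrime] [z'.IsPrime],
      h l * t ∉ y → y ≤ z' → I ≤ z' → ∀ m, h m ∉ z' → algebraMap E (Localization.AtPrime y) (a l * h m) =
        algebraMap E (Localization.AtPrime y) (a m * h l) := by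
    intro z
    have : z.asIdeal.IsPrime := z.isMaximal.isPrime
    obtain ⟨l, hl⟩ := hex z.asIdeal this
    choose t ht s n hs hts using fun m => claim l m z.asIdeal (hImax _ z.isMaximal) hl
    refine ⟨l, ∏ m, t m, ?_, ?_⟩
    · intro hcon
      rcases this.mem_or_mem hcon with h' | h'
      · exact hl h'
      · obtain ⟨m, -, hm⟩ := this.prod_mem_iff.1 h'
        exact ht m hm
    · intro y z' _ _ hy hyz' hIz' m hm
      refine (eqAt_iff _ _ _).2 ⟨t m * s m, ?_, hts m⟩
      intro hcon
      rcases Ideal.IsPrime.mem_or_mem inferInstance hcon with h' | h'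
      · exact hy (y.mul_mem_left _ (y.mem_of_dvd (Finset.dvd_prod_of_mem _ (Finset.mem_univ m)) h'))
      · have h2 := sub_mem (hyz' h') (hIz' (hs m))
        rw [sub_sub_cancel] at h2
        exact hm (Ideal.IsPrime.mem_of_pow_mem inferInstance _ h2)
  choose L t hLt hL using good
  have hspan : Ideal.span (Set.range fun z => h (L z) * t z) = ⊤ := by
    by_contra hne
    obtain ⟨z, hz, hle⟩ := Ideal.exists_le_maximal _ hne
    exact hLt ⟨z, hz⟩ (hle (Ideal.subset_span ⟨⟨z, hz⟩, rfl⟩))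
  obtain ⟨F, hF, hF1⟩ := Submodule.mem_span_finite_of_mem_span ((Ideal.eq_top_iff_one _).1 hspan)
  choose w hw using fun x : F => hF x.2
  obtain ⟨c, hcc⟩ := glue_basic (ι := F) (fun x => h (L (w x)) * t (w x)) (fun x => a (L (w x)) * t (w x)) (by
    rw [Ideal.eq_top_iff_one]
    refine Ideal.span_mono ?_ hF1
    intro x hx
    exact ⟨⟨x, hx⟩, hw ⟨x, hx⟩⟩) (by
    intro k m y _ hk hm
    obtain ⟨z', hz', hyz'⟩ := Ideal.exists_le_maximal y (Ideal.IsPrime.ne_top inferInstance)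
    have := hz'.isPrime
    obtain ⟨l, hl⟩ := hex z' this
    have h1 := hL (w k) y z' hk hyz' (hImax _ hz') l hl
    have h2 := hL (w m) y z' hm hyz' (hImax _ hz') l hl
    have h3 := hcancel y (L (w k)) l (L (w m)) (fun h' => hl (hyz' h')) h1 h2.symm
    simp only [map_mul] at h3 ⊢
    linear_combination algebraMap E (Localization.AtPrime y) (t (w k)) * algebraMap E (Localization.AtPrime y) (t (w m)) * h3)
  refine ⟨c, fun k z _ hIz hkz => ?_⟩
  obtain ⟨x, hx⟩ : ∃ x : F, h (L (w x)) * t (w x) ∉ z := by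
    by_contra! hall
    refine Ideal.IsPrime.ne_top (I := z) inferInstance ((Ideal.eq_top_iff_one _).2 ?_)
    refine (Ideal.span_le.2 ?_ : Ideal.span (F : Set E) ≤ z) hF1
    intro y hy
    have := hall ⟨y, hy⟩
    have h2 := hw ⟨y, hy⟩
    dsimp only at h2
    rwa [h2] at this
  have h1 := hcc x z hx
  have hl : h (L (w x)) ∉ z := fun h' => hx (z.mul_mem_right _ h')
  have ht : t (w x) ∉ z := fun h' => hx (z.mul_mem_left _ h')
  have h2 := hc (L (w x)) k z hIz hl hkz
  apply (isUnit_at z hl).mul_left_cancel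
  apply (isUnit_at z ht).mul_left_cancel
  simp only [map_mul] at h1 h2 ⊢
  linear_combination algebraMap E (Localization.AtPrime z) (h k) * h1 + algebraMap E (Localization.AtPrime z) (t (w x)) * h2

end HF
end

section
set_option linter.style.haveILetI false
open Polynomial TensorProduct
namespace HF

theorem spread {C E Q : Type u} [CommRing C] [CommRing E] [CommRing Q] (j : C →+* E) (q : C →+* Q)
    (hq : q.FinitePresentation) (z : Ideal E) [z.IsPrime] (ψ : Q →+* Localization.AtPrime z)
    (hψ : ψ.comp q = (algebraMap E _).comp j) (x : Q) : ∃ h ∉ z, ∃ a : E, ∀ (z' : Ideal E) [z'.IsPrime],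
      h ∉ z' → ∃ ψ' : Q →+* Localization.AtPrime z', ψ'.comp q = (algebraMap E _).comp j ∧
        ψ' x * algebraMap E _ h = algebraMap E _ a := by
  classical
  letI := q.toAlgebra
  letI := j.toAlgebra
  obtain ⟨n, f, hf, S, hS⟩ : Algebra.FinitePresentation C Q := hq
  obtain ⟨⟨h0, hh0⟩, hb⟩ := IsLocalization.exist_integer_multiples_of_finite z.primeCompl
    (fun k => ψ (f (MvPolynomial.X k)))
  choose a ha using hb
  have hh1 : h0 ∉ z := hh0
  let G : MvPolynomial (Fin n) C →ₐ[C] Localization.Away h0 :=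
    MvPolynomial.aeval fun k => IsLocalization.mk' _ (a k) (⟨h0, Submonoid.mem_powers h0⟩ : Submonoid.powers h0)
  let lam : ∀ (z' : Ideal E) [z'.IsPrime], h0 ∉ z' → (Localization.Away h0 →+* Localization.AtPrime z') :=
    fun z' _ hz' => IsLocalization.Away.lift h0 (isUnit_at z' hz')
  have hlam : ∀ (z' : Ideal E) [z'.IsPrime] (hz' : h0 ∉ z') (e : E),
      lam z' hz' (algebraMap E _ e) = algebraMap E _ e := fun z' _ hz' e => IsLocalization.Away.lift_eq h0 _ e
  have hG0 : ∀ (z' : Ideal E) [z'.IsPrime] (hz' : h0 ∉ z') (c : C),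
      lam z' hz' (G (MvPolynomial.C c)) = algebraMap E _ (j c) := by
    intro z' _ hz' c
    rw [← hlam z' hz']
    congr 1
    exact MvPolynomial.aeval_C _ _
  have hG : (lam z hh1).comp G.toRingHom = ψ.comp f.toRingHom := by
    apply MvPolynomial.ringHom_ext
    · intro c
      have h1 : f (MvPolynomial.C c) = q c := MvPolynomial.algHom_C f c
      change lam z hh1 (G (MvPolynomial.C c)) = ψ (f (MvPolynomial.C c))
      rw [hG0 z hh1 c, h1]
      exact congr($hψ.symm c)
    · intro k
      change lam z hh1 (G (MvPolynomial.X k)) = ψ (f (MvPolynomial.X k))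
      apply (isUnit_at z hh1).mul_right_cancel
      have h2 := ha k
      rw [Algebra.smul_def] at h2
      rw [mul_comm (ψ _)]
      refine Eq.trans ?_ h2
      rw [← hlam z hh1, ← map_mul, ← hlam z hh1 (a k)]
      congr 1
      simp only [G, MvPolynomial.aeval_X]
      exact IsLocalization.mk'_spec _ _ _
  have hr : ∀ r : S, ∃ m ∉ z, ∀ (z' : Ideal E) [z'.IsPrime] (hz' : h0 ∉ z'), m ∉ z' → lam z' hz' (G r) = 0 := by
    intro r
    obtain ⟨k, b, hb⟩ := IsLocalization.Away.surj h0 (G r)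
    have h1 : lam z hh1 (G r) = 0 := by
      have h2 : f r = 0 := by
        have : (r : MvPolynomial (Fin n) C) ∈ RingHom.ker f.toRingHom := by
          rw [← hS]; exact Ideal.subset_span r.2
        exact this
      have := congr($hG r)
      refine this.trans ?_
      change ψ (f r) = 0
      rw [h2, map_zero]
    have h2 := congr(lam z hh1 $hb)
    rw [map_mul, h1, zero_mul, hlam z hh1 b, ← map_zero (algebraMap E _)] at h2
    obtain ⟨m, hm, hmb⟩ := (eqAt_iff _ _ _).1 h2.symm
    refine ⟨m, hm, fun z' _ hz' hmz' => ?_⟩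
    have h3 : algebraMap E (Localization.AtPrime z') b = algebraMap E _ 0 := (eqAt_iff _ _ _).2 ⟨m, hmz', hmb⟩
    have h4 := congr(lam z' hz' $hb)
    rw [hlam z' hz' b, h3, map_mul, map_pow, hlam z' hz' h0] at h4
    rw [map_zero] at h4
    exact ((isUnit_at z' hz').pow k).mul_left_eq_zero.1 h4
  choose m hm hm' using hr
  obtain ⟨P, rfl⟩ := hf x
  obtain ⟨k, b, hb⟩ := IsLocalization.Away.surj h0 (G P)
  refine ⟨h0 ^ (k + 1) * ∏ r, m r, ?_, b * h0 * ∏ r, m r, ?_⟩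
  · intro hcon
    rcases Ideal.IsPrime.mem_or_mem inferInstance hcon with h' | h'
    · exact hh1 (Ideal.IsPrime.mem_of_pow_mem inferInstance _ h')
    · obtain ⟨r, -, hr⟩ := (Ideal.IsPrime.prod_mem_iff (p := z)).1 h'
      exact hm r hr
  · intro z' _ hz'
    have hz0 : h0 ∉ z' := fun h' => hz' (z'.mul_mem_right _ (z'.pow_mem_of_mem h' _ (Nat.succ_pos k)))
    have hzm : ∀ r, m r ∉ z' := fun r h' =>
      hz' (z'.mul_mem_left _ (z'.mem_of_dvd (Finset.dvd_prod_of_mem _ (Finset.mem_univ r)) h'))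
    have hker : RingHom.ker f.toRingHom ≤ RingHom.ker ((lam z' hz0).comp G.toRingHom) := by
      rw [← hS, Ideal.span_le]
      intro r hr
      exact hm' ⟨r, hr⟩ z' hz0 (hzm _)
    let ψ' := RingHom.liftOfSurjective f.toRingHom hf ⟨(lam z' hz0).comp G.toRingHom, hker⟩
    have hψ' : ∀ p, ψ' (f p) = lam z' hz0 (G p) := fun p =>
      RingHom.liftOfRightInverse_comp_apply f.toRingHom _ (Function.rightInverse_surjInv hf) ⟨(lam z' hz0).comp G.toRingHom, hker⟩ p
    refine ⟨ψ', ?_, ?_⟩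
    · ext c
      have h1 : f (MvPolynomial.C c) = q c := MvPolynomial.algHom_C f c
      change ψ' (q c) = algebraMap E _ (j c)
      rw [← h1, hψ', hG0 z' hz0 c]
    · rw [hψ']
      have h4 := congr(lam z' hz0 $hb)
      rw [hlam z' hz0 b, map_mul, map_pow, hlam z' hz0 h0] at h4
      simp only [map_mul, map_pow]
      rw [← h4]; ring

theorem exists_mem_of_ann {Q Y : Type u} [CommRing Q] [CommRing Y] [Algebra Q Y] [Algebra.IsIntegral Q Y]
    (J : Ideal Q) (d : Y)
    (h : ∀ (p : Ideal Y) [p.IsPrime], J.map (algebraMap Q Y) ≤ p → ∃ t ∉ p, t * d = 0) :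
    ∃ e : Q, e - 1 ∈ J ∧ algebraMap Q Y e * d = 0 := by
  let N : Ideal Y := (Ideal.span {d}).annihilator
  have hN : ∀ t, t ∈ N ↔ t * d = 0 := fun t => Submodule.mem_annihilator_span_singleton _ _
  have : N.comap (algebraMap Q Y) ⊔ J = ⊤ := by
    by_contra hne
    obtain ⟨m, hm, hle⟩ := Ideal.exists_le_maximal _ hne
    have := hm.isPrime
    obtain ⟨p, hp1, hp2, hp3⟩ := Ideal.exists_ideal_over_prime_of_isIntegral m N (le_sup_left.trans hle)
    obtain ⟨t, ht, ht'⟩ := h p (by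
      rw [Ideal.map_le_iff_le_comap, hp3]; exact le_sup_right.trans hle)
    exact ht (hp1 ((hN t).2 ht'))
  obtain ⟨e, he, i, hi, hei⟩ := Submodule.mem_sup.1 ((Ideal.eq_top_iff_one _).1 this)
  refine ⟨e, ?_, (hN _).1 he⟩
  rw [← hei, sub_add_cancel_left]; exact neg_mem hi

theorem descend_flat {C E Q : Type u} [CommRing C] [CommRing E] [CommRing Q] [Algebra C E] [Algebra C Q]
    [Module.Flat C Q] (hj : Function.Injective (algebraMap C E)) (e x : Q) (c : E)
    (h : e ⊗ₜ[C] c = (e * x) ⊗ₜ[C] (1 : E)) :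
    (∀ N : Ideal C, (∀ a b, algebraMap C E a * c = algebraMap C E b → a ∈ N) → e ∈ N.map (algebraMap C Q)) ∧
    ∀ c₀, algebraMap C E c₀ = c → e * (algebraMap C Q c₀ - x) = 0 := by
  constructor
  · intro N hN
    let W : Submodule C E := LinearMap.range (Algebra.linearMap C E)
    let L : C →ₗ[C] E ⧸ W := LinearMap.toSpanSingleton C _ (W.mkQ c)
    have hL : LinearMap.ker L ≤ N := by
      intro a ha
      rw [LinearMap.mem_ker, LinearMap.toSpanSingleton_apply, ← map_smul, Submodule.mkQ_apply,
        Submodule.Quotient.mk_eq_zero] at ha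
      obtain ⟨b, hb⟩ := ha
      exact hN a b (by rw [← Algebra.smul_def]; exact hb.symm)
    let L' : (C ⧸ LinearMap.ker L) →ₗ[C] E ⧸ W := (LinearMap.ker L).liftQ L le_rfl
    have hL' : Function.Injective L' := by
      rw [← LinearMap.ker_eq_bot]
      exact Submodule.ker_liftQ_eq_bot _ _ _ le_rfl
    have hinj := Module.Flat.lTensor_preserves_injective_linearMap (M := Q) L' hL'
    have h0 : e ⊗ₜ[C] (Submodule.Quotient.mk 1 : C ⧸ LinearMap.ker L) = 0 := by
      apply hinj
      rw [LinearMap.lTensor_tmul, map_zero]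
      have h1 := congr((W.mkQ).lTensor Q $h)
      rw [LinearMap.lTensor_tmul, LinearMap.lTensor_tmul] at h1
      have h2 : W.mkQ (1 : E) = 0 := by
        rw [Submodule.mkQ_apply, Submodule.Quotient.mk_eq_zero]
        exact ⟨1, by simp⟩
      rw [h2, tmul_zero] at h1
      have h3 : L' (Submodule.Quotient.mk 1) = W.mkQ c := by
        change L 1 = _
        simp [L]
      rw [h3]; exact h1
    have h4 := congr(TensorProduct.tensorQuotEquivQuotSMul Q (LinearMap.ker L : Ideal C) $h0)
    rw [map_zero] at h4
    have h5 := TensorProduct.tensorQuotEquivQuotSMul_tmul_mk (M := Q) (LinearMap.ker L : Ideal C) e 1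
    have h6 : (Submodule.Quotient.mk ((1 : C) • e) : Q ⧸ ((LinearMap.ker L : Ideal C) • (⊤ : Submodule C Q))) = 0 := by
      rw [← h4]; exact h5.symm
    rw [one_smul, Submodule.Quotient.mk_eq_zero, Ideal.smul_top_eq_map] at h6
    exact Ideal.map_mono hL h6
  · rintro c₀ rfl
    have h1 : (e * (algebraMap C Q c₀ - x)) ⊗ₜ[C] (1 : E) = 0 := by
      rw [mul_sub, sub_tmul, ← h, sub_eq_zero, mul_comm, ← Algebra.smul_def, smul_tmul, Algebra.smul_def, mul_one]
    have hinj := Module.Flat.lTensor_preserves_injective_linearMap (M := Q) (Algebra.linearMap C E) hj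
    have h2 : (e * (algebraMap C Q c₀ - x)) ⊗ₜ[C] (1 : C) = 0 := by
      apply hinj
      rw [LinearMap.lTensor_tmul, map_zero, Algebra.linearMap_apply, map_one, h1]
    have h3 := congr(TensorProduct.rid C Q $h2)
    simpa using h3

theorem descend {C E Q : Type u} [CommRing C] [CommRing E] [CommRing Q] (I : Ideal C)
    (g : C) (j : C →+* E)
    (hj : Function.Injective j) (hint : j.IsIntegral) (hE : MonicRoots E) (q : C →+* Q) (hq : Nb I g q)
    (x : Q) (c : E)
    (hc : ∀ (z : Ideal E) [z.IsPrime] (ψ : Q →+* Localization.AtPrime z), I.map j ≤ z → 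
       ψ.comp q = (algebraMap E _).comp j → ψ x = algebraMap E _ c) :
    ∃ e : Q, e - 1 ∈ I.map q ∧ (∀ N : Ideal C, (∀ a b, j a * c = j b → a ∈ N) → e ∈ N.map q) ∧
      ∀ c₀, j c₀ = c → e * (q c₀ - x) = 0 := by
  letI := j.toAlgebra
  letI := q.toAlgebra
  have et : Algebra.Etale C Q := hq.et
  have : Algebra.IsIntegral C E := ⟨hint⟩
  let iE : E →+* Q ⊗[C] E := (Algebra.TensorProduct.includeRight (R := C) (A := Q) (B := E)).toRingHom
  let iQ : Q →+* Q ⊗[C] E := algebraMap Q (Q ⊗[C] E)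
  have hcomm : iE.comp j = iQ.comp q := by
    ext a
    exact (Algebra.TensorProduct.includeRight (R := C) (A := Q) (B := E)).commutes a
  obtain ⟨e, he, hed⟩ := exists_mem_of_ann (Q := Q) (Y := Q ⊗[C] E) (I.map q) (iE c - iQ x) (by
    intro p _ hp
    let z : Ideal E := p.comap iE
    have hIz : I.map j ≤ z := by
      rw [Ideal.map_le_iff_le_comap, Ideal.comap_comap, hcomm, ← Ideal.map_le_iff_le_comap, ← Ideal.map_map]
      exact hp
    have hIm : I.map ((algebraMap E (Localization.AtPrime z)).comp j) ≤ IsLocalRing.maximalIdeal _ := by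
      rw [← Ideal.map_map, Ideal.map_le_iff_le_comap]
      intro a ha
      exact (IsLocalization.AtPrime.to_map_mem_maximal_iff (Localization.AtPrime z) z a).2 (hIz ha)
    have hgz : j g ∉ z := by
      intro hg
      have h1 : IsUnit (iE (j g)) := by
        have : iE (j g) = iQ (q g) := congr($hcomm g)
        rw [this]; exact hq.le.1.map iQ
      exact Ideal.IsPrime.ne_top (I := p) inferInstance (Ideal.eq_top_of_isUnit_mem _ hg h1)
    obtain ⟨ψ, hψ, -⟩ := hq.le.2 _ _ (hE.atPrime z) ((algebraMap E (Localization.AtPrime z)).comp j) hIm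
      (isUnit_at z hgz)
    let loc : Localization.AtPrime z →+* Localization.AtPrime p := Localization.localRingHom z p iE rfl
    have hloc : loc.comp (algebraMap E _) = (algebraMap (Q ⊗[C] E) _).comp iE := by
      ext e; exact Localization.localRingHom_to_map z p iE rfl e
    let a : Q →+* Localization.AtPrime p := (algebraMap (Q ⊗[C] E) _).comp iQ
    let b : Q →+* Localization.AtPrime p := loc.comp ψ
    have hab : a.comp q = b.comp q := by
      ext y
      change algebraMap _ _ (iQ (q y)) = loc (ψ (q y))
      rw [show ψ (q y) = algebraMap _ _ (j y) from congr($hψ y)]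
      exact (congr(algebraMap _ (Localization.AtPrime p) ($hcomm y))).symm.trans (congr($hloc (j y))).symm
    obtain ⟨τ, h1, h2⟩ := exists_tau hq.et a b hab
    have hτ : IsUnit τ := by
      have h3 := h2 (IsLocalRing.ResidueField (Localization.AtPrime p)) (IsLocalRing.residue _) (by
        refine hq.le.hom_ext (J := ⊥) henselian_bot ?_ ?_
        · exact congr((IsLocalRing.residue (Localization.AtPrime p)).comp $hab)
        · rw [Ideal.map_le_iff_le_comap]
          intro i hi
          change IsLocalRing.residue _ (algebraMap (Q ⊗[C] E) _ (iQ (q i))) = 0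
          rw [IsLocalRing.residue_eq_zero_iff]
          exact (IsLocalization.AtPrime.to_map_mem_maximal_iff (Localization.AtPrime p) p _).2
            (hp (Ideal.mem_map_of_mem _ (Ideal.mem_map_of_mem _ hi))))
      by_contra hcon
      have h4 : τ ∈ IsLocalRing.maximalIdeal _ := hcon
      rw [← IsLocalRing.residue_eq_zero_iff, h3] at h4
      exact one_ne_zero h4
    have h3 := hτ.mul_left_eq_zero.1 (h1 x)
    have h4 : b x = algebraMap _ _ (iE c) := by
      change loc (ψ x) = _
      rw [hc z ψ hIz hψ]
      exact congr($hloc c)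
    rw [sub_eq_zero, h4] at h3
    exact (eqAt_iff p _ _).1 h3.symm)
  refine ⟨e, he, descend_flat (C := C) (E := E) (Q := Q) hj e x c ?_⟩
  rw [mul_sub, sub_eq_zero] at hed
  simpa [iE, iQ] using hed

theorem gluing {C : Type u} [CommRing C] {I : Ideal C} [hC : HenselianRing C I]
    {n : ℕ} {g : Fin n → C} (hg : Ideal.span (Set.range g) = ⊤) {H : Fin n → Type u}
    [∀ i, CommRing (H i)] {ρ : ∀ i, C →+* H i} (hρ : ∀ i, HensAway I (g i) (ρ i)) (c : ∀ i, H i)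
    (hcompat : ∀ i j (T : Type u) [CommRing T] (J : Ideal T), HenselianRing T J → ∀ (u : H i →+* T)
      (v : H j →+* T), u.comp (ρ i) = v.comp (ρ j) → I.map (u.comp (ρ i)) ≤ J → u (c i) = v (c j)) :
    ∃ x : C, ∀ i, ρ i x = c i := by
  classical
  obtain ⟨E, _, j, hj, hint, hE⟩ := exists_hat C
  have hE : MonicRoots E := hE
  choose Q instQ q φ hq hφ x hx using fun i => (hρ i).rep (c i)
  have hIJ : I.map j ≤ Ideal.jacobson ⊥ := by
    rw [Ideal.jacobson, le_sInf_iff]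
    rintro m ⟨-, hm⟩
    letI := j.toAlgebra
    have : Algebra.IsIntegral C E := ⟨hint⟩
    have h1 : (m.comap (algebraMap C E)).IsMaximal := Ideal.isMaximal_comap_of_isIntegral_of_isMaximal m
    rw [Ideal.map_le_iff_le_comap]
    exact hC.jac.trans (sInf_le ⟨bot_le, h1⟩)
  have hIm : ∀ (z : Ideal E) [z.IsPrime], I.map j ≤ z →
      I.map ((algebraMap E (Localization.AtPrime z)).comp j) ≤ IsLocalRing.maximalIdeal _ := by
    intro z _ hIz
    rw [← Ideal.map_map, Ideal.map_le_iff_le_comap]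
    intro a ha
    exact (IsLocalization.AtPrime.to_map_mem_maximal_iff (Localization.AtPrime z) z a).2 (hIz ha)
  have hgz : ∀ (z : Ideal E), z.IsPrime → ∃ i, j (g i) ∉ z := by
    intro z hz
    by_contra! hcon
    refine hz.ne_top ((Ideal.eq_top_iff_one _).2 ?_)
    have h1 : (1 : C) ∈ Ideal.span (Set.range g) := by rw [hg]; trivial
    have h2 : Ideal.span (Set.range g) ≤ z.comap j := by
      rw [Ideal.span_le]; rintro _ ⟨i, rfl⟩; exact hcon i
    have := h2 h1
    rwa [Ideal.mem_comap, map_one] at this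
  have hu : ∀ (z : Ideal E) [z.IsPrime], I.map j ≤ z → ∀ i, j (g i) ∉ z →
      ∃ u : H i →+* Localization.AtPrime z, u.comp (ρ i) = (algebraMap E _).comp j := by
    intro z _ hIz i hi
    obtain ⟨u, hu, -⟩ := (hρ i).2.2 _ _ (hE.atPrime z) ((algebraMap E (Localization.AtPrime z)).comp j)
      (hIm z hIz) (isUnit_at z hi)
    exact ⟨u, hu⟩
  have hψu : ∀ (z : Ideal E) [z.IsPrime], I.map j ≤ z → ∀ i (ψ : Q i →+* Localization.AtPrime z),
      ψ.comp (q i) = (algebraMap E _).comp j → ∀ k (u : H k →+* Localization.AtPrime z),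
      u.comp (ρ k) = (algebraMap E _).comp j → ψ (x i) = u (c k) := by
    intro z _ hIz i ψ hψ k u hu'
    have hi : j (g i) ∉ z := by
      intro hcon
      have h1 : IsUnit (algebraMap E (Localization.AtPrime z) (j (g i))) := by
        have : algebraMap E (Localization.AtPrime z) (j (g i)) = ψ (q i (g i)) := congr($hψ.symm (g i))
        rw [this]; exact (hq i).le.1.map ψ
      rw [IsLocalization.AtPrime.isUnit_to_map_iff _ z] at h1
      exact h1 hcon
    obtain ⟨u', hu''⟩ := hu z hIz i hi
    have h1 : u'.comp (φ i) = ψ := by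
      refine (hq i).le.hom_ext (hE.atPrime z) ?_ ?_
      · rw [RingHom.comp_assoc, hφ, hu'', hψ]
      · rw [RingHom.comp_assoc, hφ, hu'']; exact hIm z hIz
    rw [← h1, RingHom.comp_apply, hx]
    exact hcompat i k _ _ (hE.atPrime z) u' u (by rw [hu'', hu']) (by rw [hu'']; exact hIm z hIz)
  -- local fractions
  have hlocal : ∀ z : MaximalSpectrum E, ∃ h ∉ z.asIdeal, ∃ a : E, ∀ (z' : Ideal E) [z'.IsPrime], I.map j ≤ z' →
      h ∉ z' → ∀ k (u : H k →+* Localization.AtPrime z'), u.comp (ρ k) = (algebraMap E _).comp j →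
        u (c k) * algebraMap E _ h = algebraMap E _ a := by
    intro z
    have hz := z.isMaximal.isPrime
    have hIz : I.map j ≤ z.asIdeal := hIJ.trans (sInf_le ⟨bot_le, z.isMaximal⟩)
    obtain ⟨i, hi⟩ := hgz z.asIdeal hz
    obtain ⟨u, hu'⟩ := hu z.asIdeal hIz i hi
    have hfp : (q i).FinitePresentation := by
      letI := (q i).toAlgebra
      have et : Algebra.Etale C (Q i) := (hq i).et
      exact (inferInstance : Algebra.FinitePresentation C (Q i))
    obtain ⟨h, hh, a, ha⟩ := spread j (q i) hfp z.asIdeal (u.comp (φ i))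
      (by rw [RingHom.comp_assoc, hφ, hu']) (x i)
    refine ⟨h, hh, a, fun z' _ hIz' hz' k v hv => ?_⟩
    obtain ⟨ψ', h1, h2⟩ := ha z' hz'
    rw [← hψu z' hIz' i ψ' h1 k v hv, h2]
  choose h hh a ha using hlocal
  have hspan : Ideal.span (Set.range h) = ⊤ := by
    by_contra hne
    obtain ⟨z, hz, hle⟩ := Ideal.exists_le_maximal _ hne
    exact hh ⟨z, hz⟩ (hle (Ideal.subset_span ⟨⟨z, hz⟩, rfl⟩))
  obtain ⟨F, hF, hF1⟩ := Submodule.mem_span_finite_of_mem_span ((Ideal.eq_top_iff_one _).1 hspan)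
  choose w hw using fun x : F => hF x.2
  have hspanF : Ideal.span (Set.range fun y : F => h (w y)) = ⊤ := by
    rw [Ideal.eq_top_iff_one]
    refine Ideal.span_mono ?_ hF1
    intro y hy
    exact ⟨⟨y, hy⟩, hw ⟨y, hy⟩⟩
  obtain ⟨cb, hcb⟩ := conn_glue (I.map j) hIJ (conn_of_integral j hint I hE) (ι := F) (fun y => h (w y))
    (fun y => a (w y)) hspanF (by
    intro k m z _ hIz hk hm
    obtain ⟨i, hi⟩ := hgz z inferInstance
    obtain ⟨u, hu'⟩ := hu z hIz i hi
    have h1 := ha (w k) z hIz hk i u hu'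
    have h2 := ha (w m) z hIz hm i u hu'
    rw [map_mul, map_mul, ← h1, ← h2]; ring)
  have hcbar : ∀ (z : Ideal E) [z.IsPrime], I.map j ≤ z → ∀ k (u : H k →+* Localization.AtPrime z),
      u.comp (ρ k) = (algebraMap E _).comp j → u (c k) = algebraMap E _ cb := by
    intro z _ hIz k u hu'
    obtain ⟨y, hy⟩ : ∃ y : F, h (w y) ∉ z := by
      by_contra! hall
      refine Ideal.IsPrime.ne_top (I := z) inferInstance (top_le_iff.1 ?_)
      rw [← hspanF, Ideal.span_le]
      rintro _ ⟨y, rfl⟩; exact hall y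
    apply (isUnit_at z hy).mul_right_cancel
    rw [ha (w y) z hIz hy k u hu', ← hcb y z hIz hy, map_mul]
  have hdes := fun i => descend I (g i) j hj hint hE (q i) (hq i) (x i) cb (by
    intro z _ ψ hIz hψ
    obtain ⟨k, hk⟩ := hgz z inferInstance
    obtain ⟨u, hu'⟩ := hu z hIz k hk
    rw [hψu z hIz i ψ hψ k u hu', hcbar z hIz k u hu'])
  choose e he1 he2 he3 using hdes
  let N : Ideal C := 
    { carrier := {a | ∃ b, j a * cb = j b}
      add_mem' := by
        rintro a a' ⟨b, hb⟩ ⟨b', hb'⟩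
        exact ⟨b + b', by rw [map_add, map_add, add_mul, hb, hb']⟩
      zero_mem' := ⟨0, by simp⟩
      smul_mem' := by
        rintro r a ⟨b, hb⟩
        exact ⟨r * b, by rw [smul_eq_mul, map_mul, map_mul, mul_assoc, hb]⟩ }
  have hN : N = ⊤ := by
    by_contra hne
    obtain ⟨m, hm, hle⟩ := Ideal.exists_le_maximal _ hne
    have hIm' : I ≤ m := hC.jac.trans (sInf_le ⟨bot_le, hm⟩)
    have hmp := hm.isPrime
    obtain ⟨i, hi⟩ : ∃ i, g i ∉ m := by
      by_contra! hcon
      refine hmp.ne_top (top_le_iff.1 ?_)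
      rw [← hg, Ideal.span_le]; rintro _ ⟨i, rfl⟩; exact hcon i
    obtain ⟨K, _, θ, hθ⟩ := (hq i).le.exists_field m hIm' hi
    have hθ' : ∀ a : Ideal C, a ≤ m → ∀ y ∈ a.map (q i), θ y = 0 := by
      intro a ha y hy
      have : a.map (q i) ≤ RingHom.ker θ := by
        rw [Ideal.map_le_iff_le_comap]
        intro b hb
        have := ha hb
        rw [← hθ] at this
        exact this
      exact this hy
    have h1 := hθ' I hIm' _ (he1 i)
    have h2 := hθ' N hle _ (he2 i N (fun a b hab => ⟨b, hab⟩))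
    rw [map_sub, h2, map_one, zero_sub, neg_eq_zero] at h1
    exact one_ne_zero h1
  obtain ⟨b, hb⟩ : (1 : C) ∈ N := by rw [hN]; trivial
  rw [map_one, one_mul] at hb
  refine ⟨b, fun i => ?_⟩
  have h1 := congr(φ i $(he3 i b hb.symm))
  have h2 : φ i (q i b) = ρ i b := congr($(hφ i) b)
  rw [map_mul, map_zero, map_sub, hx, h2] at h1
  have h3 : IsUnit (φ i (e i)) := by
    have := (hρ i).1
    apply isUnit_of_sub_mem (I.map (ρ i))
    have h4 : Ideal.Quotient.mk (I.map (ρ i)) (φ i (e i)) = 1 := by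
      rw [← map_one (Ideal.Quotient.mk _), Ideal.Quotient.eq, ← map_one (φ i), ← map_sub, ← hφ i, ← Ideal.map_map]
      exact Ideal.mem_map_of_mem _ (he1 i)
    rw [h4]; exact isUnit_one
  exact sub_eq_zero.1 (h3.mul_right_eq_zero.1 h1)

end HF
end

section
set_option linter.style.haveILetI false
open Polynomial TensorProduct
namespace HF

theorem fg_mem {P H : Type u} [CommRing P] [CommRing H] (h : P →+* H) (𝔨 : Ideal P) {ι : Type*} [Finite ι]
    (x : ι → H) (hx : ∀ i, x i ∈ 𝔨.map h) : ∃ 𝔩 ≤ 𝔨, 𝔩.FG ∧ ∀ i, x i ∈ 𝔩.map h := by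
  classical
  have key : ∀ i, ∃ 𝔩 ≤ 𝔨, 𝔩.FG ∧ x i ∈ 𝔩.map h := by
    intro i
    obtain ⟨F, hF, hF1⟩ := Submodule.mem_span_finite_of_mem_span (hx i)
    choose w hw hw' using fun y : F => hF y.2
    refine ⟨Ideal.span (Set.range w), ?_, ?_, ?_⟩
    · rw [Ideal.span_le]; rintro _ ⟨y, rfl⟩; exact hw y
    · exact Submodule.fg_span (Set.finite_range w)
    · refine Ideal.span_le.2 ?_ hF1
      intro y hy
      have hyy : h (w ⟨y, hy⟩) = y := hw' ⟨y, hy⟩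
      rw [← hyy]
      exact Ideal.mem_map_of_mem _ (Ideal.subset_span ⟨_, rfl⟩)
  choose L h1 h2 h3 using key
  exact ⟨⨆ i, L i, iSup_le h1, Submodule.fg_iSup _ h2, fun i => Ideal.map_mono (le_iSup L i) (h3 i)⟩

theorem map_eq_of {A P T : Type u} [CommRing A] [CommRing P] [CommRing T] {I : Ideal A} {α : A →+* P}
    {f d : P →+* T} (h : f.comp α = d.comp α) : (I.map α).map f = (I.map α).map d := by
  rw [Ideal.map_map, Ideal.map_map, h]

theorem exists_theta {P H B B' : Type u} [CommRing P] [CommRing H] [CommRing B] [CommRing B']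
    {K : Ideal P} {g : P} {h : P →+* H} (hh : HensAway K g h) {ev : P →+* B} (hev : Function.Surjective ev)
    {β : B →+* B'} (hβ : HensAway (K.map ev) (ev g) β) :
    ∃ θ : H →+* B', θ.comp h = β.comp ev ∧ Function.Surjective θ ∧ RingHom.ker θ = (RingHom.ker ev).map h := by
  obtain ⟨θ, hθ, -⟩ := hh.2.2 B' _ hβ.1 (β.comp ev) (by rw [← Ideal.map_map]) hβ.2.1
  have := hh.1
  have hD := henselian_quotient (K.map h) ((RingHom.ker ev).map h)
  let mk := Ideal.Quotient.mk ((RingHom.ker ev).map h)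
  have hker : RingHom.ker ev ≤ RingHom.ker (mk.comp h) := by
    intro x hx
    exact Ideal.Quotient.eq_zero_iff_mem.2 (Ideal.mem_map_of_mem _ hx)
  let l : B →+* H ⧸ (RingHom.ker ev).map h := RingHom.liftOfSurjective ev hev ⟨mk.comp h, hker⟩
  have hl : l.comp ev = mk.comp h := by
    ext x
    exact RingHom.liftOfRightInverse_comp_apply ev _ (Function.rightInverse_surjInv hev) ⟨mk.comp h, hker⟩ x
  have hKl : (K.map ev).map l ≤ (K.map h).map mk := by rw [Ideal.map_map, hl, Ideal.map_map]
  obtain ⟨η, hη, -⟩ := hβ.2.2 _ _ hD l hKl (by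
    change IsUnit ((l.comp ev) g)
    rw [hl]; exact hh.2.1.map mk)
  have h1 : η.comp θ = mk := by
    refine hh.2.hom_ext hD ?_ ?_
    · rw [RingHom.comp_assoc, hθ, ← RingHom.comp_assoc, hη, hl]
    · rw [RingHom.comp_assoc, hθ, ← RingHom.comp_assoc, hη, ← Ideal.map_map]; exact hKl
  have hk : (RingHom.ker ev).map h ≤ RingHom.ker θ := by
    rw [Ideal.map_le_iff_le_comap]
    intro x hx
    change (θ.comp h) x = 0
    rw [hθ, RingHom.comp_apply, show ev x = 0 from hx, map_zero]
  have h2 : (Ideal.Quotient.lift _ θ hk).comp η = RingHom.id B' := by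
    refine hβ.2.hom_ext hβ.1 ?_ ?_
    · rw [RingHom.comp_assoc, hη]
      ext b
      obtain ⟨x, rfl⟩ := hev b
      change Ideal.Quotient.lift _ θ hk ((l.comp ev) x) = β (ev x)
      rw [hl]
      exact congr($hθ x)
    · rw [RingHom.comp_assoc, hη, ← Ideal.map_map]
      refine (Ideal.map_mono hKl).trans ?_
      rw [Ideal.map_map, Ideal.map_map]
      have : (((Ideal.Quotient.lift _ θ hk).comp mk).comp h) = β.comp ev := hθ
      rw [this, Ideal.map_map]
  refine ⟨θ, hθ, ?_, le_antisymm ?_ hk⟩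
  · intro b
    obtain ⟨y, hy⟩ := Ideal.Quotient.mk_surjective (η b)
    refine ⟨y, ?_⟩
    have := congr($h2 b)
    rw [RingHom.comp_apply, ← hy] at this
    exact this
  · intro x hx
    have h3 := congr($h1 x)
    rw [RingHom.comp_apply, show θ x = 0 from hx, map_zero] at h3
    exact Ideal.Quotient.eq_zero_iff_mem.1 h3.symm

structure Tau {A P H B' : Type u} [CommRing A] [CommRing P] [CommRing H] [CommRing B'] (α : A →+* P)
    (h : P →+* H) (θ : H →+* B') (𝔩 : Ideal P) (τ : B' →+* H ⧸ 𝔩.map h) (Y : Finset H) : Prop where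
  sec : ∀ x y, τ x = Ideal.Quotient.mk _ y → θ y = x
  alg : ∀ a, τ (θ (h (α a))) = Ideal.Quotient.mk _ (h (α a))
  det : ∀ ω : H ⧸ 𝔩.map h →+* B', (∀ a, ω (Ideal.Quotient.mk _ (h (α a))) = θ (h (α a))) →
    (∀ y ∈ Y, ω (Ideal.Quotient.mk _ y) = θ y) → ∀ x, ω (τ x) = x

theorem Tau.mono {A P H B' : Type u} [CommRing A] [CommRing P] [CommRing H] [CommRing B'] {α : A →+* P}
    {h : P →+* H} {θ : H →+* B'} {𝔩 𝔩' : Ideal P} {τ : B' →+* H ⧸ 𝔩.map h} {Y : Finset H}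
    (ht : Tau α h θ 𝔩 τ Y) (hle : 𝔩 ≤ 𝔩') (hk : 𝔩'.map h ≤ RingHom.ker θ) :
    Tau α h θ 𝔩' ((Ideal.Quotient.factor (Ideal.map_mono hle)).comp τ) Y where
  sec x y hxy := by
    obtain ⟨w, hw⟩ := Ideal.Quotient.mk_surjective (τ x)
    have h1 := ht.sec x w hw.symm
    rw [RingHom.comp_apply, ← hw, Ideal.Quotient.factor_mk, Ideal.Quotient.eq] at hxy
    have h2 : θ (w - y) = 0 := hk hxy
    rw [map_sub, sub_eq_zero] at h2
    rw [← h2, h1]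
  alg a := by rw [RingHom.comp_apply, ht.alg, Ideal.Quotient.factor_mk]
  det ω h1 h2 x := ht.det (ω.comp (Ideal.Quotient.factor (Ideal.map_mono hle))) h1 h2 x

theorem exists_Tau {A P H B' : Type u} [CommRing A] [CommRing P] [CommRing H] [CommRing B'] (I : Ideal A)
    (α : A →+* P) (h : P →+* H) (hH : HenselianRing H ((I.map α).map h)) (θ : H →+* B')
    (hθ : Function.Surjective θ) (𝔨 : Ideal P) (hk : RingHom.ker θ = 𝔨.map h)
    (hfp : IsHfp (θ.comp (h.comp α)) I) : ∃ 𝔩 ≤ 𝔨, 𝔩.FG ∧ ∃ τ Y, Tau α h θ 𝔩 τ Y := by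
  classical
  obtain ⟨R, _, ψ, r, hψ, hrψ, hr⟩ := hfp
  rw [isHenselization_iff] at hr
  letI := ψ.toAlgebra
  obtain ⟨m, f, hf, S, hS⟩ : Algebra.FinitePresentation A R := hψ
  have hfC : ∀ a, f (MvPolynomial.C a) = ψ a := MvPolynomial.algHom_C f
  choose y hy using fun k => hθ (r (f (MvPolynomial.X k)))
  let a : MvPolynomial (Fin m) A →+* H := MvPolynomial.eval₂Hom (h.comp α) y
  have hθa : θ.comp a = r.comp f.toRingHom := by
    apply MvPolynomial.ringHom_ext
    · intro c
      change θ (a (MvPolynomial.C c)) = r (f (MvPolynomial.C c))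
      rw [hfC, MvPolynomial.eval₂Hom_C]
      exact congr($hrψ.symm c)
    · intro k
      change θ (a (MvPolynomial.X k)) = r (f (MvPolynomial.X k))
      rw [MvPolynomial.eval₂Hom_X', hy]
  obtain ⟨𝔩, hle, hfg, hmem⟩ := fg_mem h 𝔨 (fun s : S => a s) (by
    intro s
    rw [← hk]
    change (θ.comp a) s = 0
    rw [hθa]
    change r (f s) = 0
    have : (s : MvPolynomial (Fin m) A) ∈ RingHom.ker f.toRingHom := by rw [← hS]; exact Ideal.subset_span s.2
    rw [show f s = 0 from this, map_zero])
  have hker : RingHom.ker f.toRingHom ≤ RingHom.ker ((Ideal.Quotient.mk (𝔩.map h)).comp a) := by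
    rw [← hS, Ideal.span_le]
    intro s hs
    exact Ideal.Quotient.eq_zero_iff_mem.2 (hmem ⟨s, hs⟩)
  let l := RingHom.liftOfSurjective f.toRingHom hf ⟨_, hker⟩
  have hl : ∀ p, l (f p) = Ideal.Quotient.mk _ (a p) := fun p =>
      RingHom.liftOfRightInverse_comp_apply f.toRingHom _ (Function.rightInverse_surjInv hf) ⟨_, hker⟩ p
  have hlψ : l.comp ψ = (Ideal.Quotient.mk _).comp (h.comp α) := by
    ext c
    rw [RingHom.comp_apply, ← hfC, hl, MvPolynomial.eval₂Hom_C]; rfl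
  obtain ⟨τ, hτ, -⟩ := hr.2.2 _ _ (henselian_quotient ((I.map α).map h) (𝔩.map h)) l (by
    rw [Ideal.map_map, hlψ, Ideal.map_map, Ideal.map_map, RingHom.comp_assoc]) (by simp)
  have hdet : ∀ ω : H ⧸ 𝔩.map h →+* B', (∀ a, ω (Ideal.Quotient.mk _ (h (α a))) = θ (h (α a))) →
    (∀ y' ∈ Finset.univ.image y, ω (Ideal.Quotient.mk _ y') = θ y') → ∀ x, ω (τ x) = x := by
    intro ω h1 h2 x
    have h3 : (ω.comp τ).comp r = (RingHom.id B').comp r := by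
      rw [RingHom.comp_assoc, hτ, RingHom.id_comp]
      have h4 : (ω.comp l).comp f.toRingHom = r.comp f.toRingHom := by
        rw [← hθa]
        have : (ω.comp l).comp f.toRingHom = (ω.comp (Ideal.Quotient.mk _)).comp a := by
          refine RingHom.ext fun p => ?_
          change ω (l (f p)) = ω (Ideal.Quotient.mk _ (a p))
          rw [hl]
        rw [this]
        apply MvPolynomial.ringHom_ext
        · intro c
          change ω (Ideal.Quotient.mk _ (a (MvPolynomial.C c))) = θ (a (MvPolynomial.C c))
          rw [MvPolynomial.eval₂Hom_C]
          exact h1 c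
        · intro k
          change ω (Ideal.Quotient.mk _ (a (MvPolynomial.X k))) = θ (a (MvPolynomial.X k))
          rw [MvPolynomial.eval₂Hom_X']
          exact h2 _ (by simp)
      ext1 z
      obtain ⟨p, rfl⟩ := hf z
      exact congr($h4 p)
    have h4 := hr.2.hom_ext hr.1 h3 (by rw [h3]; exact le_rfl)
    exact congr($h4 x)
  refine ⟨𝔩, hle, hfg, τ, Finset.univ.image y, ?_, ?_, hdet⟩
  · intro x w hw
    have := hdet (Ideal.Quotient.lift _ θ (by intro z hz; rw [← RingHom.mem_ker, hk]; exact Ideal.map_mono hle hz)) (fun _ => rfl) (fun _ _ => rfl) x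
    rw [hw] at this
    exact this
  · intro c
    have h1 : θ (h (α c)) = r (ψ c) := congr($hrψ.symm c)
    rw [h1]
    change (τ.comp r) (ψ c) = _
    rw [hτ]
    exact congr($hlψ c)

theorem cpt {A P H B' : Type u} [CommRing A] [CommRing P] [CommRing H] [CommRing B'] (I : Ideal A)
    (α : A →+* P) (h : P →+* H) (hH : HenselianRing H ((I.map α).map h)) (φ : A →+* B')
    (hfp : IsHfp φ I) (𝔨 𝔩 : Ideal P) (hle : 𝔩 ≤ 𝔨) (hfg : 𝔩.FG) (p q : B' →+* H ⧸ 𝔩.map h)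
    (hp : p.comp φ = (Ideal.Quotient.mk _).comp (h.comp α))
    (hq : q.comp φ = (Ideal.Quotient.mk _).comp (h.comp α))
    (hpq : ∀ x, Ideal.Quotient.factor (Ideal.map_mono hle : 𝔩.map h ≤ 𝔨.map h) (p x) = 
      Ideal.Quotient.factor (Ideal.map_mono hle) (q x)) :
    ∃ 𝔩', ∃ hle' : 𝔩 ≤ 𝔩', 𝔩' ≤ 𝔨 ∧ 𝔩'.FG ∧ 
      ∀ x, Ideal.Quotient.factor (Ideal.map_mono hle' : 𝔩.map h ≤ 𝔩'.map h) (p x) = 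
        Ideal.Quotient.factor (Ideal.map_mono hle') (q x) := by
  classical
  obtain ⟨R, _, ψ, r, hψ, hrψ, hr⟩ := hfp
  rw [isHenselization_iff] at hr
  letI := ψ.toAlgebra
  obtain ⟨m, f, hf, S, hS⟩ : Algebra.FinitePresentation A R := hψ
  have hfC : ∀ a, f (MvPolynomial.C a) = ψ a := MvPolynomial.algHom_C f
  choose y hy using fun k => Ideal.Quotient.mk_surjective (p (r (f (MvPolynomial.X k))))
  choose y' hy' using fun k => Ideal.Quotient.mk_surjective (q (r (f (MvPolynomial.X k))))
  obtain ⟨𝔩₁, hle1, hfg1, hmem⟩ := fg_mem h 𝔨 (fun k => y k - y' k) (by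
    intro k
    have := hpq (r (f (MvPolynomial.X k)))
    rw [← hy, ← hy', Ideal.Quotient.factor_mk, Ideal.Quotient.factor_mk, Ideal.Quotient.eq] at this
    exact this)
  refine ⟨𝔩 ⊔ 𝔩₁, le_sup_left, sup_le hle hle1, Submodule.FG.sup hfg hfg1, ?_⟩
  have hD := henselian_quotient ((I.map α).map h) ((𝔩 ⊔ 𝔩₁).map h)
  let F := Ideal.Quotient.factor (Ideal.map_mono le_sup_left : 𝔩.map h ≤ (𝔩 ⊔ 𝔩₁).map h)
  have h1 : ((F.comp p).comp r).comp f.toRingHom = ((F.comp q).comp r).comp f.toRingHom := by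
    apply MvPolynomial.ringHom_ext
    · intro c
      change F (p (r (f (MvPolynomial.C c)))) = F (q (r (f (MvPolynomial.C c))))
      rw [hfC, show r (ψ c) = φ c from congr($hrψ c), show p (φ c) = _ from congr($hp c), 
        show q (φ c) = _ from congr($hq c)]
    · intro k
      change F (p (r (f (MvPolynomial.X k)))) = F (q (r (f (MvPolynomial.X k))))
      rw [← hy, ← hy', Ideal.Quotient.factor_mk, Ideal.Quotient.factor_mk, Ideal.Quotient.eq]
      exact Ideal.map_mono le_sup_right (hmem k)
  have h2 : (F.comp p).comp r = (F.comp q).comp r := by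
    ext1 z
    obtain ⟨w, rfl⟩ := hf z
    exact congr($h1 w)
  have h3 : F.comp p = F.comp q := by
    refine hr.2.hom_ext hD h2 ?_
    rw [Ideal.map_map, RingHom.comp_assoc, hrψ, RingHom.comp_assoc, hp, Ideal.map_map, Ideal.map_map]
    exact le_rfl
  intro x
  exact congr($h3 x)

end HF
end

section
set_option linter.style.haveILetI false
open Polynomial TensorProduct
namespace HF

def QE {P D : Type u} [CommRing P] [CommRing D] (K : Ideal P) (g : P) (𝔩 : Ideal P) (d : P →+* D) : Prop :=
  HenselianRing D (K.map d) ∧ IsUnit (d g) ∧ (∀ x ∈ 𝔩, d x = 0) ∧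
    ∀ (T : Type u) [CommRing T] (J : Ideal T), HenselianRing T J → ∀ f : P →+* T, K.map f ≤ J → IsUnit (f g) →
      (∀ x ∈ 𝔩, f x = 0) → ∃ w : D →+* T, w.comp d = f ∧ ∀ w', w'.comp d = f → w' = w

theorem QE.of {P H : Type u} [CommRing P] [CommRing H] {K : Ideal P} {g : P} {h : P →+* H}
    (hh : HensAway K g h) (𝔩 : Ideal P) : QE K g 𝔩 ((Ideal.Quotient.mk (𝔩.map h)).comp h) := by
  have := hh.1
  refine ⟨?_, hh.2.1.map (Ideal.Quotient.mk (𝔩.map h)), ?_, ?_⟩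
  · rw [← Ideal.map_map]; exact henselian_quotient _ _
  · intro x hx
    exact Ideal.Quotient.eq_zero_iff_mem.2 (Ideal.mem_map_of_mem _ hx)
  · intro T _ J hJ f hf hg h0
    obtain ⟨w, hw, hw'⟩ := hh.2.2 T J hJ f hf hg
    have hk : 𝔩.map h ≤ RingHom.ker w := by
      rw [Ideal.map_le_iff_le_comap]
      intro x hx
      change (w.comp h) x = 0
      rw [hw]; exact h0 x hx
    refine ⟨Ideal.Quotient.lift _ w hk, ?_, ?_⟩
    · rw [← hw]; rfl
    · intro w2 hw2
      apply Ideal.Quotient.ringHom_ext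
      rw [hw' (w2.comp (Ideal.Quotient.mk _)) hw2]; rfl

theorem QE.hom_ext {P D T : Type u} [CommRing P] [CommRing D] [CommRing T] {K : Ideal P} {g : P} {𝔩 : Ideal P}
    {d : P →+* D} (hd : QE K g 𝔩 d) {J : Ideal T} (hJ : HenselianRing T J) {a b : D →+* T}
    (hab : a.comp d = b.comp d) (hK : K.map (a.comp d) ≤ J) : a = b := by
  obtain ⟨w, -, hw⟩ := hd.2.2.2 T J hJ (a.comp d) hK (hd.2.1.map a) (fun x hx => by
    rw [RingHom.comp_apply, hd.2.2.1 x hx, map_zero])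
  rw [hw a rfl, hw b hab.symm]

theorem QE.over {P C D : Type u} [CommRing P] [CommRing C] [CommRing D] {K : Ideal P} {g : P} {𝔩 : Ideal P}
    {c : P →+* C} {d : P →+* D} (hc : QE K 1 𝔩 c) (hd : QE K g 𝔩 d) (ρ : C →+* D) (hρ : ρ.comp c = d) :
    HensAway (K.map c) (c g) ρ := by
  refine ⟨?_, ?_, ?_⟩
  · rw [Ideal.map_map, hρ]; exact hd.1
  · change IsUnit ((ρ.comp c) g)
    rw [hρ]; exact hd.2.1
  · intro T _ J hJ f hf hg
    rw [Ideal.map_map] at hf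
    obtain ⟨w, hw, hw'⟩ := hd.2.2.2 T J hJ (f.comp c) hf hg (fun x hx => by
      rw [RingHom.comp_apply, hc.2.2.1 x hx, map_zero])
    refine ⟨w, ?_, ?_⟩
    · have h1 : (w.comp ρ).comp c = f.comp c := by rw [RingHom.comp_assoc, hρ, hw]
      exact hc.hom_ext hJ h1 (by rw [h1]; exact hf)
    · intro w2 hw2
      apply hw'
      rw [← hρ, ← RingHom.comp_assoc, hw2]

theorem glue_hom {B C : Type u} [CommRing B] [CommRing C] {I : Ideal C} [hC : HenselianRing C I]
    {n : ℕ} {g : Fin n → C} (hg : Ideal.span (Set.range g) = ⊤) {H : Fin n → Type u}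
    [∀ i, CommRing (H i)] {ρ : ∀ i, C →+* H i} (hρ : ∀ i, HensAway I (g i) (ρ i)) (t : ∀ i, B →+* H i)
    (hcompat : ∀ i j (T : Type u) [CommRing T] (J : Ideal T), HenselianRing T J → ∀ (u : H i →+* T)
      (v : H j →+* T), u.comp (ρ i) = v.comp (ρ j) → I.map (u.comp (ρ i)) ≤ J → ∀ x, u (t i x) = v (t j x)) :
    ∃ s : B →+* C, ∀ i x, ρ i (s x) = t i x := by
  choose s hs using fun x => gluing hg hρ (fun i => t i x)
    (fun i j T _ J hJ u v h1 h2 => hcompat i j T J hJ u v h1 h2 x)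
  have key : ∀ a b, (∀ i, ρ i a = ρ i b) → a = b := by
    intro a b hab
    rw [← sub_eq_zero]
    apply eq_zero_of_cover hg hρ
    intro i
    rw [map_sub, hab, sub_self]
  exact ⟨{  toFun := s
            map_one' := key _ _ fun i => by rw [hs, map_one, map_one]
            map_zero' := key _ _ fun i => by rw [hs, map_zero, map_zero]
            map_add' := fun x y => key _ _ fun i => by rw [hs, map_add, map_add, hs, hs]
            map_mul' := fun x y => key _ _ fun i => by rw [hs, map_mul, map_mul, hs, hs] }, fun i x => hs x i⟩

theorem fcond {A P H B' : Type u} [CommRing A] [CommRing P] [CommRing H] [CommRing B'] {α : A →+* P}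
    {h : P →+* H} {θ : H →+* B'} {𝔨 𝔩 : Ideal P} (hk : RingHom.ker θ = 𝔨.map h) {τ : B' →+* H ⧸ 𝔩.map h}
    {Y : Finset H} (ht : Tau α h θ 𝔩 τ Y) (z : P) :
    ∃ 𝔩' ≤ 𝔨, 𝔩'.FG ∧ ∀ (𝔩₂ : Ideal P) (hle : 𝔩 ≤ 𝔩₂), 𝔩' ≤ 𝔩₂ → 
      Ideal.Quotient.factor (Ideal.map_mono hle : 𝔩.map h ≤ 𝔩₂.map h) (τ (θ (h z))) = Ideal.Quotient.mk _ (h z) := by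
  obtain ⟨w, hw⟩ := Ideal.Quotient.mk_surjective (τ (θ (h z)))
  have h1 := ht.sec _ w hw.symm
  obtain ⟨𝔩', h2, h3, h4⟩ := fg_mem h 𝔨 (fun _ : Unit => w - h z) (fun _ => by
    rw [← hk, RingHom.mem_ker, map_sub, h1, sub_self])
  refine ⟨𝔩', h2, h3, fun 𝔩₂ hle hle2 => ?_⟩
  rw [← hw, Ideal.Quotient.factor_mk, Ideal.Quotient.eq]
  exact Ideal.map_mono hle2 (h4 ())

theorem compat {A P B H₁ H₂ B₁ B₂ : Type u} [CommRing A] [CommRing P] [CommRing B] [CommRing H₁] [CommRing H₂]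
    [CommRing B₁] [CommRing B₂] {I : Ideal A} {α : A →+* P} {ev : P →+* B} (hev : Function.Surjective ev)
    {g₁ g₂ : P} {h₁ : P →+* H₁} {h₂ : P →+* H₂} (hh₁ : HensAway (I.map α) g₁ h₁) (hh₂ : HensAway (I.map α) g₂ h₂)
    {β₁ : B →+* B₁} {β₂ : B →+* B₂} (hβ₁ : HensAway ((I.map α).map ev) (ev g₁) β₁)
    {θ₁ : H₁ →+* B₁} {θ₂ : H₂ →+* B₂} (hθ₁ : θ₁.comp h₁ = β₁.comp ev) (hθ₂ : θ₂.comp h₂ = β₂.comp ev)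
    (hs₁ : Function.Surjective θ₁)
    (hk₁ : RingHom.ker θ₁ = (RingHom.ker ev).map h₁) (hk₂ : RingHom.ker θ₂ = (RingHom.ker ev).map h₂)
    (hfp : IsHfp (θ₁.comp (h₁.comp α)) I)
    {𝔩 : Ideal P} (hle : 𝔩 ≤ RingHom.ker ev) (hfg : 𝔩.FG) {τ₁ : B₁ →+* H₁ ⧸ 𝔩.map h₁}
    {τ₂ : B₂ →+* H₂ ⧸ 𝔩.map h₂} {Y₁ Y₂} (ht₁ : Tau α h₁ θ₁ 𝔩 τ₁ Y₁) (ht₂ : Tau α h₂ θ₂ 𝔩 τ₂ Y₂)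
    (hf : τ₂ (θ₂ (h₂ g₁)) = Ideal.Quotient.mk _ (h₂ g₁)) :
    ∃ 𝔩' ≤ RingHom.ker ev, 𝔩'.FG ∧ ∀ (T : Type u) [CommRing T] (J : Ideal T), HenselianRing T J →
      ∀ (u : H₁ ⧸ 𝔩.map h₁ →+* T) (v : H₂ ⧸ 𝔩.map h₂ →+* T),
      u.comp ((Ideal.Quotient.mk _).comp h₁) = v.comp ((Ideal.Quotient.mk _).comp h₂) →
      (I.map α).map (u.comp ((Ideal.Quotient.mk _).comp h₁)) ≤ J →
      (∀ x ∈ 𝔩', u (Ideal.Quotient.mk _ (h₁ x)) = 0) → ∀ x, u (τ₁ (β₁ x)) = v (τ₂ (β₂ x)) := by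
  obtain ⟨H, _, h, hh, -⟩ := exists_hens (I.map α) (g₁ * g₂)
  have hu := hh.2.1
  rw [map_mul, IsUnit.mul_iff] at hu
  obtain ⟨a, ha, -⟩ := hh₁.2.2 H _ hh.1 h le_rfl hu.1
  obtain ⟨b, hb, -⟩ := hh₂.2.2 H _ hh.1 h le_rfl hu.2
  have ha' : ∀ 𝔪 : Ideal P, 𝔪.map h₁ ≤ (𝔪.map h).comap a := by
    intro 𝔪
    rw [← Ideal.map_le_iff_le_comap, Ideal.map_map, ha]
  have hb' : ∀ 𝔪 : Ideal P, 𝔪.map h₂ ≤ (𝔪.map h).comap b := by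
    intro 𝔪
    rw [← Ideal.map_le_iff_le_comap, Ideal.map_map, hb]
  let aa : H₁ ⧸ 𝔩.map h₁ →+* H ⧸ 𝔩.map h := Ideal.quotientMap _ a (ha' 𝔩)
  let bb : H₂ ⧸ 𝔩.map h₂ →+* H ⧸ 𝔩.map h := Ideal.quotientMap _ b (hb' 𝔩)
  have haa : ∀ y, aa (Ideal.Quotient.mk _ y) = Ideal.Quotient.mk _ (a y) := fun y => rfl
  have hbb : ∀ y, bb (Ideal.Quotient.mk _ y) = Ideal.Quotient.mk _ (b y) := fun y => rfl
  have hax : ∀ x, a (h₁ x) = h x := fun x => congr($ha x)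
  have hbx : ∀ x, b (h₂ x) = h x := fun x => congr($hb x)
  have hθx₁ : ∀ x, β₁ (ev x) = θ₁ (h₁ x) := fun x => congr($hθ₁.symm x)
  have hθx₂ : ∀ x, β₂ (ev x) = θ₂ (h₂ x) := fun x => congr($hθ₂.symm x)
  have hH := hh.1
  have hT0 := henselian_quotient ((I.map α).map h) (𝔩.map h)
  let v0 : B →+* H ⧸ 𝔩.map h := bb.comp (τ₂.comp β₂)
  have hv0 : (v0.comp ev).comp α = ((Ideal.Quotient.mk _).comp h).comp α := by
    refine RingHom.ext fun x => ?_
    change bb (τ₂ (β₂ (ev (α x)))) = Ideal.Quotient.mk _ (h (α x))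
    rw [hθx₂, ht₂.alg, hbb, hbx]
  have hKv : ((I.map α).map ev).map v0 ≤ ((I.map α).map h).map (Ideal.Quotient.mk (𝔩.map h)) := by
    rw [Ideal.map_map, map_eq_of hv0, ← Ideal.map_map]
  obtain ⟨q, hq, -⟩ := hβ₁.2.2 _ _ hT0 v0 hKv (by
    change IsUnit (bb (τ₂ (β₂ (ev g₁))))
    rw [hθx₂, hf, hbb, hbx]
    exact hu.1.map _)
  have hqx : ∀ x, q (β₁ x) = bb (τ₂ (β₂ x)) := fun x => congr($hq x)
  obtain ⟨𝔩', hle', hlk, hfg', hpq⟩ := cpt I α h hH (θ₁.comp (h₁.comp α)) hfp (RingHom.ker ev) 𝔩 hle hfg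
    (aa.comp τ₁) q (by
      refine RingHom.ext fun x => ?_
      change aa (τ₁ (θ₁ (h₁ (α x)))) = Ideal.Quotient.mk _ (h (α x))
      rw [ht₁.alg, haa, hax]) (by
      refine RingHom.ext fun x => ?_
      change q (θ₁ (h₁ (α x))) = Ideal.Quotient.mk _ (h (α x))
      rw [← hθx₁, hqx]
      exact congr($hv0 x)) (by
    have hker : RingHom.ker θ₁ ≤ RingHom.ker ((Ideal.Quotient.mk ((RingHom.ker ev).map h)).comp a) := by
      rw [hk₁]
      intro x hx
      exact Ideal.Quotient.eq_zero_iff_mem.2 (ha' _ hx)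
    let η := RingHom.liftOfSurjective θ₁ hs₁ ⟨_, hker⟩
    have hη : ∀ y, η (θ₁ y) = Ideal.Quotient.mk _ (a y) := fun y =>
      RingHom.liftOfRightInverse_comp_apply θ₁ _ (Function.rightInverse_surjInv hs₁) ⟨_, hker⟩ y
    let F := Ideal.Quotient.factor (Ideal.map_mono hle : 𝔩.map h ≤ (RingHom.ker ev).map h)
    have h1 : η = F.comp q := by
      have hT00 := henselian_quotient ((I.map α).map h) ((RingHom.ker ev).map h)
      have h2 : η.comp β₁ = (F.comp q).comp β₁ := by
        refine RingHom.ext fun x => ?_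
        obtain ⟨z, rfl⟩ := hev x
        change η (β₁ (ev z)) = F (q (β₁ (ev z)))
        rw [hqx]
        obtain ⟨w, hw⟩ := Ideal.Quotient.mk_surjective (τ₂ (β₂ (ev z)))
        have h3 := ht₂.sec _ w hw.symm
        rw [← hw, hbb, hθx₁, hη, Ideal.Quotient.factor_mk, hax, ← hbx, Ideal.Quotient.eq, ← map_sub]
        apply hb'
        rw [← hk₂, RingHom.mem_ker, map_sub, h3, hθx₂, sub_self]
      refine hβ₁.2.hom_ext hT00 h2 ?_
      rw [h2, RingHom.comp_assoc, hq, ← Ideal.map_map]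
      refine (Ideal.map_mono hKv).trans ?_
      rw [Ideal.map_map]
      exact le_rfl
    intro x
    rw [← show η x = F (q x) from congr($h1 x)]
    obtain ⟨y, hy⟩ := Ideal.Quotient.mk_surjective (τ₁ x)
    have h3 := ht₁.sec _ y hy.symm
    rw [RingHom.comp_apply, ← hy, haa, Ideal.Quotient.factor_mk, ← h3, hη])
  refine ⟨𝔩', hlk, hfg', ?_⟩
  intro T _ J hJ u v huv hK h0 x
  let f := u.comp ((Ideal.Quotient.mk _).comp h₁)
  obtain ⟨w, hw, -⟩ := (QE.of hh 𝔩').2.2.2 T J hJ f hK (by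
    rw [map_mul]
    refine IsUnit.mul ?_ ?_
    · exact (hh₁.2.1.map (Ideal.Quotient.mk _)).map u
    · change IsUnit ((u.comp ((Ideal.Quotient.mk _).comp h₁)) g₂)
      rw [huv]
      exact (hh₂.2.1.map (Ideal.Quotient.mk _)).map v) h0
  let F := Ideal.Quotient.factor (Ideal.map_mono hle' : 𝔩.map h ≤ 𝔩'.map h)
  have h1 : w.comp (F.comp aa) = u := by
    have h2 : (w.comp (F.comp aa)).comp ((Ideal.Quotient.mk _).comp h₁) = f := by
      refine RingHom.ext fun z => ?_
      change w (F (aa (Ideal.Quotient.mk _ (h₁ z)))) = f z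
      rw [haa, hax, Ideal.Quotient.factor_mk]
      exact congr($hw z)
    exact (QE.of hh₁ 𝔩).hom_ext hJ h2 (by rw [h2]; exact hK)
  have h3 : w.comp (F.comp bb) = v := by
    have h2 : (w.comp (F.comp bb)).comp ((Ideal.Quotient.mk _).comp h₂) = f := by
      refine RingHom.ext fun z => ?_
      change w (F (bb (Ideal.Quotient.mk _ (h₂ z)))) = f z
      rw [hbb, hbx, Ideal.Quotient.factor_mk]
      exact congr($hw z)
    exact (QE.of hh₂ 𝔩).hom_ext hJ (h2.trans huv) (by rw [h2]; exact hK)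
  rw [← h1, ← h3]
  change w (F (aa (τ₁ (β₁ x)))) = w (F (bb (τ₂ (β₂ x))))
  rw [← hqx]
  exact congr(w $(hpq (β₁ x)))

end HF
end

section
set_option linter.style.haveILetI false
open Polynomial TensorProduct
namespace HF

theorem exists_taus {A P B : Type u} [CommRing A] [CommRing P] [CommRing B] {I : Ideal A} {α : A →+* P}
    {ev : P →+* B} (hev : Function.Surjective ev) {n : ℕ} {g : Fin n → P} {H B' : Fin n → Type u}
    [∀ i, CommRing (H i)] [∀ i, CommRing (B' i)] {h : ∀ i, P →+* H i} {β : ∀ i, B →+* B' i}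
    {θ : ∀ i, H i →+* B' i} (hh : ∀ i, HensAway (I.map α) (g i) (h i))
    (hβ : ∀ i, HensAway ((I.map α).map ev) (ev (g i)) (β i)) (hθ : ∀ i, (θ i).comp (h i) = (β i).comp ev)
    (hs : ∀ i, Function.Surjective (θ i)) (hk : ∀ i, RingHom.ker (θ i) = (RingHom.ker ev).map (h i))
    (hfp : ∀ i, IsHfp ((θ i).comp ((h i).comp α)) I) (e : P) (he : e ∈ RingHom.ker ev) :
    ∃ 𝔩 ≤ RingHom.ker ev, 𝔩.FG ∧ e ∈ 𝔩 ∧ ∃ (τ : ∀ i, B' i →+* H i ⧸ 𝔩.map (h i)) (Y : ∀ i, Finset (H i)),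
      (∀ i, Tau α (h i) (θ i) 𝔩 (τ i) (Y i)) ∧ ∀ i j (T : Type u) [CommRing T] (J : Ideal T), HenselianRing T J →
      ∀ (u : H i ⧸ 𝔩.map (h i) →+* T) (v : H j ⧸ 𝔩.map (h j) →+* T),
      u.comp ((Ideal.Quotient.mk _).comp (h i)) = v.comp ((Ideal.Quotient.mk _).comp (h j)) →
      (I.map α).map (u.comp ((Ideal.Quotient.mk _).comp (h i))) ≤ J →
      ∀ x, u (τ i (β i x)) = v (τ j (β j x)) := by
  have hkm : ∀ i (𝔪 : Ideal P), 𝔪 ≤ RingHom.ker ev → 𝔪.map (h i) ≤ RingHom.ker (θ i) := by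
    intro i 𝔪 h1
    rw [hk i]; exact Ideal.map_mono h1
  choose L1 hL1 hL1f τ1 Y ht1 using fun i => exists_Tau I α (h i) (hh i).1 (θ i) (hs i) (RingHom.ker ev) (hk i) (hfp i)
  obtain ⟨La, hLa, hLaf, hLae, hLa1⟩ : ∃ La ≤ RingHom.ker ev, La.FG ∧ e ∈ La ∧ ∀ i, L1 i ≤ La := by
    refine ⟨(⨆ i, L1 i) ⊔ Ideal.span {e}, sup_le (iSup_le hL1) ?_, ?_, ?_, ?_⟩
    · rw [Ideal.span_le]; rintro _ rfl; exact he
    · exact Submodule.FG.sup (Submodule.fg_iSup _ hL1f) (Submodule.fg_span (Set.finite_singleton e))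
    · exact Ideal.mem_sup_right (Ideal.subset_span rfl)
    · exact fun i => (le_iSup L1 i).trans le_sup_left
  obtain ⟨τa, hta⟩ : ∃ τa : ∀ i, B' i →+* H i ⧸ La.map (h i), ∀ i, Tau α (h i) (θ i) La (τa i) (Y i) :=
    ⟨_, fun i => (ht1 i).mono (hLa1 i) (hkm i _ hLa)⟩
  choose Lf hLf hLff hfc using fun i j => fcond (hk j) (hta j) (g i)
  obtain ⟨Lb, hLb, hLbf, hLab, hLfb⟩ : ∃ Lb ≤ RingHom.ker ev, Lb.FG ∧ La ≤ Lb ∧ ∀ i j, Lf i j ≤ Lb := by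
    refine ⟨La ⊔ ⨆ i, ⨆ j, Lf i j, sup_le hLa (iSup_le fun i => iSup_le fun j => hLf i j), ?_, le_sup_left, ?_⟩
    · exact Submodule.FG.sup hLaf (Submodule.fg_iSup _ fun i => Submodule.fg_iSup _ fun j => hLff i j)
    · exact fun i j => (le_iSup₂ (f := Lf) i j).trans le_sup_right
  obtain ⟨τb, htb, hfb⟩ : ∃ τb : ∀ i, B' i →+* H i ⧸ Lb.map (h i), (∀ i, Tau α (h i) (θ i) Lb (τb i) (Y i)) ∧
      ∀ i j, τb j (θ j (h j (g i))) = Ideal.Quotient.mk _ (h j (g i)) :=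
    ⟨_, fun i => (hta i).mono hLab (hkm i _ hLb), fun i j => hfc i j Lb hLab (hLfb i j)⟩
  choose Lc hLc hLcf hcomp using fun i j => compat hev (hh i) (hh j) (hβ i) (hθ i) (hθ j) (hs i) (hk i) (hk j) (hfp i)
    hLb hLbf (htb i) (htb j) (hfb i j)
  obtain ⟨L, hL, hLf', hLbL, hLcL⟩ : ∃ L ≤ RingHom.ker ev, L.FG ∧ Lb ≤ L ∧ ∀ i j, Lc i j ≤ L := by
    refine ⟨Lb ⊔ ⨆ i, ⨆ j, Lc i j, sup_le hLb (iSup_le fun i => iSup_le fun j => hLc i j), ?_, le_sup_left, ?_⟩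
    · exact Submodule.FG.sup hLbf (Submodule.fg_iSup _ fun i => Submodule.fg_iSup _ fun j => hLcf i j)
    · exact fun i j => (le_iSup₂ (f := Lc) i j).trans le_sup_right
  refine ⟨L, hL, hLf', hLbL (hLab hLae), _, Y, fun i => (htb i).mono hLbL (hkm i _ hL), ?_⟩
  intro i j T _ J hJ u v huv hK x
  refine hcomp i j T J hJ (u.comp (Ideal.Quotient.factor (Ideal.map_mono hLbL)))
    (v.comp (Ideal.Quotient.factor (Ideal.map_mono hLbL))) huv hK ?_ x
  intro z hz
  change u (Ideal.Quotient.mk _ (h i z)) = 0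
  rw [Ideal.Quotient.eq_zero_iff_mem.2 (Ideal.mem_map_of_mem (h i) (hLcL i j hz)), map_zero]

theorem exists_retract {A P B : Type u} [CommRing A] [CommRing P] [CommRing B] {I : Ideal A} {α : A →+* P}
    {ev : P →+* B} (hev : Function.Surjective ev) [hB : HenselianRing B ((I.map α).map ev)]
    {n : ℕ} {g : Fin n → P} (hspan : Ideal.span (Set.range fun i => ev (g i)) = ⊤) {H B' : Fin n → Type u}
    [∀ i, CommRing (H i)] [∀ i, CommRing (B' i)] {h : ∀ i, P →+* H i} {β : ∀ i, B →+* B' i}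
    (hh : ∀ i, HensAway (I.map α) (g i) (h i))
    (hβ : ∀ i, HensAway ((I.map α).map ev) (ev (g i)) (β i))
    (hfp : ∀ i, IsHfp ((β i).comp (ev.comp α)) I) :
    ∃ (𝔩 : Ideal P) (C : Type u) (_ : CommRing C) (c : P →+* C) (s : B →+* C) (θ : ∀ i, H i →+* B' i)
      (Y : ∀ i, Finset (H i)), 𝔩 ≤ RingHom.ker ev ∧ 𝔩.FG ∧ QE (I.map α) 1 𝔩 c ∧ s.comp (ev.comp α) = c.comp α ∧
      (∀ i, (θ i).comp (h i) = (β i).comp ev) ∧ ∀ p : C →+* B, p.comp (c.comp α) = ev.comp α → 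
        (∀ i, p (c (g i)) = ev (g i)) → 
        (∀ i (ω : H i →+* B' i), ω.comp (h i) = (β i).comp (p.comp c) → ∀ y ∈ Y i, ω y = θ i y) →
        ∀ x, p (s x) = x := by
  choose θ hθ hs hk using fun i => exists_theta (hh i) hev (hβ i)
  have hθx : ∀ i x, θ i (h i x) = β i (ev x) := fun i x => congr($(hθ i) x)
  obtain ⟨k, hk1⟩ : ∃ k : Fin n → B, ∑ i, k i * ev (g i) = 1 :=
    (Ideal.mem_span_range_iff_exists_fun).1 (by rw [hspan]; trivial)
  choose k' hk' using fun i => hev (k i)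
  have he : ∑ i, k' i * g i - 1 ∈ RingHom.ker ev := by
    rw [RingHom.mem_ker, map_sub, map_sum, map_one, sub_eq_zero, ← hk1]
    refine Finset.sum_congr rfl fun i _ => ?_
    rw [map_mul, hk']
  obtain ⟨𝔩, hle, hfg, he𝔩, τ, Y, ht, hcomp⟩ := exists_taus hev hh hβ hθ hs hk (by
    intro i
    rw [← RingHom.comp_assoc, hθ, RingHom.comp_assoc]; exact hfp i) _ he
  obtain ⟨HP, _, hP, hHP, -⟩ := exists_hens (I.map α) 1
  have hc := QE.of hHP 𝔩
  let C := HP ⧸ 𝔩.map hP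
  let c : P →+* C := (Ideal.Quotient.mk (𝔩.map hP)).comp hP
  have hc : QE (I.map α) 1 𝔩 c := hc
  let d : ∀ i, P →+* H i ⧸ 𝔩.map (h i) := fun i => (Ideal.Quotient.mk _).comp (h i)
  have hd : ∀ i, QE (I.map α) (g i) 𝔩 (d i) := fun i => QE.of (hh i) 𝔩
  choose ρ hρ _ using fun i => hc.2.2.2 _ _ (hd i).1 (d i) le_rfl (by simp) (hd i).2.2.1
  have hρH := fun i => hc.over (hd i) (ρ i) (hρ i)
  have hC := hc.1
  have hcs : Ideal.span (Set.range fun i => c (g i)) = ⊤ := by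
    rw [Ideal.eq_top_iff_one]
    have := hc.2.2.1 _ he𝔩
    rw [map_sub, map_one, sub_eq_zero, map_sum] at this
    rw [← this]
    refine Ideal.sum_mem _ fun i _ => ?_
    rw [map_mul]
    exact Ideal.mul_mem_left _ _ (Ideal.subset_span ⟨i, rfl⟩)
  obtain ⟨s, hsx⟩ := glue_hom hcs hρH (fun i => (τ i).comp (β i)) (by
    intro i j T _ J hJ u v huv hK x
    refine hcomp i j T J hJ u v ?_ ?_ x
    · change u.comp (d i) = v.comp (d j)
      rw [← hρ i, ← hρ j, ← RingHom.comp_assoc, huv, RingHom.comp_assoc]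
    · change Ideal.map (u.comp (d i)) _ ≤ J
      rw [← hρ i, ← RingHom.comp_assoc, ← Ideal.map_map]
      exact hK)
  refine ⟨𝔩, C, inferInstance, c, s, θ, Y, hle, hfg, hc, ?_, hθ, ?_⟩
  · refine RingHom.ext fun a => ?_
    rw [← sub_eq_zero]
    refine eq_zero_of_cover hcs hρH fun i => ?_
    rw [map_sub, sub_eq_zero]
    refine (hsx i _).trans ?_
    change τ i (β i (ev (α a))) = _
    rw [← hθx, (ht i).alg]
    exact congr($((hρ i).symm) (α a))
  · intro p hp hpg hY x
    rw [← sub_eq_zero]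
    refine eq_zero_of_cover hspan hβ fun i => ?_
    rw [map_sub, sub_eq_zero]
    have hpa : ((β i).comp (p.comp c)).comp α = ((β i).comp ev).comp α := by
      rw [RingHom.comp_assoc, RingHom.comp_assoc, hp, RingHom.comp_assoc]
    have hK : (I.map α).map ((β i).comp (p.comp c)) ≤ ((I.map α).map ev).map (β i) := by
      rw [map_eq_of hpa, ← Ideal.map_map]
    obtain ⟨ω, hω, -⟩ := (hd i).2.2.2 _ _ (hβ i).1 ((β i).comp (p.comp c)) hK (by
      change IsUnit (β i (p (c (g i))))
      rw [hpg]; exact (hβ i).2.1) (by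
      intro z hz
      change β i (p (c z)) = 0
      rw [hc.2.2.1 z hz, map_zero, map_zero])
    have h1 := (ht i).det ω (by
      intro a
      refine (congr($hω (α a))).trans ?_
      rw [hθx]
      exact congr($hpa a)) (hY i (ω.comp (Ideal.Quotient.mk _)) hω)
    have h2 : ω.comp (ρ i) = (β i).comp p := by
      have h3 : (ω.comp (ρ i)).comp c = ((β i).comp p).comp c := by
        rw [RingHom.comp_assoc, hρ, hω, RingHom.comp_assoc]
      refine hc.hom_ext (hβ i).1 h3 ?_
      rw [h3, RingHom.comp_assoc]; exact hK
    have h4 : β i (p (s x)) = ω (ρ i (s x)) := congr($h2.symm (s x))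
    rw [h4, hsx]
    exact h1 _

end HF
end

section
set_option linter.style.haveILetI false
open Polynomial TensorProduct
namespace HF

theorem root_unique {T : Type u} [CommRing T] (J : Ideal T) [hT : HenselianRing T J] (f : T[X]) {t0 x y : T}
    (hx : f.eval x = 0) (hy : f.eval y = 0) (hx0 : x - t0 ∈ J) (hy0 : y - t0 ∈ J)
    (hu : IsUnit (Ideal.Quotient.mk J (f.derivative.eval t0))) : x = y := by
  obtain ⟨k, hk⟩ := Polynomial.binomExpansion f x (y - x)
  rw [add_sub_cancel, hx, hy] at hk
  have hxy : y - x ∈ J := by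
    have := J.sub_mem hy0 hx0
    simpa using this
  have h1 : IsUnit (f.derivative.eval x + k * (y - x)) := by
    apply isUnit_of_sub_mem J
    convert hu using 1
    rw [Ideal.Quotient.eq]
    have e : f.derivative.eval x - f.derivative.eval t0 ∈ J := by
      have := Polynomial.sub_dvd_eval_sub x t0 f.derivative
      exact J.mem_of_dvd this hx0
    have := J.add_mem e (J.mul_mem_left k hxy)
    convert this using 1
    ring
  have h2 : (f.derivative.eval x + k * (y - x)) * (y - x) = 0 := by
    linear_combination -hk
  rw [h1.mul_right_eq_zero] at h2
  exact (sub_eq_zero.1 h2).symm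

/-- `y` depends only on the variables in `F`, for tests in `(T, J)` -/
def Dep {A H T : Type u} {σ : Type u} [CommRing A] [CommRing H] [CommRing T] (I : Ideal A)
    (h : MvPolynomial σ A →+* H) (J : Ideal T) (F : Finset σ) (y : H) : Prop :=
  ∀ a b : H →+* T, (a.comp h).comp MvPolynomial.C = (b.comp h).comp MvPolynomial.C →
    (∀ x ∈ F, a (h (MvPolynomial.X x)) = b (h (MvPolynomial.X x))) →
    I.map ((a.comp h).comp MvPolynomial.C) ≤ J → a y = b y

theorem Dep.mono {A H T : Type u} {σ : Type u} [CommRing A] [CommRing H] [CommRing T] {I : Ideal A}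
    {h : MvPolynomial σ A →+* H} {J : Ideal T} {F F' : Finset σ} {y : H} (hd : Dep I h J F y) (hF : F ⊆ F') :
    Dep I h J F' y := fun a b h1 h2 h3 => hd a b h1 (fun x hx => h2 x (hF hx)) h3

theorem fin_supp {A H T : Type u} {σ : Type u} [CommRing A] [CommRing H] [CommRing T] {I : Ideal A}
    {h : MvPolynomial σ A →+* H} {g : MvPolynomial σ A} (hh : HensAway (I.map MvPolynomial.C) g h) (J : Ideal T)
    [hT : HenselianRing T J] (y : H) : ∃ F : Finset σ, Dep I h J F y := by
  classical
  let U : Subring H :=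
    { carrier := {y | ∃ F : Finset σ, Dep I h J F y}
      mul_mem' := by
        rintro x y ⟨F, hF⟩ ⟨F', hF'⟩
        refine ⟨F ∪ F', fun a b h1 h2 h3 => ?_⟩
        rw [map_mul, map_mul, hF.mono Finset.subset_union_left a b h1 h2 h3,
          hF'.mono Finset.subset_union_right a b h1 h2 h3]
      one_mem' := ⟨∅, fun a b _ _ _ => by simp⟩
      add_mem' := by
        rintro x y ⟨F, hF⟩ ⟨F', hF'⟩
        refine ⟨F ∪ F', fun a b h1 h2 h3 => ?_⟩
        rw [map_add, map_add, hF.mono Finset.subset_union_left a b h1 h2 h3,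
          hF'.mono Finset.subset_union_right a b h1 h2 h3]
      zero_mem' := ⟨∅, fun a b _ _ _ => by simp⟩
      neg_mem' := by
        rintro x ⟨F, hF⟩
        refine ⟨F, fun a b h1 h2 h3 => ?_⟩
        rw [map_neg, map_neg, hF a b h1 h2 h3] }
  have hmem : ∀ y, y ∈ U ↔ ∃ F : Finset σ, Dep I h J F y := fun _ => Iff.rfl
  have hU : ∀ r, h r ∈ U := by
    intro r
    induction r using MvPolynomial.induction_on with
    | C a => exact ⟨∅, fun a' b h1 _ _ => congr($h1 a)⟩
    | add p q hp hq => rw [map_add]; exact U.add_mem hp hq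
    | mul_X p n hp =>
      rw [map_mul]
      exact U.mul_mem hp ⟨{n}, fun a b _ h2 _ => h2 n (Finset.mem_singleton_self n)⟩
  have hinv : ∀ x v : H, x ∈ U → x * v = 1 → v ∈ U := by
    rintro x v ⟨F, hF⟩ hxv
    refine ⟨F, fun a b h1 h2 h3 => ?_⟩
    have e1 : a x * a v = 1 := by rw [← map_mul, hxv, map_one]
    have e2 : b x * b v = 1 := by rw [← map_mul, hxv, map_one]
    rw [← hF a b h1 h2 h3] at e2
    linear_combination (b v) * e1 - (a v) * e2
  set K : Ideal (MvPolynomial σ A) := I.map MvPolynomial.C with hK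
  have hH := hh.1
  have hKa : ∀ a : H →+* T, I.map ((a.comp h).comp MvPolynomial.C) ≤ J → ∀ x ∈ K.map h, a x ∈ J := by
    intro a ha x hx
    apply ha
    rw [← Ideal.map_map, ← Ideal.map_map]
    exact Ideal.mem_map_of_mem a hx
  have hJU : HenselianRing U ((K.map h).comap U.subtype) := by
    constructor
    · intro x hx
      rw [Ideal.mem_jacobson_bot]
      intro y
      have h1 := hH.jac (Ideal.mem_comap.1 hx)
      rw [Ideal.mem_jacobson_bot] at h1
      obtain ⟨v, hv⟩ := (h1 y).exists_right_inv
      exact IsUnit.of_mul_eq_one ⟨v, hinv _ v (x * y + 1).2 hv⟩ (Subtype.ext hv)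
    · intro f hf a₀ h0 hu
      have e : ∀ (f : U[X]) (x : U), (f.map U.subtype).eval (x : H) = ((f.eval x : U) : H) := fun f x => by
        rw [Polynomial.eval_map]
        exact Polynomial.eval₂_hom U.subtype x
      obtain ⟨y, hy, hy0⟩ := hH.is_henselian (f.map U.subtype) (hf.map _) a₀ (by rw [e]; exact h0) (by
        rw [derivative_map, e]
        let m : U ⧸ ((K.map h).comap U.subtype) →+* H ⧸ (K.map h) := Ideal.quotientMap _ U.subtype le_rfl
        have := hu.map m
        simpa [m] using this)
      have hyU : y ∈ U := by
        choose F hF using fun x : U => (hmem x).1 x.2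
        refine ⟨F a₀ ∪ f.support.biUnion (fun k => F (f.coeff k)), fun a b h1 h2 h3 => ?_⟩
        have hb : I.map ((b.comp h).comp MvPolynomial.C) ≤ J := h1 ▸ h3
        have e0 : a a₀ = b a₀ := (hF a₀).mono Finset.subset_union_left a b h1 h2 h3
        have ef : f.map (a.comp U.subtype) = f.map (b.comp U.subtype) := by
          ext k
          rw [coeff_map, coeff_map]
          by_cases hk : k ∈ f.support
          · exact (hF (f.coeff k)).mono ((Finset.subset_biUnion_of_mem (fun k => F (f.coeff k)) hk).trans
              Finset.subset_union_right) a b h1 h2 h3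
          · rw [notMem_support_iff.1 hk, map_zero, map_zero]
        have ev : ∀ (c : H →+* T) (x : H), (f.map (c.comp U.subtype)).eval (c x) = c ((f.map U.subtype).eval x) := by
          intro c x
          rw [← Polynomial.map_map, Polynomial.eval_map, Polynomial.eval₂_hom]
        refine root_unique J (f.map (a.comp U.subtype)) (t0 := a a₀) ?_ ?_ ?_ ?_ ?_
        · rw [ev, hy.eq_zero, map_zero]
        · rw [ef, ev, hy.eq_zero, map_zero]
        · rw [← map_sub]; exact hKa a h3 _ hy0
        · rw [e0, ← map_sub]; exact hKa b hb _ hy0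
        · let m : U ⧸ ((K.map h).comap U.subtype) →+* T ⧸ J := Ideal.quotientMap _ (a.comp U.subtype)
            (fun x hx => hKa a h3 _ hx)
          have := hu.map m
          have e3 : (f.map (a.comp U.subtype)).derivative.eval (a a₀) = a.comp U.subtype (f.derivative.eval a₀) := by
            rw [derivative_map, Polynomial.eval_map]
            exact Polynomial.eval₂_hom (a.comp U.subtype) a₀
          rw [e3]
          exact this
      refine ⟨⟨y, hyU⟩, ?_, hy0⟩
      apply Subtype.ext
      rw [← e]
      exact hy
  obtain ⟨v, hv⟩ := hh.2.1.exists_right_inv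
  exact (hmem y).1 (hh.subring_eq_top U hU _ hJU (fun k hk => Ideal.mem_map_of_mem h hk)
    ⟨v, hinv _ v (hU g) hv, hv⟩ y)

end HF
end

section
set_option linter.style.haveILetI false
open Polynomial TensorProduct
namespace HF

theorem etale_fp {R Q : Type u} [CommRing R] [CommRing Q] {q : R →+* Q} (h : q.Etale) : q.FinitePresentation := by
  letI := q.toAlgebra
  have : Algebra.Etale R Q := h
  exact (inferInstance : Algebra.FinitePresentation R Q)

theorem retract_hfp {A S C B : Type u} [CommRing A] [CommRing S] [CommRing C] [CommRing B] {I : Ideal A}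
    {ψ : A →+* S} {ρ : S →+* C} {φ : A →+* B} {p : C →+* B} {s : B →+* C} (hψ : ψ.FinitePresentation)
    (hρ : HensAway (I.map ψ) 1 ρ) (hps : ∀ x, p (s x) = x) (hs : s.comp φ = ρ.comp ψ)
    (hB : HenselianRing B (I.map φ)) : IsHfp φ I := by
  classical
  have hpφ : p.comp (ρ.comp ψ) = φ := by
    rw [← hs]; ext x; exact hps _
  have hC := hρ.1
  obtain ⟨n, gen, hgen⟩ : ∃ (n : ℕ) (z : Fin n → S), ∀ U : Subring S, (∀ a, ψ a ∈ U) → (∀ i, z i ∈ U) → U = ⊤ := by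
    letI := ψ.toAlgebra
    have h1 : Algebra.FinitePresentation A S := hψ
    obtain ⟨n, f, hf, -⟩ := h1.out
    refine ⟨n, fun i => f (MvPolynomial.X i), fun U h1 h2 => ?_⟩
    rw [eq_top_iff]
    rintro x -
    obtain ⟨x, rfl⟩ := hf x
    induction x using MvPolynomial.induction_on with
    | C a =>
      have : f (MvPolynomial.C a) = ψ a := f.commutes a
      rw [this]; exact h1 a
    | add p q hp hq => rw [map_add]; exact U.add_mem hp hq
    | mul_X p n hp => rw [map_mul]; exact U.mul_mem hp (h2 n)
  let t : Fin n → C := fun i => ρ (gen i) - s (p (ρ (gen i)))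
  let 𝔞 : Ideal C := Ideal.span (Set.range t)
  have hmk : (Ideal.Quotient.mk 𝔞) = ((Ideal.Quotient.mk 𝔞).comp s).comp p := by
    refine hρ.2.hom_ext (henselian_quotient ((I.map ψ).map ρ) 𝔞) ?_ (by rw [← Ideal.map_map])
    have := hgen (RingHom.eqLocus ((Ideal.Quotient.mk 𝔞).comp ρ) ((((Ideal.Quotient.mk 𝔞).comp s).comp p).comp ρ))
      (fun a => ?_) (fun i => ?_)
    · ext x
      have hx : x ∈ (⊤ : Subring S) := Subring.mem_top x
      rw [← this] at hx
      exact hx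
    · change Ideal.Quotient.mk 𝔞 (ρ (ψ a)) = Ideal.Quotient.mk 𝔞 (s (p (ρ (ψ a))))
      have e1 : p (ρ (ψ a)) = φ a := congr($hpφ a)
      have e2 : s (φ a) = ρ (ψ a) := congr($hs a)
      rw [e1, e2]
    · change Ideal.Quotient.mk 𝔞 (ρ (gen i)) = Ideal.Quotient.mk 𝔞 (s (p (ρ (gen i))))
      rw [Ideal.Quotient.eq]
      exact Ideal.subset_span ⟨i, rfl⟩
  have hker : ∀ x, x - s (p x) ∈ 𝔞 := fun x => by
    rw [← Ideal.Quotient.eq]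
    exact congr($hmk x)
  have hpt : ∀ i, p (t i) = 0 := fun i => by simp [t, hps]
  obtain ⟨Q, _, q, φQ, hq, hφQ, y, hy⟩ := hρ.rep_fin t
  let 𝔟 : Ideal Q := Ideal.span (Set.range y)
  have h𝔟 : ∀ x ∈ 𝔟, p.comp φQ x = 0 := by
    intro x hx
    have : 𝔟 ≤ RingHom.ker (p.comp φQ) := by
      rw [Ideal.span_le]
      rintro _ ⟨i, rfl⟩
      simp [RingHom.mem_ker, hy, hpt]
    exact this hx
  have hle : LE ((I.map ψ).map q) 1 φQ := hq.le.of_comp (by rw [hφQ]; exact hρ.2)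
  have hcomp : (Ideal.Quotient.lift 𝔟 (p.comp φQ) h𝔟).comp ((Ideal.Quotient.mk 𝔟).comp (q.comp ψ)) = φ := by
    rw [← hpφ, ← hφQ]; rfl
  refine ⟨Q ⧸ 𝔟, inferInstance, (Ideal.Quotient.mk 𝔟).comp (q.comp ψ), Ideal.Quotient.lift 𝔟 (p.comp φQ) h𝔟,
    ?_, hcomp, ?_, ?_⟩
  · refine RingHom.FinitePresentation.comp
      (RingHom.FinitePresentation.of_surjective _ Ideal.Quotient.mk_surjective ?_) ((etale_fp hq.et).comp hψ)
    rw [Ideal.mk_ker]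
    exact Submodule.fg_span (Set.finite_range y)
  · rw [Ideal.map_map, hcomp]; exact hB
  · intro T _ J hJ f hf
    obtain ⟨w, hw, hw'⟩ := hle.2 T J hJ (f.comp (Ideal.Quotient.mk 𝔟)) (by
      rw [Ideal.map_map, Ideal.map_map]; rw [Ideal.map_map] at hf; exact hf) (by simp)
    have hw0 : ∀ x ∈ 𝔞, w x = 0 := by
      intro x hx
      have : 𝔞 ≤ RingHom.ker w := by
        rw [Ideal.span_le]
        rintro _ ⟨i, rfl⟩
        have e1 : w (φQ (y i)) = f (Ideal.Quotient.mk 𝔟 (y i)) := congr($hw (y i))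
        have e2 : y i ∈ 𝔟 := Ideal.subset_span ⟨i, rfl⟩
        rw [hy, Ideal.Quotient.eq_zero_iff_mem.2 e2, map_zero] at e1
        exact e1
      exact this hx
    have hwsp : ∀ x, w (s (p x)) = w x := fun x => by
      have := hw0 _ (hker x)
      rw [map_sub, sub_eq_zero] at this
      exact this.symm
    refine ⟨w.comp s, ?_, ?_⟩
    · dsimp only
      refine Ideal.Quotient.ringHom_ext ?_
      ext x
      refine (hwsp (φQ x)).trans ?_
      exact congr($hw x)
    · intro v hv
      have : v.comp p = w := hw' _ (by
        dsimp only
        rw [← hv]; rfl)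
      rw [← this]
      ext x
      simp [hps]

end HF
end

section
set_option linter.style.haveILetI false
open Polynomial TensorProduct
namespace HF

theorem span_top {B : Type u} [CommRing B] (K : Ideal B) [hB : HenselianRing B K] {n : ℕ} (f : Fin n → B)
    (hgen : Ideal.span (Set.range fun i => Ideal.Quotient.mk K (f i)) = ⊤) :
    Ideal.span (Set.range f) = ⊤ := by
  have h1 : (Ideal.span (Set.range f)).map (Ideal.Quotient.mk K) = ⊤ := by
    rw [Ideal.map_span, ← Set.range_comp]; exact hgen
  rw [Ideal.eq_top_iff_one, Ideal.mem_map_iff_of_surjective _ Ideal.Quotient.mk_surjective] at h1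
  obtain ⟨x, hx, hx1⟩ := h1
  refine Ideal.eq_top_of_isUnit_mem _ hx (isUnit_of_sub_mem K ?_)
  rw [hx1]; exact isUnit_one

theorem main {A B : Type u} [CommRing A] [CommRing B] (φ : A →+* B) (I : Ideal A)
    [hB : HenselianRing B (I.map φ)] (n : ℕ) (f : Fin n → B) (hspan : Ideal.span (Set.range f) = ⊤)
    (B' : Fin n → Type u) [∀ i, CommRing (B' i)] (β : ∀ i, B →+* B' i)
    (hβ : ∀ i, HensAway (I.map φ) (f i) (β i)) (hfp : ∀ i, IsHfp ((β i).comp φ) I) : IsHfp φ I := by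
  classical
  let α : A →+* MvPolynomial B A := MvPolynomial.C
  let ev : MvPolynomial B A →+* B := MvPolynomial.eval₂Hom φ id
  have hevα : ev.comp α = φ := by ext x; simp [ev, α]
  have hevX : ∀ b, ev (MvPolynomial.X b) = b := fun b => by simp [ev]
  have hev : Function.Surjective ev := fun b => ⟨MvPolynomial.X b, hevX b⟩
  have hI : (I.map α).map ev = I.map φ := by rw [Ideal.map_map, hevα]
  let g : Fin n → MvPolynomial B A := fun i => MvPolynomial.X (f i)
  choose H instH h hh _ using fun i => exists_hens (I.map α) (g i)
  haveI hB2 : HenselianRing B ((I.map α).map ev) := by rw [hI]; exact hB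
  have hevg : ∀ i, ev (g i) = f i := fun i => hevX _
  obtain ⟨𝔩, C, _, c, s, θ, Y, h𝔩, ⟨L, hL⟩, hc, hs, hθ, hp⟩ := exists_retract (I := I) (α := α) hev (g := g)
    (by simp only [hevg]; exact hspan) (H := H) (B' := B') (h := h) (β := β) hh
    (fun i => by rw [hI, hevg]; exact hβ i) (fun i => by rw [hevα]; exact hfp i)
  have hBi : ∀ i, HenselianRing (B' i) ((I.map φ).map (β i)) := fun i => (hβ i).1
  choose F hF using fun i => fun y : H i => fin_supp (hh i) ((I.map φ).map (β i)) y
  let σ : Finset B := Finset.univ.image f ∪ L.biUnion MvPolynomial.vars ∪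
    Finset.univ.biUnion (fun i => (Y i).biUnion (F i))
  have hσf : ∀ i, f i ∈ σ := fun i => by
    simp only [σ, Finset.mem_union]
    exact Or.inl (Or.inl (Finset.mem_image_of_mem f (Finset.mem_univ i)))
  have hσL : ∀ l ∈ L, ∀ b ∈ l.vars, b ∈ σ := fun l hl b hb => by
    simp only [σ, Finset.mem_union]
    exact Or.inl (Or.inr (Finset.mem_biUnion.2 ⟨l, hl, hb⟩))
  have hσY : ∀ i, ∀ y ∈ Y i, ∀ b ∈ F i y, b ∈ σ := fun i y hy b hb => by
    simp only [σ, Finset.mem_union]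
    exact Or.inr (Finset.mem_biUnion.2 ⟨i, Finset.mem_univ i, Finset.mem_biUnion.2 ⟨y, hy, hb⟩⟩)
  clear_value σ
  let ι : MvPolynomial σ A →+* MvPolynomial B A := (MvPolynomial.rename (R := A) (Subtype.val : σ → B)).toRingHom
  let ε : MvPolynomial B A →+* MvPolynomial σ A :=
    MvPolynomial.eval₂Hom MvPolynomial.C (fun b => if hb : b ∈ σ then MvPolynomial.X ⟨b, hb⟩ else 0)
  have hεC : ε.comp α = MvPolynomial.C := by ext1 x; simp [ε, α]
  have hιC : ι.comp MvPolynomial.C = α := by ext1 x; simp [ι, α]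
  have hιεX : ∀ b ∈ σ, ι (ε (MvPolynomial.X b)) = MvPolynomial.X b := fun b hb => by
    simp [ι, ε, hb]
  have hιεL : ∀ l ∈ L, ι (ε l) = l := by
    intro l hl
    refine MvPolynomial.hom_congr_vars (f₁ := ι.comp ε) (f₂ := RingHom.id _) ?_ ?_ rfl
    · change (ι.comp ε).comp α = _
      rw [RingHom.comp_assoc, hεC, hιC]; rfl
    · intro b hb _
      exact hιεX b (hσL l hl b hb)
  let 𝔪 : Ideal (MvPolynomial σ A) := 𝔩.map ε
  let mk𝔪 : MvPolynomial σ A →+* MvPolynomial σ A ⧸ 𝔪 := Ideal.Quotient.mk 𝔪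
  let ψ : A →+* MvPolynomial σ A ⧸ 𝔪 := mk𝔪.comp MvPolynomial.C
  have h𝔪 : 𝔪.FG := Ideal.FG.map ⟨L, hL⟩ ε
  have hψ : ψ.FinitePresentation := by
    refine RingHom.FinitePresentation.comp
      (RingHom.FinitePresentation.of_surjective _ Ideal.Quotient.mk_surjective ?_) ?_
    · rw [Ideal.mk_ker]; exact h𝔪
    · have : Algebra.FinitePresentation A (MvPolynomial σ A) := inferInstance
      exact RingHom.finitePresentation_algebraMap.2 this
  obtain ⟨Cσ, _, ρS, hρS, -⟩ := exists_hens (I.map ψ) 1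
  have hCσ := hρS.1
  have e1 : ((ρS.comp mk𝔪).comp ε).comp α = ρS.comp ψ := by
    rw [RingHom.comp_assoc, hεC]; rfl
  obtain ⟨εC, hεC', -⟩ := hc.2.2.2 Cσ ((I.map ψ).map ρS) hCσ ((ρS.comp mk𝔪).comp ε)
    (by rw [Ideal.map_map, e1, Ideal.map_map]) (by simp) (fun x hx => by
      have : ε x ∈ 𝔪 := Ideal.mem_map_of_mem ε hx
      have := Ideal.Quotient.eq_zero_iff_mem.2 this
      change ρS (Ideal.Quotient.mk 𝔪 (ε x)) = 0
      rw [this, map_zero])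
  have h𝔪0 : ∀ x ∈ 𝔪, ev.comp ι x = 0 := by
    intro x hx
    have : 𝔪 ≤ RingHom.ker (ev.comp ι) := by
      simp only [𝔪]
      rw [← hL, Ideal.map_le_iff_le_comap]
      refine Ideal.span_le.2 fun l hl => ?_
      change ev (ι (ε l)) = 0
      rw [hιεL l hl]
      have : l ∈ 𝔩 := by rw [← hL]; exact Ideal.subset_span hl
      exact h𝔩 this
    exact this hx
  let p' : MvPolynomial σ A ⧸ 𝔪 →+* B := Ideal.Quotient.lift 𝔪 (ev.comp ι) h𝔪0
  have hp' : p'.comp mk𝔪 = ev.comp ι := rfl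
  have hp'ψ : p'.comp ψ = φ := by
    rw [← RingHom.comp_assoc, hp', RingHom.comp_assoc, hιC, hevα]
  obtain ⟨π, hπ, -⟩ := hρS.2.2 B (I.map φ) hB p' (by rw [Ideal.map_map, hp'ψ]) (by simp)
  have hpc : (π.comp εC).comp c = (ev.comp ι).comp ε := by
    rw [RingHom.comp_assoc, hεC', ← hp', ← hπ]; rfl
  have hpcα : ((π.comp εC).comp c).comp α = ev.comp α := by
    rw [hpc, RingHom.comp_assoc, RingHom.comp_assoc, hεC, hιC]
  have hpX : ∀ b ∈ σ, (π.comp εC) (c (MvPolynomial.X b)) = ev (MvPolynomial.X b) := fun b hb => by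
    have : (π.comp εC) (c (MvPolynomial.X b)) = ev (ι (ε (MvPolynomial.X b))) := congr($hpc (MvPolynomial.X b))
    rw [this, hιεX b hb]
  have hfin := hp (π.comp εC) hpcα (fun i => hpX _ (hσf i)) (by
    intro i ω hω y hy
    have k1 : (ω.comp (h i)).comp MvPolynomial.C = (β i).comp φ := by
      rw [hω, RingHom.comp_assoc]
      change (β i).comp (((π.comp εC).comp c).comp α) = _
      rw [hpcα, hevα]
    refine hF i y ω (θ i) ?_ ?_ ?_
    · rw [k1, hθ i, RingHom.comp_assoc]
      change _ = (β i).comp (ev.comp α)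
      rw [hevα]
    · intro b hb
      have k2 : ω (h i (MvPolynomial.X b)) = β i ((π.comp εC) (c (MvPolynomial.X b))) := congr($hω (MvPolynomial.X b))
      have k3 : θ i (h i (MvPolynomial.X b)) = β i (ev (MvPolynomial.X b)) := congr($(hθ i) (MvPolynomial.X b))
      rw [k2, k3, hpX b (hσY i y hy b hb)]
    · rw [k1, Ideal.map_map])
  refine retract_hfp (p := π) (s := εC.comp s) hψ hρS hfin ?_ hB
  rw [hevα] at hs
  rw [RingHom.comp_assoc, hs, ← RingHom.comp_assoc, hεC', e1]

end HF
end

/-- Zariski-locality of hfp: if finitely many `f i : B` generate the unit ideal modulo `I·B`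
and each Henselized localization `B_{f i}` is hfp over `A`, then `B` is hfp over `A`. -/
theorem isHfp_of_cover
    {A B : Type u} [CommRing A] [CommRing B] [Algebra A B]
    (I : Ideal A) [HenselianRing A I]
    [HenselianRing B (I.map (algebraMap A B))]
    (n : ℕ) (f : Fin n → B)
    (hgen : Ideal.span (Set.range fun i =>
      Ideal.Quotient.mk (I.map (algebraMap A B)) (f i)) = ⊤)
    (Bi : Fin n → Type u) (instBi : ∀ i, CommRing (Bi i))
    (ρ : ∀ i, Localization.Away (f i) →+* Bi i)
    (hhens : ∀ i, IsHenselization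
      ((I.map (algebraMap A B)).map (algebraMap B (Localization.Away (f i)))) (ρ i))
    (hhfp : ∀ i, IsHfp
      ((ρ i).comp ((algebraMap B (Localization.Away (f i))).comp (algebraMap A B))) I) :
    IsHfp (algebraMap A B) I := by
  have hsp := HF.span_top (I.map (algebraMap A B)) f hgen
  refine HF.main (algebraMap A B) I n f hsp Bi (fun i => (ρ i).comp (algebraMap B (Localization.Away (f i))))
    (fun i => ?_) (fun i => hhfp i)
  have h := HF.isHenselization_iff.1 (hhens i)
  refine ⟨?_, (HF.LE.away _ (f i)).comp h.2⟩
  rw [← Ideal.map_map]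
  exact h.1
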